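/- arXiv:0909.2388 — 3 statements merged into one kernel-verified Lean document; each statement's English description precedes it below -/
import Mathlib

section
/- For any nonempty finite set A of integers and any positive integer n, E_A(n) = D_A(n) + n − 1. -/
/-!
Padding a sequence with `N - 1` zeros shows that `E` is at least `D + N - 1`.

For the upper bound, a weighted sum of the terms `x i` is a selection from the sets `A • x i`.
After passing to the quotient by a maximal subgroup missed by the weighted sums of length `N`,
every nontrivial subgroup is met. Suppose that `0` is still missed. The stabilizer `M` of a sumset
of `N` of the sets is then a subgroup modulo which, by Kneser's theorem, at most `M.index - 2` of
them vary. Exchanging terms between subfamilies of length `N` replaces such an `M ≠ ⊥` by a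
smaller one, so fewer than `|G| - 1` of the sets have two elements. On the other terms all the
weights act alike, and translating by the most frequent of their multiples makes Gao's argument
apply: disjoint zero-sum blocks are collected greedily and the missing length is made up with
zeros. This only fails when `N = |G|` and few of the sets are singletons. In that case the exchange
also excludes every `M ≠ ⊥`. Replacing disjoint pairs of distinct singletons by their unions then
produces `|G| - 1` sets with two elements, so Kneser's theorem puts `0` into a sumset of length `N`.
-/

open scoped Pointwise

theorem exists_injOn_card_fiber_sdiff_le {ι κ : Type*} [DecidableEq ι] [DecidableEq κ] (f : ι → κ)
    (N : Finset ι) :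
    ∃ T ⊆ N, Set.InjOn f T ∧ ∀ g, {i ∈ N \ T | f i = g}.card ≤ {i ∈ N | f i = g}.card - 1 := by
  obtain ⟨T, hTN, hinj, himage⟩ := Finset.exists_subset_injOn_image_eq_of_surjOn (N : Set ι)
    (N.image f) (by simpa using Set.surjOn_image f N)
  rw [Finset.coe_subset] at hTN
  refine ⟨T, hTN, hinj, fun g => ?_⟩
  by_cases hg : g ∈ N.image f
  · obtain ⟨t, ht, rfl⟩ := Finset.mem_image.1 (himage ▸ hg)
    refine Nat.le_sub_one_of_lt (Finset.card_lt_card (Finset.ssubset_iff_subset_ne.2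
      ⟨Finset.filter_subset_filter _ Finset.sdiff_subset, fun heq => ?_⟩))
    have : t ∈ {i ∈ N \ T | f i = f t} := heq ▸ Finset.mem_filter.2 ⟨hTN ht, rfl⟩
    simp [ht] at this
  · rw [Finset.filter_false_of_mem fun i hi hig =>
      hg (Finset.mem_image.2 ⟨i, Finset.sdiff_subset hi, hig⟩)]
    simp

section ShortZeroSums

variable {ι G : Type*} [AddCommGroup G]

theorem scherk_card_add_card_le [DecidableEq G] {A B : Finset G} (hA : 0 ∈ A)
    (hB : 0 ∈ B) (h : ∀ a ∈ A, ∀ b ∈ B, a + b = 0 → b = 0) :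
    A.card + B.card ≤ (A + B).card + 1 := by
  induction hn : B.card using Nat.strong_induction_on generalizing A B with
  | _ n ih =>
  subst hn
  by_cases hB0 : B = {0}
  · simp [hB0]
  obtain ⟨b, hb, hb0⟩ : ∃ b ∈ B, b ≠ 0 := by
    by_contra! hcon
    exact hB0 (Finset.eq_singleton_iff_unique_mem.2 ⟨hB, hcon⟩)
  obtain ⟨a, ha, hab⟩ : ∃ a ∈ A, a + b ∉ A := by
    by_contra! hcon
    have himage : A.image (· + b) = A :=
      Finset.eq_of_subset_of_card_le (Finset.image_subset_iff.2 hcon)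
        (Finset.card_image_of_injective A (add_left_injective b)).ge
    obtain ⟨c, hc, hcb⟩ := Finset.mem_image.1 (himage.symm ▸ hA)
    exact hb0 (h c hc b hb hcb)
  set C := Finset.addDysonETransform a (A, B) with hC
  have hfst : C.1 = A ∪ (a +ᵥ B) := rfl
  have hsnd : ∀ c, c ∈ C.2 ↔ c ∈ B ∧ a + c ∈ A := fun c => by
    simp [hC, Finset.addDysonETransform, Finset.mem_neg_vadd_finset_iff]
  have hlt : C.2.card < B.card := Finset.card_lt_card
    ⟨Finset.inter_subset_left, fun hsub => hab ((hsnd b).1 (hsub hb)).2⟩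
  have hunique : ∀ c ∈ C.1, ∀ d ∈ C.2, c + d = 0 → d = 0 := by
    intro c hc d hd hcd
    obtain ⟨hdB, hdA⟩ := (hsnd d).1 hd
    rcases Finset.mem_union.1 (hfst ▸ hc) with hcA | hcB
    · exact h c hcA d hdB hcd
    · obtain ⟨e, he, rfl⟩ := Finset.mem_vadd_finset.1 hcB
      rw [vadd_eq_add] at hcd
      have he0 : e = 0 := h (a + d) hdA e he (by rw [← hcd]; abel)
      exact h a ha d hdB (by simpa [he0] using hcd)
  have hsum : (C.1 + C.2).card ≤ (A + B).card :=
    Finset.card_le_card (Finset.addDysonETransform.subset a (A, B))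
  have hcard : C.1.card + C.2.card = A.card + B.card := Finset.addDysonETransform.card a (A, B)
  have := ih _ hlt (hfst ▸ Finset.mem_union_left _ hA) ((hsnd 0).2 ⟨hB, by simpa using ha⟩)
    hunique rfl
  omega

/-- The set of sums `∑ i ∈ s, f i` over the subfamilies `s ⊆ N` with at most `h` members,
including the empty one. -/
def shortSums [DecidableEq G] (f : ι → G) (N : Finset ι) (h : ℕ) : Finset G :=
  {s ∈ N.powerset | s.card ≤ h}.image fun s => ∑ i ∈ s, f i

theorem mem_shortSums [DecidableEq G] {f : ι → G} {N : Finset ι} {h : ℕ} {g : G} :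
    g ∈ shortSums f N h ↔ ∃ s ⊆ N, s.card ≤ h ∧ ∑ i ∈ s, f i = g := by
  simp [shortSums, and_assoc]

theorem sum_insert_of_subset_sdiff [DecidableEq ι] {f : ι → G} {N T : Finset ι} {h : ℕ} (hT : T ⊆ N)
    {s : Finset ι} (hs : s ⊆ N \ T) (hcard : s.card ≤ h) {t : ι} (ht : t ∈ T) :
    insert t s ⊆ N ∧ (insert t s).card ≤ h + 1 ∧ ∑ i ∈ insert t s, f i = ∑ i ∈ s, f i + f t := by
  have hts : t ∉ s := fun hmem => (Finset.mem_sdiff.1 (hs hmem)).2 ht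
  exact ⟨Finset.insert_subset (hT ht) (hs.trans Finset.sdiff_subset),
    (Finset.card_insert_le t s).trans (Nat.succ_le_succ hcard),
    by rw [Finset.sum_insert hts, add_comm]⟩

theorem card_lt_card_shortSums [DecidableEq G] {f : ι → G} {N : Finset ι}
    {h : ℕ} (hfiber : ∀ g, {i ∈ N | f i = g}.card ≤ h)
    (hzero : ∀ s ⊆ N, s.Nonempty → s.card ≤ h → ∑ i ∈ s, f i ≠ 0) :
    N.card < (shortSums f N h).card := by
  classical
  induction h generalizing N with
  | zero =>
    have hN : N = ∅ := Finset.eq_empty_of_forall_notMem fun i hi =>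
      (hfiber (f i)).not_gt (Finset.card_pos.2 ⟨i, Finset.mem_filter.2 ⟨hi, rfl⟩⟩)
    subst hN
    exact Finset.card_pos.2 ⟨0, mem_shortSums.2 ⟨∅, by simp⟩⟩
  | succ h ih =>
    obtain ⟨T, hTN, hTinj, hTfiber⟩ := exists_injOn_card_fiber_sdiff_le f N
    have hrec : (N \ T).card < (shortSums f (N \ T) h).card :=
      ih (fun g => (hTfiber g).trans (Nat.sub_le_of_le_add (hfiber g))) fun s hs hne hcard =>
        hzero s (hs.trans Finset.sdiff_subset) hne (hcard.trans h.le_succ)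
    have h0T : (0 : G) ∉ T.image f := fun h0 => by
      obtain ⟨t, ht, ht0⟩ := Finset.mem_image.1 h0
      exact hzero {t} (by simpa using hTN ht) (by simp) (by simp) (by simpa using ht0)
    have hscherk := scherk_card_add_card_le (A := shortSums f (N \ T) h)
      (B := insert 0 (T.image f)) (mem_shortSums.2 ⟨∅, by simp⟩) (by simp) <| by
        rintro a ha b hb hab
        obtain ⟨s, hs, hcard, rfl⟩ := mem_shortSums.1 ha
        refine (Finset.mem_insert.1 hb).resolve_right fun hbT => ?_
        obtain ⟨t, ht, rfl⟩ := Finset.mem_image.1 hbT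
        obtain ⟨hsub, hle, hsum⟩ := sum_insert_of_subset_sdiff hTN hs hcard ht (f := f)
        exact hzero _ hsub (Finset.insert_nonempty t s) hle (hsum.trans hab)
    have hsub : shortSums f (N \ T) h + insert 0 (T.image f) ⊆ shortSums f N (h + 1) := by
      rw [Finset.add_subset_iff]
      rintro a ha b hb
      obtain ⟨s, hs, hcard, rfl⟩ := mem_shortSums.1 ha
      rcases Finset.mem_insert.1 hb with rfl | hbT
      · exact mem_shortSums.2
          ⟨s, hs.trans Finset.sdiff_subset, hcard.trans h.le_succ, (add_zero _).symm⟩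
      · obtain ⟨t, ht, rfl⟩ := Finset.mem_image.1 hbT
        exact mem_shortSums.2 ⟨_, sum_insert_of_subset_sdiff hTN hs hcard ht⟩
    have hcard := Finset.card_le_card hsub
    rw [Finset.card_insert_of_notMem h0T, Finset.card_image_of_injOn hTinj] at hscherk
    have := Finset.card_sdiff_add_card_eq_card hTN
    omega

theorem exists_short_sum_eq_zero [DecidableEq G] {f : ι → G} {N : Finset ι} {h : ℕ}
    {K : AddSubgroup G} [Finite K]
    (hf : ∀ i ∈ N, f i ∈ K) (hN : Nat.card K ≤ N.card)
    (hfiber : ∀ g, {i ∈ N | f i = g}.card ≤ h) :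
    ∃ s ⊆ N, s.Nonempty ∧ s.card ≤ h ∧ ∑ i ∈ s, f i = 0 := by
  classical
  by_contra! hcon
  refine (card_lt_card_shortSums hfiber hcon).not_ge (le_trans ?_ hN)
  rw [← Set.ncard_coe_finset]
  refine Set.ncard_le_ncard (t := (K : Set G)) (fun g hg => ?_)
  obtain ⟨s, hs, -, rfl⟩ := mem_shortSums.1 hg
  exact K.sum_mem fun i hi => hf i (hs hi)

theorem exists_sum_mem_of_relIndex_le {u : ι → G} {P : Finset ι} {L U : AddSubgroup G} [Finite U]
    (hu : ∀ i ∈ P, u i ∈ U) (hP : L.relIndex U ≤ P.card) :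
    ∃ s ⊆ P, s.Nonempty ∧ ∑ i ∈ s, u i ∈ L := by
  classical
  have : Finite (U.map (QuotientAddGroup.mk' L)) := (U : Set G).toFinite.image _
  obtain ⟨s, hsP, hne, -, hsum⟩ := exists_short_sum_eq_zero (f := fun i => (u i : G ⧸ L))
    (K := U.map (QuotientAddGroup.mk' L)) (h := P.card)
    (fun i hi => AddSubgroup.mem_map_of_mem (QuotientAddGroup.mk' L) (hu i hi))
    (by rwa [← AddSubgroup.relIndex_ker, QuotientAddGroup.ker_mk'])
    fun g => Finset.card_filter_le _ _
  refine ⟨s, hsP, hne, (QuotientAddGroup.eq_zero_iff _).1 ?_⟩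
  simpa using hsum

end ShortZeroSums

section Growth

variable {ι G : Type*} [AddCommGroup G]

theorem mem_sum_iff_exists_selection {s : Finset ι} {B : ι → Set G} {g : G} :
    g ∈ ∑ i ∈ s, B i ↔ ∃ b : ι → G, (∀ i ∈ s, b i ∈ B i) ∧ ∑ i ∈ s, b i = g := by
  simp [Set.mem_finsetSum]

theorem sum_sets_nonempty {s : Finset ι} {B : ι → Set G} (hB : ∀ i ∈ s, (B i).Nonempty) :
    (∑ i ∈ s, B i).Nonempty := by
  choose! b hb using hB
  exact ⟨_, mem_sum_iff_exists_selection.2 ⟨b, hb, rfl⟩⟩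

/-- The set `C` lies in a single coset of `M`, i.e. it is constant modulo `M`. -/
def IsConstMod (M : AddSubgroup G) (C : Set G) : Prop :=
  ∀ a ∈ C, ∀ b ∈ C, a - b ∈ M

theorem IsConstMod.mono {L M : AddSubgroup G} (hLM : L ≤ M) {C : Set G} (hC : IsConstMod L C) :
    IsConstMod M C :=
  fun a ha b hb => hLM (hC a ha b hb)

theorem isConstMod_image {H : Type*} [AddCommGroup H] {f : G →+ H} {M : AddSubgroup H}
    {C : Set G} : IsConstMod M (f '' C) ↔ IsConstMod (M.comap f) C := by
  simp [IsConstMod]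

open scoped Classical in
/-- The indices in `s` whose set in the family `B` is not constant modulo `M`. -/
noncomputable def varying (M : AddSubgroup G) (B : ι → Set G) (s : Finset ι) : Finset ι :=
  {i ∈ s | ¬IsConstMod M (B i)}

theorem mem_varying {M : AddSubgroup G} {B : ι → Set G} {s : Finset ι} {i : ι} :
    i ∈ varying M B s ↔ i ∈ s ∧ ¬IsConstMod M (B i) := by
  simp [varying]

theorem varying_anti {L M : AddSubgroup G} (hLM : L ≤ M) (B : ι → Set G) (s : Finset ι) :
    varying M B s ⊆ varying L B s := fun i hi => by
  rw [mem_varying] at hi ⊢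
  exact ⟨hi.1, mt (IsConstMod.mono hLM) hi.2⟩

theorem varying_mono (M : AddSubgroup G) (B : ι → Set G) {s t : Finset ι} (hst : s ⊆ t) :
    varying M B s ⊆ varying M B t := fun i hi => by
  rw [mem_varying] at hi ⊢
  exact ⟨hst hi.1, hi.2⟩

theorem varying_eq_varying_univ [Fintype ι] {B : ι → Set G} {S : Finset ι}
    (hS : varying ⊥ B Finset.univ ⊆ S) (L : AddSubgroup G) :
    varying L B S = varying L B Finset.univ :=
  (varying_mono L B S.subset_univ).antisymm fun _ hi => mem_varying.2
    ⟨hS (varying_anti bot_le _ _ hi), (mem_varying.1 hi).2⟩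

theorem varying_image {H : Type*} [AddCommGroup H] (f : G →+ H) (M : AddSubgroup H)
    (B : ι → Set G) (s : Finset ι) :
    varying M (fun i => f '' B i) s = varying (M.comap f) B s := by
  ext i
  simp only [mem_varying, isConstMod_image]

theorem ncard_lt_ncard_add_of_stabilizer_eq_bot [Finite G] {C E : Set G}
    (hC : ¬IsConstMod ⊥ C) (hstab : AddAction.stabilizer G E = ⊥) :
    E.ncard < (C + E).ncard := by
  by_contra! hle
  have htranslate : ∀ a ∈ C, a +ᵥ E = C + E := fun a ha =>
    Set.eq_of_subset_of_ncard_le (Set.vadd_set_subset_add ha) (by rwa [Set.ncard_vadd_set])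
  refine hC fun a ha b hb => ?_
  rw [← hstab, AddAction.mem_stabilizer_iff, sub_eq_neg_add, add_vadd, htranslate a ha,
    ← htranslate b hb, neg_vadd_vadd]

/-- Once a partial sum has trivial stabilizer, adding a set with two elements enlarges it. -/
theorem card_varying_bot_lt_ncard_sum [Finite G] {s : Finset ι} {C : ι → Set G}
    (hC : ∀ i ∈ s, (C i).Nonempty) (hstab : AddAction.stabilizer G (∑ i ∈ s, C i) = ⊥) :
    (varying ⊥ C s).card < (∑ i ∈ s, C i).ncard := by
  classical
  induction s using Finset.induction_on with
  | empty => simp [varying, ← Set.singleton_zero]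
  | insert j s hj ih =>
    rw [Finset.sum_insert hj] at hstab ⊢
    have hCs : ∀ i ∈ s, (C i).Nonempty := fun i hi => hC i (Finset.mem_insert_of_mem hi)
    have hstab' : AddAction.stabilizer G (∑ i ∈ s, C i) = ⊥ := by
      refine le_bot_iff.1 (hstab ▸ fun g hg => ?_)
      rw [AddAction.mem_stabilizer_iff] at hg ⊢
      rw [← add_vadd_comm, hg]
    have hrec := ih hCs hstab'
    by_cases hconst : IsConstMod ⊥ (C j)
    · obtain ⟨a, ha⟩ := hC j (Finset.mem_insert_self j s)
      have hcard : (∑ i ∈ s, C i).ncard ≤ (C j + ∑ i ∈ s, C i).ncard := by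
        rw [← Set.ncard_vadd_set a]
        exact Set.ncard_le_ncard (Set.vadd_set_subset_add ha)
      simpa [varying, Finset.filter_insert, hconst] using hrec.trans_le hcard
    · have hcard := ncard_lt_ncard_add_of_stabilizer_eq_bot hconst hstab'
      have := Finset.card_insert_le j (varying ⊥ C s)
      simp only [varying, Finset.filter_insert, hconst, not_false_eq_true, if_true] at this hrec ⊢
      omega

/-- The subgroup is the stabilizer of the sumset. -/
theorem exists_card_varying_add_two_le_relIndex [Finite G] {s : Finset ι} {C : ι → Set G}
    {L : AddSubgroup G} (hC : ∀ i ∈ s, (C i).Nonempty) (hL : ∑ i ∈ s, C i ⊆ L)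
    (hzero : (0 : G) ∉ ∑ i ∈ s, C i) :
    ∃ M ≤ L, (varying M C s).card + 2 ≤ M.relIndex L := by
  let E := ∑ i ∈ s, C i
  let M := AddAction.stabilizer G E
  have hMadd : ∀ {g e}, g ∈ M → e ∈ E → g + e ∈ E := fun hg he =>
    (AddAction.mem_stabilizer_set' E.toFinite).1 hg he
  have hML : M ≤ L := fun g hg => by
    obtain ⟨e, he⟩ := sum_sets_nonempty hC
    exact (L.add_mem_cancel_right (hL he)).1 (hL (hMadd hg he))
  refine ⟨M, hML, ?_⟩
  let q := QuotientAddGroup.mk' M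
  have hqE : q '' E = ∑ i ∈ s, q '' C i := Set.image_finsetSum q s C
  have hgrowth : (varying ⊥ (fun i => q '' C i) s).card < (q '' E).ncard := by
    rw [hqE]
    refine card_varying_bot_lt_ncard_sum (fun i hi => (hC i hi).image q) ?_
    rw [← hqE]
    exact AddAction.stabilizer_image_coe_quotient E
  have hvarying : varying ⊥ (fun i => q '' C i) s = varying M C s := by
    rw [varying_image, AddMonoidHom.comap_bot, QuotientAddGroup.ker_mk']
  have hsubset : insert 0 (q '' E) ⊆ (L.map q : Set (G ⧸ M)) :=
    Set.insert_subset (zero_mem _) (Set.image_mono hL)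
  have hzero' : (0 : G ⧸ M) ∉ q '' E := by
    rintro ⟨e, he, hqe⟩
    have heM : e ∈ M := (QuotientAddGroup.eq_zero_iff e).1 hqe
    exact hzero (by simpa using hMadd (neg_mem heM) he)
  have hcard := Set.ncard_le_ncard hsubset
  rw [Set.ncard_insert_of_notMem hzero'] at hcard
  have hindex : M.relIndex L = (L.map q : Set (G ⧸ M)).ncard := by
    have hker := AddSubgroup.relIndex_ker L q
    rwa [QuotientAddGroup.ker_mk'] at hker
  rw [hvarying] at hgrowth
  omega

/-- The sum over `s` of the sets of the family `B` meets the subgroup `L`. -/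
def Meets (B : ι → Set G) (L : AddSubgroup G) (s : Finset ι) : Prop :=
  ∃ b : ι → G, (∀ i ∈ s, b i ∈ B i) ∧ ∑ i ∈ s, b i ∈ L

theorem meets_bot {B : ι → Set G} {s : Finset ι} :
    Meets B ⊥ s ↔ (0 : G) ∈ ∑ i ∈ s, B i := by
  simp [Meets, mem_sum_iff_exists_selection]

theorem meets_image {H : Type*} [AddCommGroup H] {f : G →+ H} {B : ι → Set G}
    {L : AddSubgroup H} {s : Finset ι} :
    Meets (fun i => f '' B i) L s ↔ Meets B (L.comap f) s := by
  constructor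
  · rintro ⟨b, hb, hsum⟩
    choose! c hc hcb using hb
    refine ⟨c, hc, ?_⟩
    rwa [AddSubgroup.mem_comap, map_sum, Finset.sum_congr rfl hcb]
  · rintro ⟨b, hb, hsum⟩
    exact ⟨f ∘ b, fun i hi => Set.mem_image_of_mem f (hb i hi), by simpa using hsum⟩

theorem Meets.exists_lt_card_varying_add_two_le [Finite G] {s : Finset ι} {B : ι → Set G}
    {L : AddSubgroup G} (hL : Meets B L s) (hbot : ¬Meets B ⊥ s) :
    ∃ M < L, (varying M B s).card + 2 ≤ M.relIndex L + (varying L B s).card := by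
  classical
  obtain ⟨b, hb, hbL⟩ := hL
  let C : ι → Set G := fun i => {v ∈ B i | v - b i ∈ L}
  have hzero : (0 : G) ∉ ∑ i ∈ s, C i := fun h => hbot <|
    meets_bot.2 (Set.finsetSum_subset_finsetSum s C B (fun i _ => Set.sep_subset _ _) h)
  have hCL : ∑ i ∈ s, C i ⊆ L := by
    intro g hg
    obtain ⟨c, hc, rfl⟩ := mem_sum_iff_exists_selection.1 hg
    rw [SetLike.mem_coe, ← L.add_mem_cancel_right (neg_mem hbL), ← sub_eq_add_neg,
      ← Finset.sum_sub_distrib]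
    exact L.sum_mem fun i hi => (hc i hi).2
  have hC : ∀ i ∈ s, (C i).Nonempty := fun i hi => ⟨b i, hb i hi, by simp⟩
  obtain ⟨M, hML, hcard⟩ := exists_card_varying_add_two_le_relIndex hC hCL hzero
  have hsubset : varying M B s ⊆ varying M C s ∪ varying L B s := by
    intro i hi
    obtain ⟨his, hiM⟩ := mem_varying.1 hi
    rw [Finset.mem_union, mem_varying, mem_varying]
    by_contra! hcon
    refine hiM fun v hv v' hv' => ?_
    have hconst := hcon.2 his
    exact hcon.1 his v ⟨hv, hconst v hv _ (hb i his)⟩ v' ⟨hv', hconst v' hv' _ (hb i his)⟩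
  have hunion := (Finset.card_le_card hsubset).trans (Finset.card_union_le _ _)
  refine ⟨M, lt_of_le_of_ne hML ?_, by omega⟩
  rintro rfl
  rw [AddSubgroup.relIndex_self] at hcard
  omega

end Growth

section Exchange

variable {ι G : Type*} [AddCommGroup G]

theorem exists_mapsTo_injOn_of_card_le [Nonempty ι] {P Q : Finset ι} (h : P.card ≤ Q.card) :
    ∃ σ : ι → ι, (∀ i ∈ P, σ i ∈ Q) ∧ Set.InjOn σ P := by
  obtain ⟨σ, hσ, hinj⟩ := P.finite_toSet.exists_injOn_of_encard_le (t := (Q : Set ι))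
    (by simpa [Set.encard_coe_eq_coe_finsetCard] using h)
  exact ⟨σ, fun i hi => hσ hi, hinj⟩

theorem Meets.swap [DecidableEq ι] {B : ι → Set G} {L : AddSubgroup G} {s P : Finset ι} {b : ι → G}
    {σ : ι → ι} (hb : ∀ i ∈ s, b i ∈ B i) (hL : ∑ i ∈ s, b i ∈ L) (hPs : Disjoint P s)
    (hσ : ∀ i ∈ P, σ i ∈ s) (hinj : Set.InjOn σ P) {c : ι → G} (hc : ∀ i ∈ P, c i ∈ B i)
    (hcL : ∑ i ∈ P, (c i - b (σ i)) ∈ L) :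
    (P ∪ s \ P.image σ).card = s.card ∧ Meets B L (P ∪ s \ P.image σ) := by
  have hdisj : Disjoint P (s \ P.image σ) := hPs.mono_right Finset.sdiff_subset
  have himage : P.image σ ⊆ s := Finset.image_subset_iff.2 hσ
  constructor
  · rw [Finset.card_union_of_disjoint hdisj, ← Finset.card_image_of_injOn hinj, add_comm,
      Finset.card_sdiff_add_card_eq_card himage]
  · refine ⟨P.piecewise c b, fun i hi => ?_, ?_⟩
    · by_cases hiP : i ∈ P
      · simpa [hiP] using hc i hiP
      · simpa [hiP] using hb i (Finset.mem_sdiff.1 ((Finset.mem_union.1 hi).resolve_left hiP)).1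
    · have hP : ∑ i ∈ P, P.piecewise c b i = ∑ i ∈ P, c i :=
        Finset.sum_congr rfl fun i hi => Finset.piecewise_eq_of_mem _ _ _ hi
      have hs : ∑ i ∈ s \ P.image σ, P.piecewise c b i = ∑ i ∈ s \ P.image σ, b i :=
        Finset.sum_congr rfl fun i hi =>
          Finset.piecewise_eq_of_notMem _ _ _ (Finset.disjoint_right.1 hdisj hi)
      rw [Finset.sum_sub_distrib, ← Finset.sum_image (f := b) hinj] at hcL
      rw [Finset.sum_union hdisj, hP, hs, Finset.sum_sdiff_eq_sub himage,
        show ∑ i ∈ P, c i + (∑ i ∈ s, b i - ∑ i ∈ P.image σ, b i) =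
          ∑ i ∈ P, c i - ∑ i ∈ P.image σ, b i + ∑ i ∈ s, b i by abel]
      exact L.add_mem hcL hL

/-- With `L.relIndex U` indices to move, a zero-sum modulo `L` of the differences `c i - b (σ i)`
would bring `s` closer to `S`. -/
theorem Meets.card_lt_relIndex_of_closest [DecidableEq ι] [Finite G] {B : ι → Set G}
    {L U : AddSubgroup G} {S s P : Finset ι} (hB : ∀ i ∈ P, (B i).Nonempty) (hs : Meets B L s)
    (hclosest : ∀ s', s'.card = s.card → Meets B L s' → (S \ s).card ≤ (S \ s').card)
    (hPS : P ⊆ S \ s) (hcard : P.card ≤ (s \ S).card) (hPU : ∀ i ∈ P, B i ⊆ U)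
    (hsU : ∀ i ∈ s \ S, B i ⊆ U) : P.card < L.relIndex U := by
  rcases P.eq_empty_or_nonempty with rfl | ⟨i₀, -⟩
  · exact Nat.pos_of_ne_zero AddSubgroup.index_ne_zero_of_finite
  have : Nonempty ι := ⟨i₀⟩
  by_contra! hle
  obtain ⟨b, hb, hbL⟩ := hs
  choose! c hc using hB
  obtain ⟨σ, hσ, hinj⟩ := exists_mapsTo_injOn_of_card_le hcard
  have hσs : ∀ i ∈ P, σ i ∈ s := fun i hi => (Finset.mem_sdiff.1 (hσ i hi)).1
  obtain ⟨Q, hQP, hQne, hQL⟩ := exists_sum_mem_of_relIndex_le (u := fun i => c i - b (σ i))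
    (fun i hi => U.sub_mem (hPU i hi (hc i hi)) (hsU _ (hσ i hi) (hb _ (hσs i hi)))) hle
  have hQS : Q ⊆ S \ s := hQP.trans hPS
  obtain ⟨hcard', hmeets⟩ := Meets.swap hb hbL (Finset.disjoint_of_subset_left hQS
    Finset.sdiff_disjoint) (fun i hi => hσs i (hQP hi)) (hinj.mono (Finset.coe_subset.2 hQP))
    (fun i hi => hc i (hQP hi)) hQL
  refine (hclosest _ hcard' hmeets).not_gt (Finset.card_lt_card ?_)
  obtain ⟨i, hi⟩ := hQne
  refine Finset.ssubset_iff_of_subset (fun j hj => ?_) |>.2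
    ⟨i, hQS hi, fun h => (Finset.mem_sdiff.1 h).2 (Finset.mem_union_left _ hi)⟩
  obtain ⟨hjS, hj⟩ := Finset.mem_sdiff.1 hj
  refine Finset.mem_sdiff.2 ⟨hjS, fun hjs => hj (Finset.mem_union_right _ ?_)⟩
  refine Finset.mem_sdiff.2 ⟨hjs, fun hmem => ?_⟩
  obtain ⟨k, hk, rfl⟩ := Finset.mem_image.1 hmem
  exact (Finset.mem_sdiff.1 (hσ k (hQP hk))).2 hjS

/-- `M` comes from a sum over `s` meeting `L` with `s` as close to `S` as possible; an index of
`S \ s` could be exchanged for one of `s \ S` if there were too many of them. -/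
theorem exists_lt_card_varying_add_three_le [Finite G] {B : ι → Set G}
    {L : AddSubgroup G} {S : Finset ι} (hB : ∀ i, (B i).Nonempty)
    (hL : ∃ s : Finset ι, s.card = S.card ∧ Meets B L s)
    (hbot : ∀ s : Finset ι, s.card = S.card → ¬Meets B ⊥ s) :
    ∃ M < L, ∀ U : AddSubgroup G, (∀ i, (i ∈ S → IsConstMod L (B i)) → B i ⊆ U) →
      (varying M B S).card + 3 ≤ M.relIndex L + L.relIndex U + (varying L B S).card := by
  classical
  obtain ⟨s, ⟨hcard, hmeets⟩, hmin⟩ := exists_minimalFor_of_wellFoundedLT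
    (fun s : Finset ι => s.card = S.card ∧ Meets B L s) (fun s => (S \ s).card) hL
  obtain ⟨M, hML, hM⟩ := hmeets.exists_lt_card_varying_add_two_le (hbot s hcard)
  refine ⟨M, hML, fun U hU => ?_⟩
  have hclosest : ∀ s', s'.card = s.card → Meets B L s' → (S \ s).card ≤ (S \ s').card :=
    fun s' hs' hL' => (le_total _ _).elim id (hmin ⟨hs'.trans hcard, hL'⟩)
  let P := (varying M B S \ varying L B S) \ s
  have hPS : P ⊆ S \ s := Finset.sdiff_subset_sdiff
    (Finset.sdiff_subset.trans (Finset.filter_subset _ _)) le_rfl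
  have hPconst : ∀ i ∈ P, IsConstMod L (B i) := fun i hi => by
    simp only [P, Finset.mem_sdiff, mem_varying] at hi
    tauto
  have hP : P.card < L.relIndex U := hmeets.card_lt_relIndex_of_closest (fun i _ => hB i) hclosest
    hPS ((Finset.card_le_card hPS).trans (Finset.card_sdiff_comm hcard.symm).le)
    (fun i hi => hU i fun _ => hPconst i hi)
    (fun i hi => hU i fun hiS => absurd hiS (Finset.mem_sdiff.1 hi).2)
  have hsub : varying M B S \ varying L B S ⊆ (varying M B s \ varying L B s) ∪ P := by
    intro i hi
    by_cases his : i ∈ s <;> simp_all [P, mem_varying]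
  have hcover := (Finset.card_le_card hsub).trans (Finset.card_union_le _ _)
  rw [Finset.card_sdiff_of_subset (varying_anti hML.le B S),
    Finset.card_sdiff_of_subset (varying_anti hML.le B s)] at hcover
  have := Finset.card_le_card (varying_anti hML.le B s)
  omega

/-- Few sets of the family, relative to the index of `L`, vary modulo `L`: this is what Kneser's
theorem says of the stabilizer of a sumset that misses `0`. -/
def IsPoor (B : ι → Set G) (S : Finset ι) (L : AddSubgroup G) : Prop :=
  (varying L B S).card + 2 ≤ L.index

theorem IsPoor.of_lt [Finite G] {B : ι → Set G} {S : Finset ι} {L M : AddSubgroup G}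
    (hL : IsPoor B S L) (hML : M < L)
    (hM : (varying M B S).card + 3 ≤ M.relIndex L + L.index + (varying L B S).card) :
    IsPoor B S M := by
  have hindex := AddSubgroup.relIndex_mul_index hML.le
  have hne_one : M.relIndex L ≠ 1 := mt AddSubgroup.relIndex_eq_one.1 hML.not_ge
  have hne_zero : M.relIndex L ≠ 0 := AddSubgroup.index_ne_zero_of_finite
  unfold IsPoor at *
  obtain ⟨a, ha⟩ : ∃ a, M.relIndex L = a + 2 := ⟨M.relIndex L - 2, by omega⟩
  obtain ⟨b, hb⟩ : ∃ b, L.index = b + 1 := ⟨L.index - 1, by omega⟩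
  rw [ha, hb] at hindex hM
  rw [hb] at hL
  nlinarith [Nat.zero_le (a * b)]

theorem isPoor_bot [Finite G] [Fintype ι] {B : ι → Set G} {N : ℕ} (hB : ∀ i, (B i).Nonempty)
    (hN : N ≤ Fintype.card ι) (hG : Nat.card G ≤ N + 1)
    (hmeets : ∀ L : AddSubgroup G, L ≠ ⊥ → ∃ s : Finset ι, s.card = N ∧ Meets B L s)
    (hbot : ∀ s : Finset ι, s.card = N → ¬Meets B ⊥ s) : IsPoor B Finset.univ ⊥ := by
  by_contra hpoor
  rw [IsPoor, AddSubgroup.index_bot, not_le] at hpoor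
  obtain ⟨V, hV, hVcard⟩ := Finset.exists_subset_card_eq
    (show Nat.card G - 1 ≤ (varying ⊥ B Finset.univ).card by omega)
  obtain ⟨S, hVS, -, hS⟩ := Finset.exists_subsuperset_card_eq V.subset_univ
    (show V.card ≤ N by omega) hN
  have hVvar : V ⊆ varying ⊥ B S := fun i hi => mem_varying.2 ⟨hVS hi, (mem_varying.1 (hV hi)).2⟩
  have hVle := Finset.card_le_card hVvar
  subst hS
  obtain ⟨M₀, -, hM₀⟩ := exists_card_varying_add_two_le_relIndex (L := ⊤) (fun i _ => hB i)
    (Set.subset_univ _) (mt meets_bot.2 (hbot S rfl))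
  rw [AddSubgroup.relIndex_top_right] at hM₀
  obtain ⟨L, hL, hmin⟩ := exists_minimal_of_wellFoundedLT (IsPoor B S) ⟨M₀, hM₀⟩
  have hLbot : L ≠ ⊥ := by
    rintro rfl
    rw [IsPoor, AddSubgroup.index_bot] at hL
    omega
  obtain ⟨M, hML, hM⟩ := exists_lt_card_varying_add_three_le hB (hmeets L hLbot) hbot
  have hMpoor := hL.of_lt hML (by simpa using hM ⊤ fun i _ => Set.subset_univ _)
  exact hML.not_ge (hmin hMpoor hML.le)

end Exchange

section Blocks

variable {ι : Type*} {P : Finset ι → Prop}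

theorem exists_union_of_blocks [DecidableEq ι] (hempty : P ∅)
    (hunion : ∀ s t, Disjoint s t → P s → P t → P (s ∪ t)) {k h : ℕ} {I : Finset ι}
    (hblock : ∀ J ⊆ I, k ≤ J.card → ∃ s ⊆ J, s.Nonempty ∧ s.card ≤ h ∧ P s) :
    ∃ U ⊆ I, I.card < U.card + k ∧
      ∀ j < U.card + h, ∃ u ⊆ U, P u ∧ u.card ≤ j ∧ j < u.card + h := by
  induction I using Finset.strongInduction with
  | H I ih =>
  by_cases hI : I.card < k
  · exact ⟨∅, by simp, by simpa using hI, fun j hj => ⟨∅, by simpa [hempty] using hj⟩⟩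
  obtain ⟨s, hsI, hne, hsh, hPs⟩ := hblock I le_rfl (not_lt.1 hI)
  have hsdiff : I \ s ⊆ I := Finset.sdiff_subset
  obtain ⟨U, hU, hIU, hUflex⟩ := ih (I \ s) (Finset.sdiff_ssubset hsI hne)
    fun J hJ => hblock J (hJ.trans hsdiff)
  have hUs : Disjoint U s := Finset.disjoint_of_subset_left hU Finset.sdiff_disjoint
  have hcard := Finset.card_sdiff_add_card_eq_card hsI
  refine ⟨U ∪ s, Finset.union_subset (hU.trans hsdiff) hsI, ?_, fun j hj => ?_⟩
  · rw [Finset.card_union_of_disjoint hUs]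
    omega
  rw [Finset.card_union_of_disjoint hUs] at hj
  by_cases hjs : j < s.card
  · exact ⟨∅, by simp, hempty, by simp, by simp; omega⟩
  · obtain ⟨u, huU, hPu, huj, hju⟩ := hUflex (j - s.card) (by omega)
    have hus : Disjoint u s := Finset.disjoint_of_subset_left huU hUs
    refine ⟨u ∪ s, Finset.union_subset_union_left huU, hunion u s hus hPu hPs, ?_⟩
    rw [Finset.card_union_of_disjoint hus]
    omega

/-- Gao's argument: the blocks outside `T` are exhausted greedily, and `T`, which contains blocks
of every size, supplies the missing indices. -/
theorem exists_card_eq_of_flexible [DecidableEq ι] [Fintype ι] (hempty : P ∅)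
    (hunion : ∀ s t, Disjoint s t → P s → P t → P (s ∪ t)) {N D : ℕ}
    (hcard : Fintype.card ι + 1 = N + D)
    (hblock : ∀ J : Finset ι, D ≤ J.card → ∃ s ⊆ J, s.Nonempty ∧ P s) {T : Finset ι}
    (hflex : ∀ j ≤ T.card, ∃ u ⊆ T, u.card = j ∧ P u) (hT : D ≤ T.card + 1) :
    ∃ s : Finset ι, s.card = N ∧ P s := by
  have : 0 < D := by
    by_contra! hD0
    obtain ⟨s, hs, hne, -⟩ := hblock ∅ (by simpa using hD0)
    exact hne.ne_empty (Finset.subset_empty.1 hs)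
  obtain ⟨V, hV, hVcard, hVflex⟩ := exists_union_of_blocks (I := Tᶜ) (k := D) (h := D)
    hempty hunion fun J _ hJ => by
      obtain ⟨J', hJ', hJ'card⟩ := Finset.exists_subset_card_eq hJ
      obtain ⟨s, hs, hne, hPs⟩ := hblock J' hJ'card.ge
      exact ⟨s, hs.trans hJ', hne, hJ'card ▸ Finset.card_le_card hs, hPs⟩
  rw [Finset.card_compl] at hVcard
  have hTle := T.card_le_univ
  obtain ⟨u, huV, hPu, huj, hju⟩ := hVflex (min N (V.card + D - 1)) (by omega)
  have := Finset.card_le_card huV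
  obtain ⟨v, hvT, hvcard, hPv⟩ := hflex (N - u.card) (by omega)
  have huv : Disjoint u v :=
    Finset.disjoint_of_subset_left (huV.trans hV) (Finset.disjoint_of_subset_right hvT
      disjoint_compl_left)
  refine ⟨u ∪ v, ?_, hunion u v huv hPu hPv⟩
  rw [Finset.card_union_of_disjoint huv]
  omega

theorem exists_subset_card_eq_union [DecidableEq ι] {U Z : Finset ι} (hUZ : Disjoint U Z)
    (hZ : Z.Nonempty)
    (hU : ∀ j < U.card + Z.card, ∃ u ⊆ U, P u ∧ u.card ≤ j ∧ j < u.card + Z.card)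
    (hPZ : ∀ u ⊆ U, ∀ z ⊆ Z, P u → P (u ∪ z)) :
    ∀ j ≤ (U ∪ Z).card, ∃ u ⊆ U ∪ Z, u.card = j ∧ P u := by
  intro j hj
  have hZpos := hZ.card_pos
  rw [Finset.card_union_of_disjoint hUZ] at hj
  obtain ⟨u, hu, hPu, huj, hju⟩ := hU (min j (U.card + Z.card - 1)) (by omega)
  have := Finset.card_le_card hu
  obtain ⟨z, hz, hzcard⟩ := Finset.exists_subset_card_eq (show j - u.card ≤ Z.card by omega)
  refine ⟨u ∪ z, Finset.union_subset_union hu hz, ?_, hPZ u hu z hz hPu⟩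
  rw [Finset.card_union_of_disjoint
    (Finset.disjoint_of_subset_left hu (Finset.disjoint_of_subset_right hz hUZ))]
  omega

theorem exists_flexible_sum_eq_zero {G : Type*} [AddCommGroup G] [DecidableEq G] {f : ι → G}
    {I : Finset ι} {K : AddSubgroup G} [Finite K] (hf : ∀ i ∈ I, f i ∈ K)
    (hZ : {i ∈ I | f i = 0}.Nonempty)
    (hfiber : ∀ g, {i ∈ I | f i = g}.card ≤ {i ∈ I | f i = 0}.card) :
    ∃ T ⊆ I, I.card + 1 ≤ T.card + Nat.card K ∧
      ∀ j ≤ T.card, ∃ u ⊆ T, u.card = j ∧ ∑ i ∈ u, f i = 0 := by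
  classical
  set Z := {i ∈ I | f i = 0}
  have hZI : Z ⊆ I := Finset.filter_subset _ _
  have hIZ : I \ Z ⊆ I := Finset.sdiff_subset
  obtain ⟨U, hU, hUcard, hUflex⟩ := exists_union_of_blocks (P := fun u => ∑ i ∈ u, f i = 0)
    (k := Nat.card K) (h := Z.card) (I := I \ Z) Finset.sum_empty
    (fun s t hst hs ht => by rw [Finset.sum_union hst, hs, ht, add_zero])
    fun J hJ hJcard => exists_short_sum_eq_zero (fun i hi => hf i (hIZ (hJ hi))) hJcard fun g =>
      (Finset.card_le_card (Finset.filter_subset_filter _ (hJ.trans hIZ))).trans (hfiber g)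
  have hUZ : Disjoint U Z := Finset.disjoint_of_subset_left hU Finset.sdiff_disjoint
  refine ⟨U ∪ Z, Finset.union_subset (hU.trans hIZ) hZI, ?_,
    exists_subset_card_eq_union hUZ hZ hUflex fun u hu z hz hu0 => ?_⟩
  · have := Finset.card_sdiff_add_card_eq_card hZI
    rw [Finset.card_union_of_disjoint hUZ]
    omega
  · have hz0 : ∑ i ∈ z, f i = 0 :=
      Finset.sum_eq_zero fun i hi => (Finset.mem_filter.1 (hz hi)).2
    rw [Finset.sum_union (Finset.disjoint_of_subset_left hu (Finset.disjoint_of_subset_right hz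
      hUZ)), hu0, hz0, add_zero]

end Blocks

section WeightedSums

variable {ι G : Type*} [AddCommGroup G] {A : Set ℤ}

/-- The subfamily of `x` indexed by `s` has a vanishing sum with weights from `A`. -/
def IsWeightedZeroSum (A : Set ℤ) (x : ι → G) (s : Finset ι) : Prop :=
  ∃ w : ι → ℤ, (∀ i ∈ s, w i ∈ A) ∧ ∑ i ∈ s, w i • x i = 0

/-- The sets of multiples of the terms of `x` by the weights `A`; a weighted sum is a selection from
these sets. -/
def weighted (A : Set ℤ) (x : ι → G) (i : ι) : Set G :=
  (· • x i) '' A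

theorem weighted_nonempty (hA : A.Nonempty) (x : ι → G) (i : ι) : (weighted A x i).Nonempty :=
  hA.image _

theorem weighted_comp {H : Type*} [AddCommGroup H] (f : G →+ H) (x : ι → G) :
    weighted A (f ∘ x) = fun i => f '' weighted A x i := by
  ext i h
  simp [weighted]

theorem isWeightedZeroSum_iff_meets {x : ι → G} {s : Finset ι} :
    IsWeightedZeroSum A x s ↔ Meets (weighted A x) ⊥ s := by
  constructor
  · rintro ⟨w, hw, hsum⟩
    exact ⟨fun i => w i • x i, fun i hi => ⟨w i, hw i hi, rfl⟩, by simpa using hsum⟩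
  · rintro ⟨b, hb, hsum⟩
    choose! w hw hwb using hb
    exact ⟨w, hw, by rwa [Finset.sum_congr rfl hwb]⟩

theorem IsWeightedZeroSum.empty (A : Set ℤ) (x : ι → G) : IsWeightedZeroSum A x ∅ :=
  ⟨0, by simp⟩

theorem IsWeightedZeroSum.union [DecidableEq ι] {x : ι → G} {s t : Finset ι} (hst : Disjoint s t)
    (hs : IsWeightedZeroSum A x s) (ht : IsWeightedZeroSum A x t) :
    IsWeightedZeroSum A x (s ∪ t) := by
  obtain ⟨v, hv, hvsum⟩ := hs
  obtain ⟨w, hw, hwsum⟩ := ht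
  refine ⟨s.piecewise v w, fun i hi => ?_, ?_⟩
  · by_cases his : i ∈ s
    · simpa [his] using hv i his
    · simpa [his] using hw i ((Finset.mem_union.1 hi).resolve_left his)
  · rw [Finset.sum_union hst, ← hvsum, ← add_zero (∑ i ∈ s, v i • x i), ← hwsum]
    congr 1 <;> refine Finset.sum_congr rfl fun i hi => ?_
    · simp [hi]
    · simp [Finset.disjoint_right.1 hst hi]

theorem IsWeightedZeroSum.map {κ : Type*} {x : ι → G} {e : κ ↪ ι} {s : Finset κ}
    (hs : IsWeightedZeroSum A (x ∘ e) s) : IsWeightedZeroSum A x (s.map e) := by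
  obtain ⟨w, hw, hsum⟩ := hs
  refine ⟨Function.extend e w 0, ?_, ?_⟩
  · simpa [e.injective.extend_apply] using hw
  · simpa [e.injective.extend_apply] using hsum

/-- The elements whose multiples by all the weights agree modulo `L`. -/
def constSubgroup (A : Set ℤ) (L : AddSubgroup G) : AddSubgroup G where
  carrier := {g | ∀ a ∈ A, ∀ b ∈ A, (a - b) • g ∈ L}
  zero_mem' a _ b _ := by simp
  add_mem' hg hh a ha b hb := by
    rw [smul_add]
    exact L.add_mem (hg a ha b hb) (hh a ha b hb)
  neg_mem' hg a ha b hb := by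
    rw [smul_neg]
    exact L.neg_mem (hg a ha b hb)

theorem isConstMod_weighted {L : AddSubgroup G} {x : ι → G} {i : ι} :
    IsConstMod L (weighted A x i) ↔ x i ∈ constSubgroup A L := by
  simp [IsConstMod, weighted, constSubgroup, sub_smul]

theorem smul_eq_of_mem_constSubgroup_bot {g : G} (hg : g ∈ constSubgroup A ⊥) {a b : ℤ}
    (ha : a ∈ A) (hb : b ∈ A) : a • g = b • g := by
  have := hg a ha b hb
  rwa [AddSubgroup.mem_bot, sub_smul, sub_eq_zero] at this

/-- Every sequence of `D` elements of `G` has a nonempty subsequence with a vanishing weighted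
sum, that is, `D` is at least the weighted Davenport constant of `G`. -/
def IsDavenportBound (A : Set ℤ) (G : Type*) [AddCommGroup G] (D : ℕ) : Prop :=
  ∀ x : Fin D → G, ∃ s, s.Nonempty ∧ IsWeightedZeroSum A x s

theorem IsDavenportBound.pos {D : ℕ} (hD : IsDavenportBound A G D) : 0 < D := by
  obtain ⟨s, ⟨i, -⟩, -⟩ := hD 0
  exact i.pos

theorem IsDavenportBound.of_surjective {H : Type*} [AddCommGroup H] {D : ℕ}
    (hD : IsDavenportBound A G D) {f : G →+ H} (hf : Function.Surjective f) :
    IsDavenportBound A H D := fun y => by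
  choose g hg using hf
  obtain ⟨s, hs, w, hw, hsum⟩ := hD (g ∘ y)
  exact ⟨s, hs, w, hw, by simpa [hg] using congrArg f hsum⟩

theorem IsDavenportBound.exists_subset {D : ℕ} (hD : IsDavenportBound A G D) (x : ι → G)
    {J : Finset ι} (hJ : D ≤ J.card) : ∃ s ⊆ J, s.Nonempty ∧ IsWeightedZeroSum A x s := by
  classical
  let e : Fin D ↪ ι := (Fin.castLEEmb hJ).trans (J.equivFin.symm.toEmbedding.trans
    (Function.Embedding.subtype _))
  obtain ⟨s, hs, hzero⟩ := hD (x ∘ e)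
  refine ⟨s.map e, fun i hi => ?_, hs.map, hzero.map⟩
  obtain ⟨k, -, rfl⟩ := Finset.mem_map.1 hi
  exact (J.equivFin.symm (Fin.castLE hJ k)).2

/-- Translating a sequence by an element with a single weighted multiple changes its weighted sums
of length `N` by a fixed multiple of `N`. -/
theorem IsWeightedZeroSum.of_sub {x : ι → G} {s : Finset ι} {g : G} (hg : g ∈ constSubgroup A ⊥)
    (hs : s.card • g = 0) (h : IsWeightedZeroSum A (fun i => x i - g) s) :
    IsWeightedZeroSum A x s := by
  obtain ⟨w, hw, hsum⟩ := h
  refine ⟨w, hw, ?_⟩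
  rcases s.eq_empty_or_nonempty with rfl | ⟨j, hj⟩
  · simp
  simp only [smul_sub, Finset.sum_sub_distrib] at hsum
  have hconst : ∑ i ∈ s, w i • g = s.card • (w j • g) := by
    rw [← Finset.sum_const]
    exact Finset.sum_congr rfl fun i hi => smul_eq_of_mem_constSubgroup_bot hg (hw i hi) (hw j hj)
  rwa [hconst, smul_comm, hs, smul_zero, sub_zero] at hsum

variable [Fintype ι] {N D : ℕ}

theorem exists_isWeightedZeroSum_of_flexible {x : ι → G} {g : G}
    (hN : ∀ g : G, N • g = 0) (hcard : Fintype.card ι + 1 = N + D) (hD : IsDavenportBound A G D)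
    (hg : g ∈ constSubgroup A ⊥) {T : Finset ι}
    (hflex : ∀ j ≤ T.card, ∃ u ⊆ T, u.card = j ∧ IsWeightedZeroSum A (fun i => x i - g) u)
    (hT : D ≤ T.card + 1) : ∃ s : Finset ι, s.card = N ∧ IsWeightedZeroSum A x s := by
  classical
  obtain ⟨s, hs, hzero⟩ := exists_card_eq_of_flexible (IsWeightedZeroSum.empty A _)
    (fun _ _ => IsWeightedZeroSum.union) hcard (fun _ => hD.exists_subset _) hflex hT
  exact ⟨s, hs, hzero.of_sub hg (by rw [hs, hN])⟩

theorem exists_isWeightedZeroSum_of_popular {x : ι → G} {g : G} (hA : A.Nonempty)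
    (hN : ∀ g : G, N • g = 0) (hcard : Fintype.card ι + 1 = N + D) (hD : IsDavenportBound A G D)
    (hg : g ∈ constSubgroup A ⊥) {T : Finset ι} (hTg : ∀ i ∈ T, ∀ a ∈ A, a • x i = a • g)
    (hT : D ≤ T.card + 1) : ∃ s : Finset ι, s.card = N ∧ IsWeightedZeroSum A x s := by
  obtain ⟨a, ha⟩ := hA
  refine exists_isWeightedZeroSum_of_flexible hN hcard hD hg (fun j hj => ?_) hT
  obtain ⟨u, hu, hucard⟩ := Finset.exists_subset_card_eq hj
  refine ⟨u, hu, hucard, fun _ => a, fun _ _ => ha, Finset.sum_eq_zero fun i hi => ?_⟩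
  rw [smul_sub, hTg i (hu hi) a ha, sub_self]

theorem exists_isWeightedZeroSum_of_card_add_card_varying_le [Finite G] {x : ι → G} {a : ℤ}
    (ha : a ∈ A) (hN : ∀ g : G, N • g = 0) (hcard : Fintype.card ι + 1 = N + D)
    (hD : IsDavenportBound A G D)
    (hvar : Nat.card ((constSubgroup A (⊥ : AddSubgroup G)).map (zsmulAddGroupHom a)) +
      (varying ⊥ (weighted A x) Finset.univ).card ≤ N) :
    ∃ s : Finset ι, s.card = N ∧ IsWeightedZeroSum A x s := by
  classical
  set K := (constSubgroup A (⊥ : AddSubgroup G)).map (zsmulAddGroupHom a)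
  set I : Finset ι := (varying ⊥ (weighted A x) Finset.univ)ᶜ
  have hI : ∀ i ∈ I, x i ∈ constSubgroup A ⊥ := fun i hi => by
    simpa [I, mem_varying, isConstMod_weighted] using hi
  have hIcard : I.card + (varying ⊥ (weighted A x) Finset.univ).card =
      Fintype.card ι := Finset.card_compl_add_card _
  have hKpos : 0 < Nat.card K := Nat.card_pos
  have hDpos := hD.pos
  obtain ⟨i₀, hi₀, hmax⟩ := Finset.exists_max_image I
    (fun i => {k ∈ I | a • x k = a • x i}.card) (Finset.card_pos.1 (by omega))
  let f : ι → G := fun i => a • (x i - x i₀)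
  have hfiber : ∀ g, {i ∈ I | f i = g}.card ≤ {i ∈ I | f i = 0}.card := fun g => by
    rcases {i ∈ I | f i = g}.eq_empty_or_nonempty with hempty | ⟨k, hk⟩
    · simp [hempty]
    obtain ⟨hkI, rfl⟩ := Finset.mem_filter.1 hk
    simpa [f, smul_sub, sub_eq_zero] using hmax k hkI
  obtain ⟨T, -, hTcard, hTflex⟩ := exists_flexible_sum_eq_zero (f := f) (I := I) (K := K)
    (fun i hi => AddSubgroup.mem_map_of_mem _ (sub_mem (hI i hi) (hI i₀ hi₀)))
    ⟨i₀, by simpa [f] using hi₀⟩ hfiber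
  refine exists_isWeightedZeroSum_of_flexible hN hcard hD (hI i₀ hi₀) (T := T) (fun j hj => ?_)
    (by omega)
  obtain ⟨u, huT, hu, hsum⟩ := hTflex j hj
  exact ⟨u, huT, hu, fun _ => a, fun _ _ => ha, hsum⟩

end WeightedSums

section ConstSubgroup

variable {ι G : Type*} [AddCommGroup G] {A : Set ℤ}

/-- The differences of the weights generate a cyclic group. -/
theorem exists_constSubgroup_eq_comap (A : Set ℤ) (G : Type*) [AddCommGroup G] :
    ∃ f : G →+ G, ∀ L : AddSubgroup G, constSubgroup A L = L.comap f := by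
  obtain ⟨d, hd⟩ := Int.subgroup_cyclic (AddSubgroup.closure (Set.image2 (· - ·) A A))
  refine ⟨zsmulAddGroupHom d, fun L => AddSubgroup.ext fun g => ?_⟩
  have hle : AddSubgroup.closure (Set.image2 (· - ·) A A) ≤ L.comap (zmultiplesHom G g) ↔
      AddSubgroup.closure {d} ≤ L.comap (zmultiplesHom G g) := by rw [hd]
  rw [AddSubgroup.closure_le, AddSubgroup.closure_le, Set.image2_subset_iff,
    Set.singleton_subset_iff] at hle
  exact hle

theorem le_constSubgroup (L : AddSubgroup G) : L ≤ constSubgroup A L :=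
  fun _ hg a _ b _ => L.zsmul_mem hg (a - b)

theorem weighted_subset {U : AddSubgroup G} {x : ι → G} {i : ι} (hi : x i ∈ U) :
    weighted A x i ⊆ U := by
  rintro _ ⟨a, -, rfl⟩
  exact U.zsmul_mem hi a

theorem varying_weighted_eq_of_constSubgroup_eq {L M : AddSubgroup G}
    (h : constSubgroup A L = constSubgroup A M) (x : ι → G) (s : Finset ι) :
    varying L (weighted A x) s = varying M (weighted A x) s := by
  ext i
  simp only [mem_varying, isConstMod_weighted, h]

theorem index_eq_index_constSubgroup_mul [Finite G] {f : G →+ G}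
    (hf : ∀ L, constSubgroup A L = L.comap f) {L : AddSubgroup G} (hL : L ≤ f.range) :
    L.index = (constSubgroup A L).index * Nat.card (constSubgroup A (⊥ : AddSubgroup G)) := by
  rw [hf, hf, AddMonoidHom.comap_bot, AddSubgroup.index_comap, ← AddSubgroup.index_range,
    AddSubgroup.relIndex_mul_index hL]

theorem relIndex_constSubgroup [Finite G] {f : G →+ G} (hf : ∀ L, constSubgroup A L = L.comap f)
    {L : AddSubgroup G} (hL : L ≤ f.range) :
    L.relIndex (constSubgroup A L) = Nat.card (constSubgroup A (⊥ : AddSubgroup G)) := by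
  have hrel := AddSubgroup.relIndex_mul_index (le_constSubgroup (A := A) L)
  rw [index_eq_index_constSubgroup_mul hf hL, mul_comm] at hrel
  exact Nat.eq_of_mul_eq_mul_left (Nat.pos_of_ne_zero AddSubgroup.index_ne_zero_of_finite) hrel

theorem varying_weighted_eq_empty {L : AddSubgroup G} (h : constSubgroup A L = ⊤) (x : ι → G)
    (s : Finset ι) : varying L (weighted A x) s = ∅ := by
  ext i
  simp [mem_varying, isConstMod_weighted, h]

theorem two_mul_index_le_card [Finite G] {M : AddSubgroup G} (hM : M ≠ ⊥) :
    2 * M.index ≤ Nat.card G := by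
  rw [← M.card_mul_index]
  exact Nat.mul_le_mul_right _ ((AddSubgroup.one_lt_card_iff_ne_bot M).2 hM)

theorem two_mul_card_le_card [Finite G] {M : AddSubgroup G} (hM : M ≠ ⊤) :
    2 * Nat.card M ≤ Nat.card G := by
  rw [← M.index_mul_card]
  have := mt AddSubgroup.index_eq_one.1 hM
  have : M.index ≠ 0 := AddSubgroup.index_ne_zero_of_finite
  exact Nat.mul_le_mul_right _ (by omega)

variable [Finite G] [Fintype ι] {x : ι → G} {L : AddSubgroup G}

theorem le_range_of_minimal_isPoor {f : G →+ G} (hf : ∀ L, constSubgroup A L = L.comap f)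
    (ht : Nat.card G + 1 ≤ (varying ⊥ (weighted A x) Finset.univ).card +
      Nat.card (constSubgroup A (⊥ : AddSubgroup G)))
    (hL : Minimal (fun L => L ≠ ⊥ ∧ IsPoor (weighted A x) Finset.univ L) L) :
    L ≤ f.range := by
  have hconst : constSubgroup A (L ⊓ f.range) = constSubgroup A L := by
    ext g
    simp [hf]
  have hvar := varying_weighted_eq_of_constSubgroup_eq hconst x Finset.univ
  by_cases hbot : L ⊓ f.range = ⊥
  · rw [hbot] at hvar hconst
    have hpoor := hL.prop.2
    have hindex := two_mul_index_le_card hL.prop.1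
    rw [IsPoor, ← hvar] at hpoor
    by_cases htop : constSubgroup A (⊥ : AddSubgroup G) = ⊤
    · simp [varying_weighted_eq_empty htop, htop] at ht
    · have := two_mul_card_le_card htop
      omega
  · refine (hL.le_of_le ⟨hbot, ?_⟩ inf_le_left).trans inf_le_right
    rw [IsPoor, hvar]
    exact hL.prop.2.trans (AddSubgroup.index_antitone inf_le_left)

theorem two_mul_card_constSubgroup_add_card_varying_le {f : G →+ G}
    (hf : ∀ L, constSubgroup A L = L.comap f) (hrange : L ≤ f.range)
    (hL : IsPoor (weighted A x) Finset.univ L) :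
    2 * Nat.card (constSubgroup A (⊥ : AddSubgroup G)) +
      (varying L (weighted A x) Finset.univ).card ≤ 2 * L.index := by
  have hindex := index_eq_index_constSubgroup_mul hf hrange
  by_cases htop : constSubgroup A L = ⊤
  · rw [htop, AddSubgroup.index_top, one_mul] at hindex
    rw [varying_weighted_eq_empty htop, Finset.card_empty, hindex, add_zero]
  · have hne_one := mt AddSubgroup.index_eq_one.1 htop
    have hne_zero : (constSubgroup A L).index ≠ 0 := AddSubgroup.index_ne_zero_of_finite
    have hle := Nat.mul_le_mul_right (Nat.card (constSubgroup A (⊥ : AddSubgroup G)))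
      (show 2 ≤ (constSubgroup A L).index by omega)
    rw [IsPoor] at hL
    omega

/-- In a minimal nontrivial poor `L`, the sets that do not vary modulo `L` consist of multiples of
elements of `constSubgroup A L`, which makes the exchange down to `⊥` cheap. -/
theorem eq_bot_of_isPoor (hA : A.Nonempty) (hcard : Nat.card G ≤ Fintype.card ι)
    (hpoor : IsPoor (weighted A x) Finset.univ ⊥)
    (ht : Nat.card G + 1 ≤ (varying ⊥ (weighted A x) Finset.univ).card +
      Nat.card (constSubgroup A (⊥ : AddSubgroup G)))
    (hmeets : ∀ L : AddSubgroup G, L ≠ ⊥ → ∃ s : Finset ι, s.card = Nat.card G ∧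
      Meets (weighted A x) L s)
    (hbot : ∀ s : Finset ι, s.card = Nat.card G → ¬Meets (weighted A x) ⊥ s)
    (hL : IsPoor (weighted A x) Finset.univ L) : L = ⊥ := by
  by_contra hLbot
  obtain ⟨L, hmin⟩ := exists_minimal_of_wellFoundedLT
    (fun L => L ≠ ⊥ ∧ IsPoor (weighted A x) Finset.univ L) ⟨L, hLbot, hL⟩
  obtain ⟨⟨hLbot, hL⟩, -⟩ := id hmin
  obtain ⟨f, hf⟩ := exists_constSubgroup_eq_comap A G
  have hrange := le_range_of_minimal_isPoor hf ht hmin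
  rw [IsPoor, AddSubgroup.index_bot] at hpoor
  obtain ⟨S, hVS, -, hS⟩ := Finset.exists_subsuperset_card_eq
    (varying ⊥ (weighted A x) Finset.univ).subset_univ
    (show _ ≤ Nat.card G by omega) hcard
  rw [← hS] at hmeets hbot
  obtain ⟨M, hML, hM⟩ := exists_lt_card_varying_add_three_le (weighted_nonempty hA x)
    (hmeets L hLbot) hbot
  simp only [varying_eq_varying_univ hVS] at hM
  have hMbot : M = ⊥ := by
    by_contra hMbot
    have hMpoor := hL.of_lt hML (by simpa using hM ⊤ fun i _ => Set.subset_univ _)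
    exact hML.not_ge (hmin.le_of_le ⟨hMbot, hMpoor⟩ hML.le)
  have hcount := hM (constSubgroup A L) fun i hi => weighted_subset <| isConstMod_weighted.1 <| by
    by_contra hvar
    exact hvar (hi (hVS (varying_anti bot_le _ _ (mem_varying.2 ⟨Finset.mem_univ i, hvar⟩))))
  rw [hMbot, AddSubgroup.relIndex_bot_left, relIndex_constSubgroup hf hrange] at hcount
  have hle := two_mul_card_constSubgroup_add_card_varying_le hf hrange hL
  have hcardL := (AddSubgroup.one_lt_card_iff_ne_bot L).2 hLbot
  rw [IsPoor] at hL
  obtain ⟨a, ha⟩ : ∃ a, Nat.card L = a + 2 := ⟨Nat.card L - 2, by omega⟩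
  obtain ⟨b, hb⟩ : ∃ b, L.index = b + 2 := ⟨L.index - 2, by omega⟩
  have hG := L.card_mul_index
  rw [ha, hb] at hG
  nlinarith [Nat.zero_le (a * b)]

end ConstSubgroup

section Merging

variable {ι : Type*}

theorem card_fiber_add_le_card_erase_erase [DecidableEq ι] {κ : Type*} [DecidableEq κ]
    {f : ι → κ} {Y : Finset ι} {q : ℕ} (hq : 2 * (q + 1) ≤ Y.card)
    (hfiber : ∀ v, {i ∈ Y | f i = v}.card + (q + 1) ≤ Y.card) {y z : ι} (hy : y ∈ Y) (hz : z ∈ Y)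
    (hzy : f z ≠ f y) (hmax : ∀ i ∈ Y, {k ∈ Y | f k = f i}.card ≤ {k ∈ Y | f k = f y}.card)
    (v : κ) : {i ∈ (Y.erase y).erase z | f i = v}.card + q ≤ ((Y.erase y).erase z).card := by
  have hzy' : z ∈ Y.erase y := Finset.mem_erase.2 ⟨fun h => hzy (congrArg f h), hz⟩
  have hcardz := Finset.card_erase_add_one hzy'
  have hcardy := Finset.card_erase_add_one hy
  have herase : (Y.erase y).erase z ⊆ Y := (Finset.erase_subset _ _).trans (Finset.erase_subset _ _)
  have hremoved : ∀ w ∈ Y, w = y ∨ w = z → {i ∈ (Y.erase y).erase z | f i = f w}.card <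
      {i ∈ Y | f i = f w}.card := fun w hw hwyz => Finset.card_lt_card <|
    (Finset.ssubset_iff_of_subset (Finset.filter_subset_filter _ herase)).2
      ⟨w, by simpa using hw, by rcases hwyz with rfl | rfl <;> simp⟩
  by_cases hv : ∃ w ∈ Y, (w = y ∨ w = z) ∧ f w = v
  · obtain ⟨w, hw, hwyz, rfl⟩ := hv
    have := hremoved w hw hwyz
    have := hfiber (f w)
    omega
  rcases {i ∈ (Y.erase y).erase z | f i = v}.eq_empty_or_nonempty with hempty | ⟨k, hk⟩
  · rw [hempty, Finset.card_empty]
    omega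
  obtain ⟨hkY, rfl⟩ := Finset.mem_filter.1 hk
  have hky : f y ≠ f k := fun h => hv ⟨y, hy, .inl rfl, h⟩
  have hkz : f z ≠ f k := fun h => hv ⟨z, hz, .inr rfl, h⟩
  have hdisj : Disjoint {i ∈ Y | f i = f k} {i ∈ Y | f i = f y} :=
    Finset.disjoint_filter.2 fun i _ hik hiy => hky (hiy.symm.trans hik)
  have hsub : {i ∈ Y | f i = f k} ∪ {i ∈ Y | f i = f y} ⊆ Y.erase z := by
    intro i hi
    rw [Finset.mem_union, Finset.mem_filter, Finset.mem_filter, ← and_or_left] at hi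
    refine Finset.mem_erase.2 ⟨?_, hi.1⟩
    rintro rfl
    exact hi.2.elim hkz hzy
  have hle := Finset.card_le_card hsub
  rw [Finset.card_union_of_disjoint hdisj] at hle
  have := Finset.card_erase_add_one hz
  have := hmax k (herase hkY)
  have := Finset.card_le_card (Finset.filter_subset_filter (fun i => f i = f k) herase)
  omega

theorem exists_matching {κ : Type*} [DecidableEq κ] (f : ι → κ) {Y : Finset ι} {q : ℕ}
    (hq : 2 * q ≤ Y.card) (hfiber : ∀ v, {i ∈ Y | f i = v}.card + q ≤ Y.card) :
    ∃ U ⊆ Y, ∃ σ : ι → ι, U.card = q ∧ (∀ i ∉ U, σ i = i) ∧ (∀ i ∈ U, σ i ∈ Y ∧ σ i ∉ U) ∧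
      Set.InjOn σ U ∧ ∀ i ∈ U, f (σ i) ≠ f i := by
  classical
  induction q generalizing Y with
  | zero => exact ⟨∅, by simp, id, by simp⟩
  | succ q ih =>
    obtain ⟨y, hy, hmax⟩ := Y.exists_max_image (fun i => {k ∈ Y | f k = f i}.card)
      (Finset.card_pos.1 (by omega))
    obtain ⟨z, hz, hzy⟩ : ∃ z ∈ Y, f z ≠ f y := by
      by_contra! hall
      have := hfiber (f y)
      rw [Finset.filter_true_of_mem hall] at this
      omega
    have hzy' : z ≠ y := fun h => hzy (congrArg f h)
    have hcard : ((Y.erase y).erase z).card + 2 = Y.card := by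
      have h₁ := Finset.card_erase_add_one hy
      have h₂ := Finset.card_erase_add_one (Finset.mem_erase.2 ⟨hzy', hz⟩)
      omega
    obtain ⟨U, hU, σ, hUcard, hfix, hσ, hinj, hne⟩ := ih (by omega)
      (card_fiber_add_le_card_erase_erase hq hfiber hy hz hzy hmax)
    have hUY : U ⊆ Y := hU.trans ((Finset.erase_subset _ _).trans (Finset.erase_subset _ _))
    have hyU : y ∉ U := fun h => by simpa using hU h
    have hzU : z ∉ U := fun h => by simpa using hU h
    have hyσ : ∀ i ∈ U, Function.update σ y z i = σ i := fun i hi =>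
      Function.update_of_ne (ne_of_mem_of_not_mem hi hyU) _ _
    refine ⟨insert y U, Finset.insert_subset hy hUY, Function.update σ y z,
      by rw [Finset.card_insert_of_notMem hyU, hUcard], fun i hi => ?_, ?_, ?_, ?_⟩
    · rw [Finset.mem_insert, not_or] at hi
      rw [Function.update_of_ne hi.1, hfix i hi.2]
    · refine (Finset.forall_mem_insert _ _ _).2 ⟨by simp [hz, hzy', hzU], fun i hi => ?_⟩
      have hσi := (hσ i hi).1
      simp only [Finset.mem_erase] at hσi
      simpa [hyσ i hi, hσi] using (hσ i hi).2
    · rw [Finset.coe_insert, Set.injOn_insert (by simpa using hyU)]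
      refine ⟨fun i hi j hj => ?_, ?_⟩
      · rw [hyσ i hi, hyσ j hj]
        exact hinj hi hj
      · rintro ⟨i, hi, hiz⟩
        rw [hyσ i hi, Function.update_self] at hiz
        simpa [hiz] using (hσ i hi).1
    · refine (Finset.forall_mem_insert _ _ _).2 ⟨by simpa using hzy, fun i hi => ?_⟩
      rw [hyσ i hi]
      exact hne i hi

theorem Meets.of_merge {G : Type*} [AddCommGroup G] {B : ι → Set G} {L : AddSubgroup G}
    {S U : Finset ι} {σ : ι → ι} (hfix : ∀ i ∉ U, σ i = i) (hσ : ∀ i ∈ U, σ i ∉ S)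
    (hinj : Set.InjOn σ U) (h : Meets (fun i => B i ∪ B (σ i)) L S) :
    ∃ s : Finset ι, s.card = S.card ∧ Meets B L s := by
  classical
  obtain ⟨b, hb, hsum⟩ := h
  rcases isEmpty_or_nonempty ι with hι | hι
  · exact ⟨S, rfl, b, isEmptyElim, hsum⟩
  have hchoice : ∀ i ∈ S, ∃ j, (j = i ∨ i ∈ U ∧ j = σ i) ∧ b i ∈ B j := fun i hi => by
    rcases hb i hi with h | h
    · exact ⟨i, .inl rfl, h⟩
    by_cases hiU : i ∈ U
    · exact ⟨σ i, .inr ⟨hiU, rfl⟩, h⟩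
    · exact ⟨i, .inl rfl, by rwa [hfix i hiU] at h⟩
  choose! τ hτ hbτ using hchoice
  have hτinj : Set.InjOn τ S := by
    intro i hi j hj hij
    rcases hτ i hi with hτi | ⟨hiU, hτi⟩ <;> rcases hτ j hj with hτj | ⟨hjU, hτj⟩ <;>
      rw [hτi, hτj] at hij
    · exact hij
    · exact absurd (hij ▸ hi) (hσ j hjU)
    · exact absurd (hij ▸ hj) (hσ i hiU)
    · exact hinj hiU hjU hij
  refine ⟨S.image τ, Finset.card_image_of_injOn hτinj, b ∘ Function.invFunOn τ S, ?_, ?_⟩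
  · simp only [Finset.forall_mem_image, Function.comp_apply]
    intro i hi
    rw [hτinj.leftInvOn_invFunOn hi]
    exact hbτ i hi
  · rw [Finset.sum_image hτinj]
    convert hsum using 1
    refine Finset.sum_congr rfl fun i hi => ?_
    rw [Function.comp_apply, hτinj.leftInvOn_invFunOn hi]

variable {G : Type*} [AddCommGroup G]

theorem exists_meets_bot_of_merge [Finite G] [Fintype ι] [DecidableEq ι] {B : ι → Set G}
    {S U : Finset ι} {σ : ι → ι} (hB : ∀ i, (B i).Nonempty)
    (hpoor : ∀ L, IsPoor B Finset.univ L → L = ⊥) (hfix : ∀ i ∉ U, σ i = i)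
    (hσ : ∀ i ∈ U, σ i ∉ S) (hinj : Set.InjOn σ U)
    (hne : ∀ i ∈ U, ¬IsConstMod ⊥ (B i ∪ B (σ i)))
    (hS : varying ⊥ B Finset.univ ∪ U ⊆ S)
    (hcard : Nat.card G ≤ (varying ⊥ B Finset.univ ∪ U).card + 1) :
    ∃ s : Finset ι, s.card = S.card ∧ Meets B ⊥ s := by
  by_contra! hcon
  have hzero : (0 : G) ∉ ∑ i ∈ S, (B i ∪ B (σ i)) := fun h => by
    obtain ⟨s, hs, hmeets⟩ := Meets.of_merge hfix hσ hinj (meets_bot.2 h)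
    exact hcon s hs hmeets
  obtain ⟨M, -, hM⟩ := exists_card_varying_add_two_le_relIndex (L := ⊤)
    (fun i _ => (hB i).inl) (Set.subset_univ _) hzero
  rw [AddSubgroup.relIndex_top_right] at hM
  have hmono : ∀ {L : AddSubgroup G} {i}, ¬IsConstMod L (B i) → ¬IsConstMod L (B i ∪ B (σ i)) :=
    fun h h' => h fun a ha b hb => h' a (.inl ha) b (.inl hb)
  have hvar : ∀ L, varying L B Finset.univ ⊆ varying L (fun i => B i ∪ B (σ i)) S := fun L i hi =>
    mem_varying.2 ⟨hS (Finset.mem_union_left _ (varying_anti bot_le _ _ hi)),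
      hmono (mem_varying.1 hi).2⟩
  obtain rfl := hpoor M ((Nat.add_le_add_right (Finset.card_le_card (hvar M)) 2).trans hM)
  have hsub : varying ⊥ B Finset.univ ∪ U ⊆ varying ⊥ (fun i => B i ∪ B (σ i)) S :=
    Finset.union_subset (hvar ⊥) fun i hi =>
      mem_varying.2 ⟨hS (Finset.mem_union_right _ hi), hne i hi⟩
  have := Finset.card_le_card hsub
  rw [AddSubgroup.index_bot] at hM
  omega

/-- Merging `q` pairs of constant sets makes enough sets vary. -/
theorem exists_meets_bot_of_card_fiber_add_le [Finite G] [Fintype ι] [DecidableEq ι]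
    [DecidableEq G] {B : ι → Set G} {c : ι → G} {q : ℕ} (hc : ∀ i, c i ∈ B i)
    (hpoor : ∀ L, IsPoor B Finset.univ L → L = ⊥)
    (hq : (varying ⊥ B Finset.univ).card + q + 1 = Nat.card G)
    (hcard : Nat.card G + q ≤ Fintype.card ι)
    (hfiber : ∀ v, {i ∈ (varying ⊥ B Finset.univ)ᶜ | c i = v}.card + q ≤
      (varying ⊥ B Finset.univ)ᶜ.card) :
    ∃ s : Finset ι, s.card = Nat.card G ∧ Meets B ⊥ s := by
  have hV := Finset.card_compl_add_card (varying ⊥ B Finset.univ)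
  obtain ⟨U, hU, σ, rfl, hfix, hσ, hinj, hne⟩ := exists_matching c (by omega) hfiber
  have hVU : (varying ⊥ B Finset.univ ∪ U).card = (varying ⊥ B Finset.univ).card + U.card :=
    Finset.card_union_of_disjoint (Finset.disjoint_of_subset_right hU disjoint_compl_right)
  have hVUσ : varying ⊥ B Finset.univ ∪ U ⊆ (U.image σ)ᶜ := by
    intro i hi
    simp only [Finset.mem_compl, Finset.mem_image, not_exists, not_and]
    rintro k hk rfl
    exact (Finset.mem_union.1 hi).elim (Finset.mem_compl.1 (hσ k hk).1) (hσ k hk).2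
  obtain ⟨S, hVUS, hSσ, hS⟩ := Finset.exists_subsuperset_card_eq hVUσ
    (show _ ≤ Nat.card G by omega) (by
      rw [Finset.card_compl, Finset.card_image_of_injOn hinj]
      omega)
  rw [← hS]
  refine exists_meets_bot_of_merge (fun i => ⟨c i, hc i⟩) hpoor hfix (fun i hi hiS => ?_) hinj
    (fun i hi hconst => hne i hi ?_) hVUS (by omega)
  · exact Finset.mem_compl.1 (hSσ hiS) (Finset.mem_image_of_mem σ hi)
  · simpa [sub_eq_zero] using hconst (c (σ i)) (.inr (hc _)) (c i) (.inl (hc i))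

end Merging

section CyclicGroups

variable {ι G : Type*} [AddCommGroup G] {A : Set ℤ} {N D : ℕ}

theorem IsDavenportBound.addOrderOf_smul_le (hD : IsDavenportBound A G D) {g : G}
    (hg : g ∈ constSubgroup A ⊥) {a : ℤ} (ha : a ∈ A) : addOrderOf (a • g) ≤ D := by
  obtain ⟨s, hs, w, hw, hsum⟩ := hD fun _ => g
  rw [Finset.sum_congr rfl fun i hi => smul_eq_of_mem_constSubgroup_bot hg (hw i hi) ha,
    Finset.sum_const] at hsum
  exact (Nat.le_of_dvd hs.card_pos (addOrderOf_dvd_of_nsmul_eq_zero hsum)).trans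
    (by simpa using s.card_le_univ)

theorem IsDavenportBound.card_map_le [IsAddCyclic G] (hD : IsDavenportBound A G D) {a : ℤ}
    (ha : a ∈ A) :
    Nat.card ((constSubgroup A (⊥ : AddSubgroup G)).map (zsmulAddGroupHom a)) ≤ D := by
  obtain ⟨y, hy⟩ := AddSubgroup.isAddCyclic_iff_exists_zmultiples_eq_top
    ((constSubgroup A (⊥ : AddSubgroup G)).map (zsmulAddGroupHom a)) |>.1 inferInstance
  have hyK := AddSubgroup.mem_zmultiples y
  rw [hy] at hyK
  obtain ⟨g, hg, rfl⟩ := hyK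
  rw [← hy, Nat.card_zmultiples]
  exact hD.addOrderOf_smul_le hg ha

theorem card_fiber_add_two_le [Fintype ι] [DecidableEq ι] [DecidableEq G] {x : ι → G}
    (hcon : ∀ s : Finset ι, s.card = N → ¬IsWeightedZeroSum A x s) {a : ℤ} (ha : a ∈ A)
    (hN : ∀ g : G, N • g = 0) (hcard : Fintype.card ι + 1 = N + D) (hD : IsDavenportBound A G D)
    (hD2 : 2 ≤ D) (v : G) :
    {i ∈ (varying ⊥ (weighted A x) Finset.univ)ᶜ | a • x i = v}.card + 2 ≤ D := by
  by_contra! hlt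
  obtain ⟨i₀, hi₀⟩ := Finset.card_pos.1 (show 0 <
    {i ∈ (varying ⊥ (weighted A x) Finset.univ)ᶜ | a • x i = v}.card by omega)
  have hconst : ∀ i ∈ (varying ⊥ (weighted A x) Finset.univ)ᶜ, x i ∈ constSubgroup A ⊥ :=
    fun i hi => by simpa [mem_varying, isConstMod_weighted] using hi
  obtain ⟨hi₀V, rfl⟩ := Finset.mem_filter.1 hi₀
  have hpopular : ∀ i ∈ {i ∈ (varying ⊥ (weighted A x) Finset.univ)ᶜ | a • x i = a • x i₀},
      ∀ b ∈ A, b • x i = b • x i₀ := fun i hi b hb => by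
    obtain ⟨hiV, hia⟩ := Finset.mem_filter.1 hi
    rw [smul_eq_of_mem_constSubgroup_bot (hconst i hiV) hb ha, hia,
      smul_eq_of_mem_constSubgroup_bot (hconst i₀ hi₀V) ha hb]
  obtain ⟨s, hs, hzero⟩ := exists_isWeightedZeroSum_of_popular ⟨a, ha⟩ hN hcard hD
    (hconst i₀ hi₀V) hpopular (Nat.le_of_lt_succ hlt)
  exact hcon s hs hzero

theorem exists_isWeightedZeroSum_of_meets [Finite G] [IsAddCyclic G] [Fintype ι] {x : ι → G}
    (hA : A.Nonempty) (hNpos : 0 < N) (hdvd : Nat.card G ∣ N)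
    (hcard : Fintype.card ι + 1 = N + D) (hD : IsDavenportBound A G D)
    (hmeets : ∀ L : AddSubgroup G, L ≠ ⊥ →
      ∃ s : Finset ι, s.card = N ∧ Meets (weighted A x) L s) :
    ∃ s : Finset ι, s.card = N ∧ IsWeightedZeroSum A x s := by
  classical
  by_contra! hcon
  have hbot : ∀ s : Finset ι, s.card = N → ¬Meets (weighted A x) ⊥ s := fun s hs h =>
    hcon s hs (isWeightedZeroSum_iff_meets.2 h)
  have ⟨a, ha⟩ := hA
  have hN : ∀ g : G, N • g = 0 := fun g =>
    addOrderOf_dvd_iff_nsmul_eq_zero.1 ((addOrderOf_dvd_natCard g).trans hdvd)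
  have hDpos := hD.pos
  have hGN := Nat.le_of_dvd hNpos hdvd
  have hpoor := isPoor_bot (weighted_nonempty hA x) (by omega) (by omega) hmeets hbot
  set V := varying ⊥ (weighted A x) Finset.univ
  set K := (constSubgroup A (⊥ : AddSubgroup G)).map (zsmulAddGroupHom a)
  have hVcard : V.card + 2 ≤ Nat.card G := by rwa [IsPoor, AddSubgroup.index_bot] at hpoor
  have hNlt : N < Nat.card K + V.card := not_le.1 fun hle => by
    obtain ⟨s, hs, hzero⟩ :=
      exists_isWeightedZeroSum_of_card_add_card_varying_le ha hN hcard hD hle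
    exact hcon s hs hzero
  have hKD : Nat.card K ≤ D := hD.card_map_le ha
  have hKG : Nat.card K ≤ Nat.card G := K.card_le_card_addGroup
  have hKconst : Nat.card K ≤ Nat.card (constSubgroup A (⊥ : AddSubgroup G)) :=
    Nat.le_of_dvd Nat.card_pos (AddSubgroup.card_map_dvd _ _)
  obtain rfl : N = Nat.card G := by
    obtain ⟨c, rfl⟩ := hdvd
    have hc : c < 2 := by nlinarith
    interval_cases c <;> omega
  obtain ⟨q, hq⟩ := Nat.exists_eq_add_of_le (show V.card + 1 ≤ Nat.card G by omega)
  have hVcompl : Vᶜ.card + V.card = Fintype.card ι := Finset.card_compl_add_card V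
  obtain ⟨s, hs, hzero⟩ := exists_meets_bot_of_card_fiber_add_le (B := weighted A x)
    (c := fun i => a • x i) (q := q) (fun i => ⟨a, ha, rfl⟩)
    (fun L => eq_bot_of_isPoor hA (by omega) hpoor (show _ ≤ V.card + _ by omega) hmeets hbot)
    (show V.card + q + 1 = _ by omega) (by omega) fun v => by
      have := card_fiber_add_two_le hcon ha hN hcard hD (by omega) v
      change _ ≤ Vᶜ.card
      omega
  exact hbot s hs hzero

end CyclicGroups

section WeightedEGZ

variable {ι G : Type*} [AddCommGroup G] {A : Set ℤ} {N D : ℕ}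

/-- Passing to the quotient by a maximal subgroup missed by all weighted sums of length `N` makes
every nontrivial subgroup met. -/
theorem exists_isWeightedZeroSum_of_isDavenportBound [Finite G] [IsAddCyclic G] [Fintype ι]
    (hA : A.Nonempty) (hN : 0 < N) (hdvd : Nat.card G ∣ N) (hcard : Fintype.card ι + 1 = N + D)
    (hD : IsDavenportBound A G D) (x : ι → G) :
    ∃ s : Finset ι, s.card = N ∧ IsWeightedZeroSum A x s := by
  by_contra! hcon
  obtain ⟨M, hM⟩ := exists_maximal_of_wellFoundedGT
    (fun M : AddSubgroup G => ∀ s : Finset ι, s.card = N → ¬Meets (weighted A x) M s)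
    ⟨⊥, fun s hs h => hcon s hs (isWeightedZeroSum_iff_meets.2 h)⟩
  let q := QuotientAddGroup.mk' M
  have hq : Function.Surjective q := QuotientAddGroup.mk'_surjective M
  have hker : (⊥ : AddSubgroup (G ⧸ M)).comap q = M := by
    rw [AddMonoidHom.comap_bot, QuotientAddGroup.ker_mk']
  have : IsAddCyclic (G ⧸ M) := isAddCyclic_of_surjective q hq
  obtain ⟨s, hs, hzero⟩ := exists_isWeightedZeroSum_of_meets (x := q ∘ x) hA hN
    ((AddSubgroup.card_dvd_of_surjective q hq).trans hdvd) hcard (hD.of_surjective hq)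
    fun L hL => by
      by_contra! hmiss
      simp only [weighted_comp, meets_image] at hmiss
      refine hL (AddSubgroup.comap_injective hq ?_)
      have hle := AddSubgroup.comap_mono (f := q) (bot_le : ⊥ ≤ L)
      rw [hker] at hle ⊢
      exact (hM.le_of_ge hmiss hle).antisymm hle
  rw [isWeightedZeroSum_iff_meets, weighted_comp, meets_image, hker] at hzero
  exact hM.prop s hs hzero

/-- A zero-sum of length `N` in a sequence padded with fewer than `N` zeros uses some of its
original terms. -/
theorem IsDavenportBound.of_forall_exists_card_eq {E M : ℕ}
    (hE : ∀ x : Fin E → G, ∃ s : Finset (Fin E), s.card = N ∧ IsWeightedZeroSum A x s)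
    (hED : E ≤ D + M) (hMN : M < N) : IsDavenportBound A G D := fun x => by
  obtain ⟨e⟩ : Nonempty (Fin E ↪ Fin D ⊕ Fin M) :=
    Function.Embedding.nonempty_of_card_le (by simpa using hED)
  obtain ⟨s, hs, hzero⟩ := hE (Sum.elim x 0 ∘ e)
  obtain ⟨w, hw, hsum⟩ := hzero.map
  have hcard := (s.map e).card_toLeft_add_card_toRight
  have hright := (s.map e).toRight.card_le_univ
  rw [Finset.card_map] at hcard
  rw [Fintype.card_fin] at hright
  rw [← (s.map e).toLeft_disjSum_toRight, Finset.sum_disjSum] at hsum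
  exact ⟨(s.map e).toLeft, Finset.card_pos.1 (by omega), w ∘ Sum.inl,
    fun i hi => hw _ (Finset.mem_toLeft.1 hi), by simpa using hsum⟩

end WeightedEGZ

theorem weighted_EGZ_eq_general {G : Type*} [AddCommGroup G] [Finite G] [IsAddCyclic G]
    {A : Set ℤ} (hA : A.Nonempty) {N D E : ℕ} (hN : 0 < N) (hdvd : Nat.card G ∣ N)
    (hD : IsLeast {k | IsDavenportBound A G k} D)
    (hE : IsLeast {k | ∀ x : Fin k → G, ∃ s : Finset (Fin k), s.card = N ∧ IsWeightedZeroSum A x s}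
      E) :
    E = D + N - 1 := by
  have hDpos : 0 < D := hD.1.pos
  apply le_antisymm
  · exact hE.2 fun x => exists_isWeightedZeroSum_of_isDavenportBound hA hN hdvd
      (by rw [Fintype.card_fin]; omega) hD.1 x
  · by_contra! hlt
    have := hD.2 (IsDavenportBound.of_forall_exists_card_eq (D := D - 1) (M := N - 1) hE.1
      (by omega) (by omega))
    omega

/-- For any nonempty finite set `A ⊆ ℤ` and positive integer `n`,
`E_A(n) = D_A(n) + n - 1`. -/
theorem weighted_EGZ_eq (n : ℕ) (hn : 0 < n) (A : Finset ℤ) (hA : A.Nonempty)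
    (D E : ℕ)
    (hD : IsLeast {k : ℕ | ∀ x : Fin k → ZMod n, ∃ (s : Finset (Fin k)) (w : Fin k → ℤ),
      s.Nonempty ∧ (∀ i ∈ s, w i ∈ A) ∧ ∑ i ∈ s, w i • x i = 0} D)
    (hE : IsLeast {k : ℕ | ∀ x : Fin k → ZMod n, ∃ (s : Finset (Fin k)) (w : Fin k → ℤ),
      s.card = n ∧ (∀ i ∈ s, w i ∈ A) ∧ ∑ i ∈ s, w i • x i = 0} E) :
    E = D + n - 1 := by
  have : NeZero n := ⟨hn.ne'⟩
  simp only [exists_and_left] at hD hE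
  exact weighted_EGZ_eq_general (G := ZMod n) hA hn (Nat.card_zmod n).dvd hD hE
end

section
/- Let G be a finite abelian group, A = (A_1,...,A_m) a sequence of finite nonempty subsets of G, and l ≤ m. Let Σ_l(A) be the set of all sums a_{i_1}+...+a_{i_l} with i_1 < ... < i_l and a_{i_j} ∈ A_{i_j}. Let H = stab(Σ_l(A)) be the stabilizer {h ∈ G : h + Σ_l(A) = Σ_l(A)}. If Σ_l(A) is nonempty, then |Σ_l(A)| ≥ |H| · (1 − l + Σ_{Q ∈ G/H} min{l, |{i : A_i ∩ Q ≠ ∅}|}). -/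
/-!
If two members `A p` and `A q` of the family are replaced by their union and their intersection,
then every sum obtained from the new family is a sum of the old one, and each element of `G` still
lies in the same number of members, whereas the number of members meeting a coset can only drop.
Repeating this either shrinks the set of sums or leads to a family in which `l` members contain all
the others; then Kneser's theorem for those `l` sets suffices.

When the set of sums shrinks to `C`, induction bounds `|C|`. The sums lost are recovered coset by
coset: a lost sum `x` has to use both `p` and `q`, so that exchanging these two members, together
with induction for the other `l - 2` summands, yields many sums in `x + K`. A descent on the
stabilizer, resting on Kemperman's theorem about unions, turns these local gains into the global
bound. Since the summands are then confined to prescribed cosets, the induction is run for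
families with a colour for each summand, and relative to a subgroup one of whose cosets contains
all the sums.
-/

namespace DeVosGoddynMohar

open Finset AddAction
open scoped Classical Pointwise

universe u

section Hull

variable {G : Type*} [AddCommGroup G] {A B : Finset G} {g x : G}

lemma mem_sum_finset {I : Type*} {s : Finset I} {F : I → Finset G} :
    x ∈ ∑ i ∈ s, F i ↔ ∃ f : I → G, (∀ i ∈ s, f i ∈ F i) ∧ ∑ i ∈ s, f i = x := by
  rw [← mem_coe, coe_sum, Set.mem_finsetSum]
  simp only [mem_coe, exists_prop]

lemma sub_mem_stabilizer_iff (h : g - x ∈ stabilizer G A) : g ∈ A ↔ x ∈ A := by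
  simpa using mem_stabilizer_finset.1 h x

lemma stabilizer_inf_le_stabilizer_union :
    stabilizer G A ⊓ stabilizer G B ≤ stabilizer G (A ∪ B) := by
  intro k hk
  obtain ⟨hA, hB⟩ := AddSubgroup.mem_inf.1 hk
  exact mem_stabilizer_finset.2 fun b ↦ by
    simp only [mem_union, mem_stabilizer_finset.1 hA, mem_stabilizer_finset.1 hB]

lemma stabilizer_le_stabilizer_add_left : stabilizer G A ≤ stabilizer G (A + B) := by
  refine fun k hk ↦ mem_stabilizer_iff.2 ?_
  rw [← vadd_add_assoc, mem_stabilizer_iff.1 hk]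

lemma stabilizer_le_stabilizer_add_right : stabilizer G B ≤ stabilizer G (A + B) :=
  add_comm A B ▸ stabilizer_le_stabilizer_add_left

lemma card_le_of_le_stabilizer {K : AddSubgroup G} (h : K ≤ stabilizer G A) (hA : A.Nonempty) :
    Nat.card K ≤ #A := by
  obtain ⟨x, hx⟩ := hA
  rw [← Nat.card_eq_finsetCard]
  exact Nat.card_le_card_of_injective
    (fun k : K ↦ ⟨k + x, (mem_stabilizer_finset.1 (h k.2) x).2 hx⟩)
    fun k k' hk ↦ Subtype.ext (add_left_injective x (congrArg Subtype.val hk))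

variable [Fintype G] {K D M : AddSubgroup G}

/-- The union of the cosets of `K` that meet `A`. -/
noncomputable def hull (K : AddSubgroup G) (A : Finset G) : Finset G :=
  A + (K : Set G).toFinset

lemma mem_hull : g ∈ hull K A ↔ ∃ a ∈ A, g - a ∈ K := by
  simp only [hull, mem_add, Set.mem_toFinset, SetLike.mem_coe]
  refine exists_congr fun a ↦ and_congr_right fun _ ↦ ⟨?_, fun h ↦ ⟨_, h, by abel⟩⟩
  rintro ⟨k, hk, rfl⟩
  simpa using hk

lemma mem_hull_singleton : g ∈ hull K {x} ↔ g - x ∈ K := by simp [mem_hull]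

lemma subset_hull : A ⊆ hull K A := fun a ha ↦ mem_hull.2 ⟨a, ha, by simp⟩

lemma hull_empty : hull K ∅ = ∅ := empty_add _

lemma hull_nonempty (hA : A.Nonempty) : (hull K A).Nonempty := hA.mono subset_hull

lemma hull_mono (hKM : K ≤ M) (hAB : A ⊆ B) : hull K A ⊆ hull M B :=
  add_subset_add hAB (Set.toFinset_subset_toFinset.2 hKM)

lemma hull_union : hull K (A ∪ B) = hull K A ∪ hull K B := union_add

lemma hull_hull (h : D ≤ K) : hull K (hull D A) = hull K A := by
  refine Subset.antisymm (fun g hg ↦ ?_) (hull_mono le_rfl subset_hull)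
  obtain ⟨b, hb, hgb⟩ := mem_hull.1 hg
  obtain ⟨a, ha, hba⟩ := mem_hull.1 hb
  exact mem_hull.2 ⟨a, ha, by simpa using K.add_mem hgb (h hba)⟩

lemma add_hull : A + hull K B = hull K (A + B) := (add_assoc _ _ _).symm

lemma hull_add_hull : hull K A + hull K B = hull K (A + B) := by
  rw [add_hull, add_comm, add_hull, hull_hull le_rfl, add_comm]

lemma mem_hull_congr (h : g - x ∈ K) : g ∈ hull K A ↔ x ∈ hull K A := by
  simp only [mem_hull]
  refine exists_congr fun a ↦ and_congr_right fun _ ↦ ?_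
  rw [← sub_add_sub_cancel g x a]
  exact K.add_mem_cancel_left h

lemma hull_singleton_congr (h : g - x ∈ K) : hull K {g} = hull K {x} := by
  ext y
  rw [mem_hull_singleton, mem_hull_singleton, ← sub_add_sub_cancel y g x,
    K.add_mem_cancel_right h]

lemma disjoint_hull_singleton (h : g - x ∉ K) : Disjoint (hull K {g}) (hull K {x}) := by
  refine disjoint_left.2 fun y hg hx ↦ h ?_
  rw [mem_hull_singleton] at hg hx
  simpa using K.sub_mem hx hg

lemma hull_subset_hull_singleton (h : D ≤ K) (hA : A ⊆ hull K {x}) : hull D A ⊆ hull K {x} :=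
  (hull_mono h hA).trans (hull_hull le_rfl).subset

lemma card_hull_singleton : #(hull K {x}) = Nat.card K := by
  rw [hull, singleton_add, card_vadd_finset, Set.toFinset_card, Nat.card_eq_fintype_card]
  rfl

lemma le_stabilizer_hull : K ≤ stabilizer G (hull K A) := fun k hk ↦
  mem_stabilizer_finset.2 fun g ↦ mem_hull_congr (by simpa using hk)

lemma hull_eq_self (h : K ≤ stabilizer G A) : hull K A = A := by
  refine Subset.antisymm (fun g hg ↦ ?_) subset_hull
  obtain ⟨a, ha, hga⟩ := mem_hull.1 hg
  exact (sub_mem_stabilizer_iff (h hga)).2 ha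

lemma hull_bot : hull ⊥ A = A := hull_eq_self bot_le

lemma hull_singleton_subset (h : K ≤ stabilizer G A) (hx : x ∈ A) : hull K {x} ⊆ A :=
  (hull_mono le_rfl (singleton_subset_iff.2 hx)).trans (hull_eq_self h).subset

lemma stabilizer_le_of_subset (hA : A.Nonempty) (h : A ⊆ hull K {x}) : stabilizer G A ≤ K := by
  intro k hk
  obtain ⟨a, ha⟩ := hA
  have hka := mem_hull_singleton.1 (h ((mem_stabilizer_finset.1 hk a).2 ha))
  simpa [add_sub_assoc] using K.sub_mem hka (mem_hull_singleton.1 (h ha))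

lemma stabilizer_hull_eq (h : stabilizer G (A + B) = D) : stabilizer G (hull D A) = D := by
  refine le_antisymm ?_ le_stabilizer_hull
  have hle : stabilizer G (hull D A) ≤ stabilizer G (B + hull D A) :=
    stabilizer_le_stabilizer_add_right
  rwa [add_hull, add_comm, hull_eq_self h.ge, h] at hle

end Hull

section Kemperman

variable {G : Type*} [AddCommGroup G]

lemma card_mul_card_le_card_inf_mul_card_add [Finite G] {H₁ H₂ : AddSubgroup G}
    {V U : Finset G} (hV : ∀ v ∈ V, v ∈ H₁) (hU : ∀ u ∈ U, u ∈ H₂) :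
    #V * #U ≤ Nat.card (H₁ ⊓ H₂ : AddSubgroup G) * #(V + U) := by
  cases nonempty_fintype G
  rw [← card_product]
  refine card_le_mul_card_image_of_maps_to (f := fun p : G × G ↦ p.1 + p.2)
    (fun p hp ↦ add_mem_add (mem_product.1 hp).1 (mem_product.1 hp).2) _ fun g _ ↦ ?_
  obtain h | ⟨p, hp⟩ := ({q ∈ V ×ˢ U | q.1 + q.2 = g}).eq_empty_or_nonempty
  · simp [h]
  obtain ⟨hpVU, rfl⟩ := mem_filter.1 hp
  rw [← card_hull_singleton (x := p.1)]
  refine card_le_card_of_injOn Prod.fst (fun q hq ↦ ?_) fun q hq r hr h ↦ ?_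
  · obtain ⟨hqVU, hq⟩ := mem_filter.1 hq
    rw [mem_product] at hpVU hqVU
    refine mem_hull_singleton.2 ⟨H₁.sub_mem (hV _ hqVU.1) (hV _ hpVU.1), ?_⟩
    rw [show q.1 - p.1 = p.2 - q.2 by rw [sub_eq_sub_iff_add_eq_add, hq, add_comm]]
    exact H₂.sub_mem (hU _ hpVU.2) (hU _ hqVU.2)
  · have hqr := (mem_filter.1 hq).2.trans (mem_filter.1 hr).2.symm
    rw [h] at hqr
    exact Prod.ext h (add_left_cancel hqr)

lemma add_le_add_of_mul_le_mul {d m n a : ℕ} (hd : 0 < d) (hm : d ≤ m) (hn : d ≤ n)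
    (h : m * n ≤ d * a) : m + n ≤ a + d := by
  obtain ⟨m, rfl⟩ := Nat.exists_eq_add_of_le hm
  obtain ⟨n, rfl⟩ := Nat.exists_eq_add_of_le hn
  refine Nat.le_of_mul_le_mul_left ?_ hd
  nlinarith [Nat.zero_le (m * n)]

section Trace

variable [Fintype G]

lemma le_stabilizer_compl {K : AddSubgroup G} {C : Finset G} (h : K ≤ stabilizer G C) :
    K ≤ stabilizer G Cᶜ := fun k hk ↦ mem_stabilizer_finset.2 fun g ↦ by
  simp only [mem_compl, mem_stabilizer_finset.1 (h hk) g]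

/-- The elements `h` of `H` with `x + h ∈ C`. -/
noncomputable def trace (H : AddSubgroup G) (C : Finset G) (x : G) : Finset G :=
  {h | h ∈ H ∧ x + h ∈ C}

lemma mem_trace {H : AddSubgroup G} {C : Finset G} {x h : G} :
    h ∈ trace H C x ↔ h ∈ H ∧ x + h ∈ C := mem_filter_univ _

lemma card_trace_add_card_trace_compl (H : AddSubgroup G) (C : Finset G) (x : G) :
    #(trace H C x) + #(trace H Cᶜ x) = Nat.card H := by
  simp only [trace, mem_compl]
  rw [← filter_filter, ← filter_filter, card_filter_add_card_filter_not, Nat.subtype_card]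
  simp

lemma card_inf_le_card_trace {H K : AddSubgroup G} {C : Finset G} {x : G}
    (hK : K ≤ stabilizer G C) (h : (trace H C x).Nonempty) :
    Nat.card (H ⊓ K : AddSubgroup G) ≤ #(trace H C x) := by
  refine card_le_of_le_stabilizer (fun k hk ↦ mem_stabilizer_finset.2 fun g ↦ ?_) h
  obtain ⟨hkH, hkK⟩ := AddSubgroup.mem_inf.1 hk
  rw [mem_trace, mem_trace, vadd_eq_add, H.add_mem_cancel_left hkH, add_left_comm]
  exact and_congr_right' (mem_stabilizer_finset.1 (hK hkK) _)

lemma card_trace_add_card_trace_le {H₁ H₂ : AddSubgroup G} {C₁ C₂ : Finset G} {x : G}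
    (h₁ : H₁ ≤ stabilizer G C₁) (h₂ : H₂ ≤ stabilizer G C₂)
    (hV : (trace H₁ C₂ x).Nonempty)
    (hU : (trace H₂ C₁ x).Nonempty) :
    #(trace H₁ C₂ x) + #(trace H₂ C₁ x) ≤
      #(C₁ ∩ C₂) + Nat.card (H₁ ⊓ H₂ : AddSubgroup G) := by
  refine add_le_add_of_mul_le_mul Nat.card_pos (card_inf_le_card_trace h₂ hV)
    (inf_comm H₁ H₂ ▸ card_inf_le_card_trace h₁ hU) ?_
  refine (card_mul_card_le_card_inf_mul_card_add (fun _ hv ↦ (mem_trace.1 hv).1)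
    fun _ hu ↦ (mem_trace.1 hu).1).trans (Nat.mul_le_mul_left _ ?_)
  refine card_le_card_of_injOn (x + ·) (fun g hg ↦ ?_) (add_right_injective x).injOn
  obtain ⟨v, hv, u, hu, rfl⟩ := mem_add.1 hg
  rw [mem_trace] at hv hu
  refine mem_inter.2 ⟨?_, ?_⟩
  · have := mem_stabilizer_finset.1 (h₁ hv.1) (x + u)
    rw [vadd_eq_add, add_left_comm] at this
    exact this.2 hu.2
  · have := mem_stabilizer_finset.1 (h₂ hu.1) (x + v)
    rw [vadd_eq_add, add_left_comm, add_comm u] at this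
    exact this.2 hv.2

end Trace

variable [Finite G]

lemma card_le_of_le_stabilizer_of_mem_of_notMem {H₁ H₂ : AddSubgroup G} {C₁ C₂ : Finset G} {x : G}
    (h₁ : H₁ ≤ stabilizer G C₁) (h₂ : H₂ ≤ stabilizer G C₂) (hx₂ : x ∈ C₂) (hx₁ : x ∉ C₁) :
    Nat.card H₁ ≤ #(C₂ \ C₁) + Nat.card (H₁ ⊓ H₂ : AddSubgroup G) ∨
      Nat.card H₂ ≤ #(C₁ \ C₂) + Nat.card (H₁ ⊓ H₂ : AddSubgroup G) ∨
      Nat.card H₂ ≤ #(C₂ \ C₁) := by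
  cases nonempty_fintype G
  have hV : (trace H₁ C₂ x).Nonempty := ⟨0, by simpa [mem_trace]⟩
  have hU : (trace H₂ C₁ᶜ x).Nonempty := ⟨0, by simpa [mem_trace]⟩
  have hVU := card_trace_add_card_trace_le (le_stabilizer_compl h₁) h₂ hV hU
  have hV_large := card_inf_le_card_trace h₂ hV
  have hU_large := card_inf_le_card_trace (le_stabilizer_compl h₁) hU
  rw [inter_comm, ← sdiff_eq_inter_compl] at hVU
  rw [inf_comm] at hU_large
  have hH₁ := card_trace_add_card_trace_compl H₁ C₂ x
  have hH₂ := card_trace_add_card_trace_compl H₂ C₁ x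
  obtain hV' | hV' := (trace H₁ C₂ᶜ x).eq_empty_or_nonempty
  · rw [hV', card_empty] at hH₁
    omega
  obtain hU' | hU' := (trace H₂ C₁ x).eq_empty_or_nonempty
  · rw [hU', card_empty] at hH₂
    omega
  have hVU' := card_trace_add_card_trace_le h₁ (le_stabilizer_compl h₂) hV' hU'
  rw [← sdiff_eq_inter_compl] at hVU'
  omega

/-- Kemperman's lemma. -/
lemma le_card_union_add_card_stabilizer {C₁ C₂ : Finset G} {n : ℕ}
    (h₁ : n ≤ #C₁ + Nat.card (stabilizer G C₁)) (h₂ : n ≤ #C₂ + Nat.card (stabilizer G C₂)) :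
    n ≤ #(C₁ ∪ C₂) + Nat.card (stabilizer G (C₁ ∪ C₂)) := by
  by_cases h : C₂ ⊆ C₁
  · rwa [union_eq_left.2 h]
  by_cases h' : C₁ ⊆ C₂
  · rwa [union_eq_right.2 h']
  obtain ⟨x, hx₂, hx₁⟩ := not_subset.1 h
  obtain ⟨y, hy₁, hy₂⟩ := not_subset.1 h'
  have hx := card_le_of_le_stabilizer_of_mem_of_notMem le_rfl le_rfl hx₂ hx₁
  have hy := card_le_of_le_stabilizer_of_mem_of_notMem le_rfl le_rfl hy₁ hy₂
  rw [inf_comm] at hy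
  have hstab := AddSubgroup.card_le_of_le (stabilizer_inf_le_stabilizer_union (A := C₁) (B := C₂))
  have hcard₁ := card_sdiff_add_card C₂ C₁
  have hcard₂ := card_sdiff_add_card C₁ C₂
  rw [union_comm] at hcard₁
  omega

lemma le_card_biUnion_add_card_stabilizer {α : Type*} {S : Finset α} (hS : S.Nonempty)
    {C : α → Finset G} {n : ℕ} (h : ∀ s ∈ S, n ≤ #(C s) + Nat.card (stabilizer G (C s))) :
    n ≤ #(S.biUnion C) + Nat.card (stabilizer G (S.biUnion C)) := by
  induction hS using Finset.Nonempty.cons_induction with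
  | singleton s => simpa using h
  | cons s S hs hS ih =>
    rw [cons_eq_insert, biUnion_insert]
    rw [forall_mem_cons] at h
    exact le_card_union_add_card_stabilizer h.1 (ih h.2)

end Kemperman

section Kneser

variable {G : Type*} [AddCommGroup G] {A B : Finset G}

lemma exists_subset_add_card_add_card_le [Finite G] {a b : G} (ha : a ∈ A) (hb : b ∈ B) :
    ∃ C ⊆ A + B, a + b ∈ C ∧ #A + #B ≤ #C + Nat.card (stabilizer G C) := by
  cases nonempty_fintype G
  induction hn : #B using Nat.strong_induction_on generalizing A B with
  | _ n ih =>
    subst hn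
    by_cases hDyson : ∃ a' ∈ A, ¬ B ⊆ -(a' - b) +ᵥ A
    · obtain ⟨a', ha', hB⟩ := hDyson
      have hb' : b ∈ (addDysonETransform (a' - b) (A, B)).2 :=
        mem_inter.2 ⟨hb, mem_neg_vadd_finset_iff.2 (by simpa)⟩
      have hlt : #(addDysonETransform (a' - b) (A, B)).2 < #B :=
        card_lt_card ⟨inter_subset_left, fun h ↦ hB (h.trans inter_subset_right)⟩
      obtain ⟨C, hC, habC, hcard⟩ := ih _ hlt (mem_union_left _ ha) hb' rfl
      exact ⟨C, hC.trans (addDysonETransform.subset _ _), habC,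
        (addDysonETransform.card (a' - b) (A, B)).symm.trans_le hcard⟩
    · push Not at hDyson
      refine ⟨A + {b}, add_subset_add_left (by simpa), add_mem_add ha (by simp), ?_⟩
      rw [card_add_singleton]
      have hsub : B ⊆ hull (stabilizer G A) {b} := fun b' hb' ↦ by
        refine mem_hull_singleton.2 (mem_stabilizer_finset'.2 fun a' ha' ↦ ?_)
        have := mem_neg_vadd_finset_iff.1 (hDyson a' ha' hb')
        rw [vadd_eq_add, sub_add_eq_add_sub] at this ⊢
        rwa [add_comm]
      gcongr
      calc #B ≤ #(hull (stabilizer G A) {b}) := card_le_card hsub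
        _ = Nat.card (stabilizer G A) := card_hull_singleton
        _ ≤ _ := AddSubgroup.card_le_of_le stabilizer_le_stabilizer_add_left

lemma card_add_card_le [Finite G] (hA : A.Nonempty) (hB : B.Nonempty) :
    #A + #B ≤ #(A + B) + Nat.card (stabilizer G (A + B)) := by
  choose! C hC hmem hcard using fun p (hp : p ∈ A ×ˢ B) ↦
    exists_subset_add_card_add_card_le (mem_product.1 hp).1 (mem_product.1 hp).2
  have hAB : (A ×ˢ B).biUnion C = A + B := by
    refine Subset.antisymm (biUnion_subset.2 hC) fun g hg ↦ ?_
    obtain ⟨a, ha, b, hb, rfl⟩ := mem_add.1 hg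
    exact mem_biUnion.2 ⟨(a, b), mk_mem_product ha hb, hmem _ (mk_mem_product ha hb)⟩
  exact hAB ▸ le_card_biUnion_add_card_stabilizer (hA.product hB) hcard

variable [Fintype G] {D K : AddSubgroup G}

/-- Kneser's theorem; the usual form is the case `D = stabilizer G (A + B)`. -/
theorem card_hull_add_card_hull_le (hA : A.Nonempty) (hB : B.Nonempty)
    (hD : stabilizer G (hull D (A + B)) ≤ D) :
    #(hull D A) + #(hull D B) ≤ #(hull D (A + B)) + Nat.card D := by
  refine (card_add_card_le (hull_nonempty hA) (hull_nonempty hB)).trans ?_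
  rw [hull_add_hull]
  gcongr
  exact AddSubgroup.card_le_of_le hD

theorem sum_card_hull_add_card_le {I : Type*} {s : Finset I} {F : I → Finset G}
    (hF : ∀ i ∈ s, (F i).Nonempty) (hD : stabilizer G (hull D (∑ i ∈ s, F i)) ≤ D) :
    ∑ i ∈ s, #(hull D (F i)) + Nat.card D ≤ #(hull D (∑ i ∈ s, F i)) + #s * Nat.card D := by
  have hsum {t : Finset I} (ht : ∀ i ∈ t, (F i).Nonempty) : (∑ i ∈ t, F i).Nonempty := by
    choose! f hf using ht
    exact ⟨∑ i ∈ t, f i, mem_sum_finset.2 ⟨f, hf, rfl⟩⟩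
  induction s using Finset.cons_induction with
  | empty => simp [← singleton_zero, card_hull_singleton]
  | cons i s hi ih =>
    rw [sum_cons] at hD
    rw [sum_cons, sum_cons, card_cons]
    rw [forall_mem_cons] at hF
    have hs := ih hF.2 ((stabilizer_le_stabilizer_add_right.trans_eq (by rw [add_hull])).trans hD)
    have hi := card_hull_add_card_hull_le hF.1 (hsum hF.2) hD
    rw [add_one_mul]
    omega

lemma hull_singleton_add_subset {a b : G} (hA : A ⊆ hull K {a}) (hB : B ⊆ hull K {b})
    (h : Nat.card K < #A + #B) : hull K {a + b} ⊆ A + B := by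
  intro z hz
  rw [mem_hull_singleton] at hz
  have hB' : B.image (z - ·) ⊆ hull K {a} := image_subset_iff.2 fun y hy ↦ by
    rw [mem_hull_singleton, show z - y - a = z - (a + b) - (y - b) by abel]
    exact K.sub_mem hz (mem_hull_singleton.1 (hB hy))
  obtain ⟨y, hy⟩ : (A ∩ B.image (z - ·)).Nonempty := by
    refine inter_nonempty_of_card_lt_card_add_card hA hB' ?_
    rwa [card_hull_singleton, card_image_of_injective _ sub_right_injective]
  obtain ⟨w, hw, hwy⟩ := mem_image.1 (mem_inter.1 hy).2
  exact mem_add.2 ⟨y, (mem_inter.1 hy).1, w, hw, by rw [← hwy, sub_add_cancel]⟩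

lemma card_union_add_card_union_le {a b : G} {P S P' S' : Finset G} (hP : P ⊆ hull K {a})
    (hS : S ⊆ hull K {a}) (hP' : P' ⊆ hull K {b}) (hS' : S' ⊆ hull K {b}) (hPne : P.Nonempty)
    (hPne' : P'.Nonempty) (hZ : ¬ hull K {a + b} ⊆ (P + P') ∪ (S + S')) :
    #(P ∪ S) + #(P' ∪ S') ≤
      Nat.card K + #((P + P') ∪ (S + S')) + Nat.card (stabilizer G ((P + P') ∪ (S + S'))) := by
  have hPS : #(P ∪ S) ≤ Nat.card K :=
    (card_le_card (union_subset hP hS)).trans_eq card_hull_singleton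
  have hPS' : #(P' ∪ S') ≤ Nat.card K :=
    (card_le_card (union_subset hP' hS')).trans_eq card_hull_singleton
  have hPZ : #P ≤ #((P + P') ∪ (S + S')) :=
    (card_le_card_add_right hPne').trans (card_le_card subset_union_left)
  have hPZ' : #P' ≤ #((P + P') ∪ (S + S')) :=
    (card_le_card_add_left hPne).trans (card_le_card subset_union_left)
  obtain rfl | hSne := S.eq_empty_or_nonempty
  · rw [union_empty] at hPS ⊢
    omega
  obtain rfl | hSne' := S'.eq_empty_or_nonempty
  · rw [union_empty] at hPS' ⊢
    omega
  have hPP' : #P + #P' ≤ Nat.card K := not_lt.1 fun h ↦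
    hZ ((hull_singleton_add_subset hP hP' h).trans subset_union_left)
  have hSS' : #S + #S' ≤ Nat.card K := not_lt.1 fun h ↦
    hZ ((hull_singleton_add_subset hS hS' h).trans subset_union_right)
  have hPadd := card_add_card_le hPne hPne'
  have hSadd := card_add_card_le hSne hSne'
  have := le_card_union_add_card_stabilizer (n := #P + #P' + #S + #S' - Nat.card K)
    (C₁ := P + P') (C₂ := S + S') (by omega) (by omega)
  have := card_union_le P S
  have := card_union_le P' S'
  omega

lemma card_hull_union_add_card_hull_union_le {a b : G} {P S P' S' : Finset G} (hDK : D ≤ K)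
    (hP : P ⊆ hull K {a}) (hS : S ⊆ hull K {a}) (hP' : P' ⊆ hull K {b}) (hS' : S' ⊆ hull K {b})
    (hPne : P.Nonempty) (hPne' : P'.Nonempty)
    (hD : stabilizer G (hull D ((P + P') ∪ (S + S'))) ≤ D)
    (hZ : ¬ hull K {a + b} ⊆ hull D ((P + P') ∪ (S + S'))) :
    #(hull D (P ∪ S)) + #(hull D (P' ∪ S')) ≤
      Nat.card K + #(hull D ((P + P') ∪ (S + S'))) + Nat.card D := by
  rw [hull_union, ← hull_add_hull, ← hull_add_hull] at hZ hD
  rw [hull_union, hull_union, hull_union, ← hull_add_hull, ← hull_add_hull]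
  exact (card_union_add_card_union_le (hull_subset_hull_singleton hDK hP)
    (hull_subset_hull_singleton hDK hS) (hull_subset_hull_singleton hDK hP')
    (hull_subset_hull_singleton hDK hS') (hull_nonempty hPne) (hull_nonempty hPne') hZ).trans
      (Nat.add_le_add_left (AddSubgroup.card_le_of_le hD) _)

end Kneser

section Descent

variable {G : Type*} [AddCommGroup G] [Fintype G]

lemma exists_not_hull_singleton_subset {K : AddSubgroup G} {T : Finset G}
    (h : ¬ K ≤ stabilizer G T) : ∃ x ∈ T, ¬ hull K {x} ⊆ T := by
  contrapose! h
  exact fun k hk ↦ mem_stabilizer_finset'.2 fun x hx ↦ h x hx (mem_hull_singleton.2 (by simpa))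

/- `C₀` grows by sets `X` inside cosets of `K₀` that it misses, while `K₀` shrinks to the stabilizer
of `X`; this ends when `K₀` stabilizes `T`. -/
lemma add_card_add_mul_card_le_of_step {T C₀ : Finset G} {K₀ : AddSubgroup G}
    {v : AddSubgroup G → ℕ} (hv : Monotone v) (r : ℕ) (hC₀ : C₀ ⊆ T) (hK₀ : K₀ ≤ stabilizer G C₀)
    (step : ∀ K ≤ K₀, ∀ x ∈ T, ¬ hull K {x} ⊆ T → Disjoint (hull K {x}) C₀ →
      ∃ X ⊆ T, x ∈ X ∧ X ⊆ hull K {x} ∧ v (stabilizer G X) + r * Nat.card K ≤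
        v K + #X + r * Nat.card (stabilizer G X)) :
    v ⊥ + #C₀ + r * Nat.card K₀ ≤ v K₀ + #T + r * Nat.card (stabilizer G T) := by
  induction hn : Nat.card K₀ using Nat.strong_induction_on generalizing K₀ C₀ with
  | _ n ih =>
    subst hn
    by_cases hT : K₀ ≤ stabilizer G T
    · gcongr
      · exact hv bot_le
      · exact AddSubgroup.card_le_of_le hT
    obtain ⟨x, hxT, hx⟩ := exists_not_hull_singleton_subset hT
    have hxC₀ : Disjoint (hull K₀ {x}) C₀ := disjoint_left.2 fun y hy hyC₀ ↦ hx <| by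
      rw [← hull_singleton_congr (mem_hull_singleton.1 hy)]
      exact (hull_singleton_subset hK₀ hyC₀).trans hC₀
    obtain ⟨X, hXT, hxX, hX, hstep⟩ := step K₀ le_rfl x hxT hx hxC₀
    have hK' : stabilizer G X ≤ K₀ := stabilizer_le_of_subset ⟨x, hxX⟩ hX
    have hlt : Nat.card (stabilizer G X) < Nat.card K₀ := by
      refine (AddSubgroup.card_le_of_le hK').lt_of_not_ge fun hge ↦ hx ?_
      rw [← AddSubgroup.eq_of_le_of_card_ge hK' hge]
      exact (hull_singleton_subset le_rfl hxX).trans hXT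
    have hih := ih _ hlt (union_subset hC₀ hXT)
      ((le_inf (hK'.trans hK₀) le_rfl).trans stabilizer_inf_le_stabilizer_union)
      (fun K hK y hy hyT hyC ↦ step K (hK.trans hK') y hy hyT
        (hyC.mono_right subset_union_left)) rfl
    rw [card_union_of_disjoint (hxC₀.symm.mono_right hX)] at hih
    omega

end Descent

section Colored

variable {G J N ι : Type*}

/-- `e` chooses distinct members of the family for the slots in `S`, and `a` chooses an element of
the set of colour `c i` offered by the member `e i`. -/
structure IsSelection (A : J → ι → Finset G) (c : N → J) (S : Finset N) (e : N → ι) (a : N → G) :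
    Prop where
  injOn : Set.InjOn e S
  mem : ∀ i ∈ S, a i ∈ A (c i) (e i)

namespace IsSelection

variable {A A' : J → ι → Finset G} {c : N → J} {S S' : Finset N} {e : N → ι} {a : N → G} {u : N}
  {b : G} {k : ι}

lemma mono (h : IsSelection A c S e a) (hS : S' ⊆ S) : IsSelection A c S' e a :=
  ⟨h.injOn.mono (coe_subset.2 hS), fun i hi ↦ h.mem i (hS hi)⟩

lemma update (h : IsSelection A c (S.erase u) e a) (hk : ∀ i ∈ S.erase u, e i ≠ k)
    (hb : b ∈ A (c u) k) :
    IsSelection A c S (Function.update e u k) (Function.update a u b) := by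
  have hne {i : N} (hi : i ∈ S) (hiu : i ≠ u) : i ∈ S.erase u := mem_erase.2 ⟨hiu, hi⟩
  refine ⟨fun i hi i' hi' heq ↦ ?_, fun i hi ↦ ?_⟩
  · by_cases hiu : i = u <;> by_cases hiu' : i' = u
    · rw [hiu, hiu']
    · rw [hiu, Function.update_self, Function.update_of_ne hiu'] at heq
      exact (hk i' (hne hi' hiu') heq.symm).elim
    · rw [hiu', Function.update_self, Function.update_of_ne hiu] at heq
      exact (hk i (hne hi hiu) heq).elim
    · rw [Function.update_of_ne hiu, Function.update_of_ne hiu'] at heq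
      exact h.injOn (hne hi hiu) (hne hi' hiu') heq
  · by_cases hiu : i = u
    · rwa [hiu, Function.update_self, Function.update_self]
    · simpa only [Function.update_of_ne hiu] using h.mem i (hne hi hiu)

end IsSelection

variable [AddCommGroup G] [Fintype G] {A : J → ι → Finset G} {c : N → J} {S : Finset N}
  {D : AddSubgroup G} {x : G}

/-- The sums obtained by selecting one element for each slot in `S`. Slots carry colours so that a
coset of a subgroup can be recorded as a colour. -/
noncomputable def coloredSums (A : J → ι → Finset G) (c : N → J) (S : Finset N) : Finset G :=
  {x | ∃ e a, IsSelection A c S e a ∧ ∑ i ∈ S, a i = x}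

lemma mem_coloredSums :
    x ∈ coloredSums A c S ↔ ∃ e a, IsSelection A c S e a ∧ ∑ i ∈ S, a i = x := mem_filter_univ _

lemma IsSelection.sum_mem_coloredSums {e : N → ι} {a : N → G} (h : IsSelection A c S e a) :
    ∑ i ∈ S, a i ∈ coloredSums A c S := mem_coloredSums.2 ⟨e, a, h, rfl⟩

lemma IsSelection.add_sum_mem_coloredSums {e : N → ι} {a : N → G} {u : N} {b : G} {k : ι}
    (hu : u ∈ S) (h : IsSelection A c (S.erase u) e a) (hk : ∀ i ∈ S.erase u, e i ≠ k)
    (hb : b ∈ A (c u) k) : b + ∑ i ∈ S.erase u, a i ∈ coloredSums A c S := by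
  convert (h.update hk hb).sum_mem_coloredSums using 1
  rw [← add_sum_erase _ _ hu, Function.update_self]
  exact congrArg (b + ·) <| sum_congr rfl fun i hi ↦
    (Function.update_of_ne (ne_of_mem_erase hi) ..).symm

lemma hull_coloredSums (hS : S.Nonempty) :
    hull D (coloredSums A c S) = coloredSums (fun j k ↦ hull D (A j k)) c S := by
  ext x
  rw [mem_hull, mem_coloredSums]
  constructor
  · rintro ⟨y, hy, hxy⟩
    obtain ⟨e, a, h, rfl⟩ := mem_coloredSums.1 hy
    obtain ⟨u, hu⟩ := hS
    rw [← mem_coloredSums]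
    have hA : IsSelection (fun j k ↦ hull D (A j k)) c S e a :=
      ⟨h.injOn, fun i hi ↦ subset_hull (h.mem i hi)⟩
    convert IsSelection.add_sum_mem_coloredSums (b := a u + (x - ∑ i ∈ S, a i)) (k := e u) hu
      (hA.mono (erase_subset _ _)) (fun i hi heq ↦ ne_of_mem_erase hi
        (h.injOn (mem_of_mem_erase hi) hu heq)) (mem_hull.2 ⟨a u, h.mem u hu, by simpa⟩) using 1
    rw [← add_sum_erase _ _ hu]
    abel
  · rintro ⟨e, a, h, rfl⟩
    choose! a' ha' haa' using fun i hi ↦ mem_hull.1 (h.mem i hi)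
    refine ⟨_, IsSelection.sum_mem_coloredSums ⟨h.injOn, ha'⟩, ?_⟩
    rw [← sum_sub_distrib]
    exact D.sum_mem haa'

end Colored

section Weight

variable {G J ι : Type*} [AddCommGroup G] [Fintype G] [Fintype ι] {D K : AddSubgroup G}

/-- The number of members of `B` that meet the coset `g + K`. -/
noncomputable def deg (K : AddSubgroup G) (B : ι → Finset G) (g : G) : ℕ :=
  #{k | g ∈ hull K (B k)}

lemma deg_mono {B B' : ι → Finset G} (hDK : D ≤ K) (hB : ∀ k, B k ⊆ B' k) (g : G) :
    deg D B g ≤ deg K B' g :=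
  card_le_card (monotone_filter_right _ fun k _ hk ↦ hull_mono hDK (hB k) hk)

lemma deg_congr {g x : G} (h : g - x ∈ K) (B : ι → Finset G) : deg K B g = deg K B x := by
  simp only [deg, mem_hull_congr h]

lemma deg_hull (h : D ≤ K) (B : ι → Finset G) : deg K (fun k ↦ hull D (B k)) = deg K B := by
  simp only [funext_iff, deg, hull_hull h, implies_true]

lemma exists_notMem_of_card_lt_deg {B : ι → Finset G} {g : G} {I : Finset ι}
    (h : #I < deg K B g) : ∃ k ∉ I, g ∈ hull K (B k) := by
  obtain ⟨k, hk, hkI⟩ := exists_mem_notMem_of_card_lt_card h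
  exact ⟨k, hkI, (mem_filter.1 hk).2⟩

variable [Fintype J]

/-- The sum over all colours and all `g` of the number, truncated at `L`, of members of the family
that meet `g + K` in that colour. For one colour this is
`|K| * ∑ Q : G ⧸ K, min L #{k | A k meets Q}`. -/
noncomputable def wt (L : ℕ) (K : AddSubgroup G) (A : J → ι → Finset G) : ℕ :=
  ∑ j, ∑ g, min L (deg K (A j) g)

lemma wt_mono (L : ℕ) (A : J → ι → Finset G) : Monotone (wt L · A) := fun _ _ h ↦
  sum_le_sum fun _ _ ↦ sum_le_sum fun _ _ ↦
    min_le_min_left _ (deg_mono h (fun _ ↦ subset_rfl) _)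

lemma wt_hull (L : ℕ) (h : D ≤ K) (A : J → ι → Finset G) :
    wt L K (fun j k ↦ hull D (A j k)) = wt L K A := by
  simp only [wt, deg_hull h]

variable {N : Type*} {A : J → ι → Finset G} {c : N → J} {S : Finset N} {M : AddSubgroup G}

/-- The inequality to be proved, relative to a coset of `M` that contains all the sums; subtractions
have been moved across so that it is an inequality of natural numbers. -/
def SumsBound (M : AddSubgroup G) (A : J → ι → Finset G) (c : N → J) (S : Finset N) : Prop :=
  wt #S ⊥ A + #S * Nat.card M + Nat.card (stabilizer G (coloredSums A c S)) ≤
    #(coloredSums A c S) + #S * Nat.card (stabilizer G (coloredSums A c S)) + wt #S M A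

lemma sumsBound_of_card_eq_zero (hS : #S = 0) (hne : (coloredSums A c S).Nonempty) :
    SumsBound M A c S := by
  simpa [SumsBound, wt, hS] using card_le_of_le_stabilizer le_rfl hne

lemma SumsBound.hull_le (h : SumsBound M (fun j k ↦ hull D (A j k)) c S) (hDM : D ≤ M)
    (hne : (coloredSums A c S).Nonempty) :
    wt #S D A + #S * Nat.card M + Nat.card (stabilizer G (hull D (coloredSums A c S))) ≤
      #(hull D (coloredSums A c S)) +
        #S * Nat.card (stabilizer G (hull D (coloredSums A c S))) + wt #S M A := by
  obtain rfl | hS := S.eq_empty_or_nonempty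
  · simpa [wt] using card_le_of_le_stabilizer le_rfl (hull_nonempty hne)
  · have hbot : wt #S ⊥ (fun j k ↦ hull D (A j k)) = wt #S D A := by
      simp only [wt, deg, hull_bot]
    rwa [SumsBound, ← hull_coloredSums hS, hbot, wt_hull _ hDM] at h

end Weight

section Uncross

variable {G J ι : Type*}

/-- Replace the members `p` and `q` by their union and their intersection, in every colour. -/
noncomputable def uncross (p q : ι) (A : J → ι → Finset G) (j : J) : ι → Finset G :=
  Function.update (Function.update (A j) p (A j p ∪ A j q)) q (A j p ∩ A j q)

/-- Empty the members `p` and `q`, in every colour. -/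
noncomputable def deletePair (p q : ι) (A : J → ι → Finset G) (j : J) : ι → Finset G :=
  Function.update (Function.update (A j) p ∅) q ∅

variable {p q k : ι} {A : J → ι → Finset G} {j : J}

lemma uncross_left (hpq : p ≠ q) : uncross p q A j p = A j p ∪ A j q := by
  rw [uncross, Function.update_of_ne hpq, Function.update_self]

lemma uncross_right : uncross p q A j q = A j p ∩ A j q := Function.update_self ..

lemma uncross_of_ne (hp : k ≠ p) (hq : k ≠ q) : uncross p q A j k = A j k := by
  rw [uncross, Function.update_of_ne hq, Function.update_of_ne hp]

lemma deletePair_of_ne (hp : k ≠ p) (hq : k ≠ q) : deletePair p q A j k = A j k := by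
  rw [deletePair, Function.update_of_ne hq, Function.update_of_ne hp]

lemma deletePair_left : deletePair p q A j p = ∅ := by
  by_cases h : p = q
  · rw [deletePair, h, Function.update_self]
  · rw [deletePair, Function.update_of_ne h, Function.update_self]

lemma deletePair_right : deletePair p q A j q = ∅ := Function.update_self ..

lemma deletePair_uncross : deletePair p q (uncross p q A) = deletePair p q A := by
  ext j k : 2
  by_cases hp : k = p
  · rw [hp, deletePair_left, deletePair_left]
  by_cases hq : k = q
  · rw [hq, deletePair_right, deletePair_right]
  rw [deletePair_of_ne hp hq, deletePair_of_ne hp hq, uncross_of_ne hp hq]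

section Weight

variable [AddCommGroup G] [Fintype G] [Fintype ι] {D K : AddSubgroup G} {g : G}

lemma deg_eq_add_deg_deletePair (hpq : p ≠ q) :
    deg K (A j) g = (if g ∈ hull K (A j p) then 1 else 0) + (if g ∈ hull K (A j q) then 1 else 0) +
      deg K (deletePair p q A j) g := by
  have hsplit (f : ι → ℕ) : ∑ k, f k = f p + f q + ∑ k ∈ (univ.erase p).erase q, f k := by
    rw [← add_sum_erase _ f (mem_univ p),
      ← add_sum_erase _ f (mem_erase.2 ⟨hpq.symm, mem_univ q⟩), add_assoc]
  simp only [deg, card_filter]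
  rw [hsplit, hsplit fun k ↦ if g ∈ hull K (deletePair p q A j k) then 1 else 0, deletePair_left,
    deletePair_right, hull_empty, if_neg (notMem_empty g), zero_add, zero_add]
  congr 1
  refine sum_congr rfl fun k hk ↦ ?_
  rw [deletePair_of_ne (ne_of_mem_erase (mem_of_mem_erase hk)) (ne_of_mem_erase hk)]

lemma deg_uncross (hpq : p ≠ q) :
    deg K (uncross p q A j) g = (if g ∈ hull K (A j p ∪ A j q) then 1 else 0) +
      (if g ∈ hull K (A j p ∩ A j q) then 1 else 0) + deg K (deletePair p q A j) g := by
  rw [deg_eq_add_deg_deletePair hpq, deletePair_uncross, uncross_left hpq, uncross_right]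

lemma deg_uncross_le (hpq : p ≠ q) : deg K (uncross p q A j) g ≤ deg K (A j) g := by
  rw [deg_uncross hpq, deg_eq_add_deg_deletePair (A := A) hpq, hull_union]
  have hp : g ∈ hull K (A j p ∩ A j q) → g ∈ hull K (A j p) :=
    fun h ↦ hull_mono le_rfl inter_subset_left h
  have hq : g ∈ hull K (A j p ∩ A j q) → g ∈ hull K (A j q) :=
    fun h ↦ hull_mono le_rfl inter_subset_right h
  grind

lemma deg_bot_uncross (hpq : p ≠ q) : deg ⊥ (uncross p q A j) g = deg ⊥ (A j) g := by
  rw [deg_uncross hpq, deg_eq_add_deg_deletePair (A := A) hpq]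
  simp only [hull_bot, mem_union, mem_inter]
  grind

variable [Fintype J]

lemma wt_uncross_le (hpq : p ≠ q) (L : ℕ) : wt L K (uncross p q A) ≤ wt L K A :=
  sum_le_sum fun _ _ ↦ sum_le_sum fun _ _ ↦ min_le_min_left _ (deg_uncross_le hpq)

lemma wt_bot_uncross (hpq : p ≠ q) (L : ℕ) : wt L ⊥ (uncross p q A) = wt L ⊥ A := by
  simp only [wt, deg_bot_uncross hpq]

end Weight

section Sums

variable {N : Type*} {c : N → J} {S : Finset N} {e : N → ι} {a : N → G}

lemma isSelection_uncross_of_ne_right (hpq : p ≠ q) (h : IsSelection A c S e a)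
    (hq : ∀ i ∈ S, e i ≠ q) : IsSelection (uncross p q A) c S e a := by
  refine ⟨h.injOn, fun i hi ↦ ?_⟩
  by_cases hp : e i = p
  · rw [hp, uncross_left hpq]
    exact mem_union_left _ (hp ▸ h.mem i hi)
  · rw [uncross_of_ne hp (hq i hi)]
    exact h.mem i hi

lemma isSelection_uncross_of_ne_left (hpq : p ≠ q) (h : IsSelection A c S e a)
    (hp : ∀ i ∈ S, e i ≠ p) : IsSelection (uncross p q A) c S (Equiv.swap p q ∘ e) a := by
  refine ⟨(Equiv.injective _).comp_injOn h.injOn, fun i hi ↦ ?_⟩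
  by_cases hq : e i = q
  · rw [Function.comp_apply, hq, Equiv.swap_apply_right, uncross_left hpq]
    exact mem_union_right _ (hq ▸ h.mem i hi)
  · rw [Function.comp_apply, Equiv.swap_apply_of_ne_of_ne (hp i hi) hq, uncross_of_ne (hp i hi) hq]
    exact h.mem i hi

variable [AddCommGroup G] [Fintype G] {K : AddSubgroup G}

lemma coloredSums_uncross_subset (hpq : p ≠ q) :
    coloredSums (uncross p q A) c S ⊆ coloredSums A c S := by
  intro x hx
  obtain ⟨e, a, h, rfl⟩ := mem_coloredSums.1 hx
  have hmem {i} (hi : i ∈ S) := h.mem i hi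
  by_cases hu : ∃ u ∈ S, e u = p ∧ a u ∈ A (c u) q
  · obtain ⟨u, huS, hup, hua⟩ := hu
    refine IsSelection.sum_mem_coloredSums (e := Equiv.swap p q ∘ e)
      ⟨(Equiv.injective _).comp_injOn h.injOn, fun i hi ↦ ?_⟩
    by_cases hp : e i = p
    · obtain rfl := h.injOn hi huS (hp.trans hup.symm)
      rwa [Function.comp_apply, hp, Equiv.swap_apply_left]
    by_cases hq : e i = q
    · have := hmem hi
      rw [hq, uncross_right] at this
      rw [Function.comp_apply, hq, Equiv.swap_apply_right]
      exact mem_of_mem_inter_left this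
    rw [Function.comp_apply, Equiv.swap_apply_of_ne_of_ne hp hq, ← uncross_of_ne (A := A) hp hq]
    exact hmem hi
  · push Not at hu
    refine IsSelection.sum_mem_coloredSums (e := e) ⟨h.injOn, fun i hi ↦ ?_⟩
    by_cases hp : e i = p
    · have := hmem hi
      rw [hp, uncross_left hpq] at this
      rw [hp]
      exact (mem_union.1 this).resolve_right (hu i hi hp)
    by_cases hq : e i = q
    · have := hmem hi
      rw [hq, uncross_right] at this
      rw [hq]
      exact mem_of_mem_inter_right this
    rw [← uncross_of_ne (A := A) hp hq]
    exact hmem hi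

lemma IsSelection.deg_le_card [Fintype ι] {u : N} (hu : u ∈ S) (h : IsSelection A c S e a)
    (hK : ∀ e' a', IsSelection A c S e' a' → ∑ i ∈ S, a' i - ∑ i ∈ S, a i ∈ K →
      ∃ i ∈ S, e' i = e u) : deg K (A (c u)) (a u) ≤ #S := by
  by_contra! hlt
  obtain ⟨k, hkS, hk⟩ := exists_notMem_of_card_lt_deg (I := S.image e) (card_image_le.trans_lt hlt)
  obtain ⟨b, hb, hab⟩ := mem_hull.1 hk
  have hne (i : N) (hi : i ∈ S) : e i ≠ k := fun h ↦ hkS (mem_image.2 ⟨i, hi, h⟩)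
  have hsum : ∑ i ∈ S, Function.update a u b i - ∑ i ∈ S, a i ∈ K := by
    rw [sum_update_of_mem hu, ← add_sum_erase S a hu, sdiff_singleton_eq_erase,
      add_sub_add_right_eq_sub, ← neg_sub]
    exact K.neg_mem hab
  obtain ⟨i, hi, heq⟩ := hK _ _
    ((h.mono (erase_subset u S)).update (fun i hi ↦ hne i (mem_of_mem_erase hi)) hb) hsum
  by_cases hiu : i = u
  · rw [hiu, Function.update_self] at heq
    exact hne u hu heq.symm
  · rw [Function.update_of_ne hiu] at heq
    exact hiu (h.injOn hi hu heq)

lemma exists_slots_of_disjoint_uncross [Fintype ι] (hpq : p ≠ q) (h : IsSelection A c S e a)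
    (hK : Disjoint (hull K {∑ i ∈ S, a i}) (coloredSums (uncross p q A) c S)) :
    ∃ u ∈ S, ∃ v ∈ S, e u = p ∧ e v = q ∧
      deg K (A (c u)) (a u) ≤ #S ∧ deg K (A (c v)) (a v) ≤ #S := by
  have hp (e' : N → ι) (a' : N → G) (h' : IsSelection A c S e' a')
      (ha' : ∑ i ∈ S, a' i - ∑ i ∈ S, a i ∈ K) : ∃ i ∈ S, e' i = p := by
    by_contra! hp
    exact disjoint_left.1 hK (mem_hull_singleton.2 ha')
      (isSelection_uncross_of_ne_left hpq h' hp).sum_mem_coloredSums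
  have hq (e' : N → ι) (a' : N → G) (h' : IsSelection A c S e' a')
      (ha' : ∑ i ∈ S, a' i - ∑ i ∈ S, a i ∈ K) : ∃ i ∈ S, e' i = q := by
    by_contra! hq
    exact disjoint_left.1 hK (mem_hull_singleton.2 ha')
      (isSelection_uncross_of_ne_right hpq h' hq).sum_mem_coloredSums
  obtain ⟨u, hu, rfl⟩ := hp e a h (by simp)
  obtain ⟨v, hv, rfl⟩ := hq e a h (by simp)
  exact ⟨u, hu, v, hv, rfl, rfl, h.deg_le_card hu hp, h.deg_le_card hv hq⟩

end Sums

end Uncross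

section Dominated

variable {G J ι : Type*} {A : J → ι → Finset G} {I : Finset ι}

/-- In every colour, the members indexed by `I` contain all the other members. -/
def Dominates (I : Finset ι) (A : J → ι → Finset G) : Prop :=
  ∀ p ∈ I, ∀ q ∉ I, ∀ j, A j q ⊆ A j p

lemma IsSelection.exists_image_eq {N : Type*} {c : N → J} {S : Finset N} {e : N → ι} {a : N → G}
    (h : IsSelection A c S e a) (hI : Dominates I A) (hIS : #I = #S) :
    ∃ e', IsSelection A c S e' a ∧ S.image e' = I := by
  obtain ⟨σ, hσ⟩ := exists_equiv_extend_of_card_eq (α := S) (s := {i | e i ∈ I})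
    (by rw [Fintype.card_coe, hIS]) (f := fun i ↦ e i) (by simp [image_subset_iff])
    fun i _ i' _ heq ↦ Subtype.ext (h.injOn i.2 i'.2 heq)
  let e' (i : N) : ι := if hi : i ∈ S then σ ⟨i, hi⟩ else e i
  have he' {i : N} (hi : i ∈ S) : e' i = σ ⟨i, hi⟩ := dif_pos hi
  have hinj : Set.InjOn e' S := fun i hi i' hi' heq ↦ by
    rw [he' hi, he' hi'] at heq
    exact congrArg Subtype.val (σ.injective (Subtype.ext heq))
  refine ⟨e', ⟨hinj, fun i hi ↦ ?_⟩, eq_of_subset_of_card_le (image_subset_iff.2 fun i hi ↦ ?_) ?_⟩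
  · rw [he' hi]
    by_cases hei : e i ∈ I
    · rw [hσ ⟨i, hi⟩ (by simpa)]
      exact h.mem i hi
    · exact hI _ (σ _).2 _ hei _ (h.mem i hi)
  · rw [he' hi]
    exact (σ _).2
  · rw [card_image_of_injOn hinj, hIS]

variable [AddCommGroup G] [Fintype G] {D K : AddSubgroup G} {a : G}

lemma card_hull_add_card_le_card_hull_add {B : Finset G} (ha : a ∈ B) (hDK : D ≤ K) :
    #(hull D B) + Nat.card K ≤ #(hull K B) + #(hull D (B ∩ hull K {a})) := by
  have hunion : hull D B ∪ hull K {a} ⊆ hull K B :=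
    union_subset (hull_mono hDK subset_rfl) (hull_mono le_rfl (singleton_subset_iff.2 ha))
  have hinter : hull D B ∩ hull K {a} ⊆ hull D (B ∩ hull K {a}) := fun g hg ↦ by
    rw [mem_inter, mem_hull] at hg
    obtain ⟨⟨b, hb, hgb⟩, hga⟩ := hg
    refine mem_hull.2 ⟨b, mem_inter.2 ⟨hb, ?_⟩, hgb⟩
    exact (mem_hull_congr (hDK hgb)).1 hga
  rw [← card_hull_singleton (K := K) (x := a), ← card_union_add_card_inter]
  exact add_le_add (card_le_card hunion) (card_le_card hinter)

variable [Fintype ι]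

lemma Dominates.min_card_deg (hI : Dominates I A) {j : J} {g : G} :
    min #I (deg K (A j) g) = #{k ∈ I | g ∈ hull K (A j k)} := by
  have hle : #{k ∈ I | g ∈ hull K (A j k)} ≤ deg K (A j) g :=
    card_le_card (filter_subset_filter _ (subset_univ I))
  by_cases hq : ∃ q ∉ I, g ∈ hull K (A j q)
  · obtain ⟨q, hqI, hq⟩ := hq
    rw [filter_true_of_mem fun p hp ↦ hull_mono le_rfl (hI p hp q hqI j) hq] at hle ⊢
    exact min_eq_left hle
  · push Not at hq
    refine le_antisymm ((min_le_right _ _).trans (card_le_card fun k hk ↦ ?_))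
      (le_min (card_filter_le _ _) hle)
    have hk := (mem_filter.1 hk).2
    exact mem_filter.2 ⟨of_not_not fun hkI ↦ hq k hkI hk, hk⟩

variable [Fintype J]

lemma sum_card_hull_add_card_le_sum_card_hull_add {B : J → Finset G} {j : J} (ha : a ∈ B j)
    (hDK : D ≤ K) :
    ∑ j, #(hull D (B j)) + Nat.card K ≤
      ∑ j, #(hull K (B j)) + #(hull D (B j ∩ hull K {a})) := by
  rw [← add_sum_erase _ _ (mem_univ j), ← add_sum_erase _ _ (mem_univ j)]
  have hj := card_hull_add_card_le_card_hull_add ha hDK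
  have hrest : ∑ j ∈ univ.erase j, #(hull D (B j)) ≤ ∑ j ∈ univ.erase j, #(hull K (B j)) :=
    sum_le_sum fun j _ ↦ card_le_card (hull_mono hDK subset_rfl)
  omega

lemma Dominates.wt_eq (hI : Dominates I A) :
    wt #I K A = ∑ k ∈ I, ∑ j, #(hull K (A j k)) := by
  rw [sum_comm, wt]
  refine sum_congr rfl fun j _ ↦ ?_
  simp only [hI.min_card_deg, card_filter]
  rw [sum_comm]
  simp only [sum_boole, filter_univ_mem, Nat.cast_id]

lemma Dominates.exists_subset_coloredSums (hI : Dominates I A) {N : Type*} {c : N → J}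
    {S : Finset N} (hIS : #I = #S) {x : G} (hx : x ∈ coloredSums A c S) :
    ∃ X ⊆ coloredSums A c S, x ∈ X ∧ X ⊆ hull K {x} ∧
      wt #S (stabilizer G X) A + #S * Nat.card K + Nat.card (stabilizer G X) ≤
        #X + #S * Nat.card (stabilizer G X) + wt #S K A := by
  obtain ⟨e₀, a, h₀, rfl⟩ := mem_coloredSums.1 hx
  obtain ⟨e, h, rfl⟩ := h₀.exists_image_eq hI hIS
  let F : N → Finset G := fun i ↦ A (c i) (e i) ∩ hull K {a i}
  have haF (i) (hi : i ∈ S) : a i ∈ F i := mem_inter.2 ⟨h.mem i hi, subset_hull (by simp)⟩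
  have hxX : ∑ i ∈ S, a i ∈ ∑ i ∈ S, F i := mem_sum_finset.2 ⟨a, haF, rfl⟩
  have hXK : ∑ i ∈ S, F i ⊆ hull K {∑ i ∈ S, a i} := fun y hy ↦ by
    obtain ⟨f, hf, rfl⟩ := mem_sum_finset.1 hy
    rw [mem_hull_singleton, ← sum_sub_distrib]
    exact K.sum_mem fun i hi ↦ mem_hull_singleton.1 (mem_of_mem_inter_right (hf i hi))
  refine ⟨∑ i ∈ S, F i, fun y hy ↦ ?_, hxX, hXK, ?_⟩
  · obtain ⟨f, hf, rfl⟩ := mem_sum_finset.1 hy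
    exact IsSelection.sum_mem_coloredSums
      ⟨h.injOn, fun i hi ↦ mem_of_mem_inter_left (hf i hi)⟩
  generalize hD : stabilizer G (∑ i ∈ S, F i) = D
  have hDK : D ≤ K := hD ▸ stabilizer_le_of_subset ⟨_, hxX⟩ hXK
  have hhull : hull D (∑ i ∈ S, F i) = ∑ i ∈ S, F i := hull_eq_self hD.ge
  have hkneser := sum_card_hull_add_card_le (D := D) (fun i hi ↦ ⟨a i, haF i hi⟩)
    (hhull.symm ▸ hD.le)
  have hgain : ∑ i ∈ S, (∑ j, #(hull D (A j (e i))) + Nat.card K) ≤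
      ∑ i ∈ S, (∑ j, #(hull K (A j (e i))) + #(hull D (F i))) :=
    sum_le_sum fun i hi ↦ sum_card_hull_add_card_le_sum_card_hull_add
      (B := fun j ↦ A j (e i)) (h.mem i hi) hDK
  rw [sum_add_distrib, sum_add_distrib, sum_const, smul_eq_mul,
    ← sum_image (f := fun k ↦ ∑ j, #(hull D (A j k))) h.injOn,
    ← sum_image (f := fun k ↦ ∑ j, #(hull K (A j k))) h.injOn, ← hI.wt_eq, ← hI.wt_eq,
    hIS] at hgain
  rw [hhull] at hkneser
  omega

end Dominated

section Split

variable {G J N ι : Type*} [AddCommGroup G] {A : J → ι → Finset G} {D K : AddSubgroup G}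
  {j : J} {k : ι} {g x : G}

/-- Cut every set of the family into its intersections with the cosets of `K`; the coset becomes
part of the colour. -/
noncomputable def split (K : AddSubgroup G) (A : J → ι → Finset G) (j : J × (G ⧸ K)) (k : ι) :
    Finset G :=
  {g ∈ A j.1 k | (g : G ⧸ K) = j.2}

variable {c : N → J} {S : Finset N} {e : N → ι} {a : N → G}

lemma IsSelection.split (h : IsSelection A c S e a) :
    IsSelection (split K A) (fun i ↦ (c i, (a i : G ⧸ K))) S e a :=
  ⟨h.injOn, fun i hi ↦ mem_filter.2 ⟨h.mem i hi, rfl⟩⟩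

lemma sum_eq_sum_erase_erase_add {u v : N} (hu : u ∈ S) (hv : v ∈ S.erase u) :
    ∑ i ∈ S, a i = ∑ i ∈ (S.erase u).erase v, a i + (a u + a v) := by
  rw [← add_sum_erase _ _ hu, ← add_sum_erase _ _ hv]
  abel

variable [Fintype G]

lemma split_subset_hull_singleton : split K A (j, (g : G ⧸ K)) k ⊆ hull K {g} := fun _ hy ↦
  mem_hull_singleton.2 <| QuotientAddGroup.eq_iff_sub_mem.1 (mem_filter.1 hy).2

lemma coloredSums_split_subset {c : N → J × (G ⧸ K)} :
    coloredSums (split K A) c S ⊆ coloredSums A (fun i ↦ (c i).1) S := fun x hx ↦ by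
  obtain ⟨e, a, h, rfl⟩ := mem_coloredSums.1 hx
  exact IsSelection.sum_mem_coloredSums ⟨h.injOn, fun i hi ↦ mem_of_mem_filter _ (h.mem i hi)⟩

lemma coloredSums_subset_hull_singleton (h : ∀ i ∈ S, ∀ k, A (c i) k ⊆ hull K {a i}) :
    coloredSums A c S ⊆ hull K {∑ i ∈ S, a i} := fun x hx ↦ by
  obtain ⟨e, b, hb, rfl⟩ := mem_coloredSums.1 hx
  rw [mem_hull_singleton, ← sum_sub_distrib]
  exact K.sum_mem fun i hi ↦ mem_hull_singleton.1 (h i hi _ (hb.mem i hi))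

lemma coloredSums_split_subset_hull_singleton (hDK : D ≤ K) :
    coloredSums (fun j k ↦ hull D (split K A j k)) (fun i ↦ (c i, (a i : G ⧸ K))) S ⊆
      hull K {∑ i ∈ S, a i} :=
  coloredSums_subset_hull_singleton fun _ _ _ ↦
    hull_subset_hull_singleton hDK split_subset_hull_singleton

lemma mem_hull_split (hDK : D ≤ K) {Q : G ⧸ K} :
    g ∈ hull D (split K A (j, Q) k) ↔ Q = g ∧ g ∈ hull D (A j k) := by
  simp only [mem_hull, split, mem_filter]
  constructor
  · rintro ⟨b, ⟨hb, rfl⟩, hgb⟩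
    exact ⟨(QuotientAddGroup.eq_iff_sub_mem.2 (hDK hgb)).symm, b, hb, hgb⟩
  · rintro ⟨rfl, b, hb, hgb⟩
    exact ⟨b, ⟨hb, (QuotientAddGroup.eq_iff_sub_mem.2 (hDK hgb)).symm⟩, hgb⟩

lemma wt_split [Fintype ι] [Fintype J] (hDK : D ≤ K) (L : ℕ) : wt L D (split K A) = wt L D A := by
  rw [wt, Fintype.sum_prod_type]
  refine sum_congr rfl fun j _ ↦ ?_
  rw [sum_comm]
  refine sum_congr rfl fun g _ ↦ ?_
  rw [Fintype.sum_eq_single (g : G ⧸ K) fun Q hQ ↦ ?_]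
  · simp only [deg, mem_hull_split hDK, true_and]
  · simp only [deg, mem_hull_split hDK, hQ, false_and, filter_false, card_empty, Nat.min_zero]

end Split

section DeletePair

variable {G J N ι : Type*} {A : J → ι → Finset G} {p q : ι} {c : N → J} {S : Finset N}
  {e : N → ι} {a : N → G} {u v : N}

lemma deletePair_comm : deletePair p q A = deletePair q p A := by
  ext j k : 2
  by_cases hp : k = p
  · rw [hp, deletePair_left, deletePair_right]
  by_cases hq : k = q
  · rw [hq, deletePair_left, deletePair_right]
  rw [deletePair_of_ne hp hq, deletePair_of_ne hq hp]

lemma isSelection_deletePair_iff :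
    IsSelection (deletePair p q A) c S e a ↔
      IsSelection A c S e a ∧ ∀ i ∈ S, e i ≠ p ∧ e i ≠ q := by
  constructor
  · intro h
    have hne (i) (hi : i ∈ S) : e i ≠ p ∧ e i ≠ q := by
      constructor <;> intro heq <;> have := h.mem i hi
      · rw [heq, deletePair_left] at this
        exact notMem_empty _ this
      · rw [heq, deletePair_right] at this
        exact notMem_empty _ this
    refine ⟨⟨h.injOn, fun i hi ↦ ?_⟩, hne⟩
    rw [← deletePair_of_ne (A := A) (hne i hi).1 (hne i hi).2]
    exact h.mem i hi
  · rintro ⟨h, hne⟩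
    refine ⟨h.injOn, fun i hi ↦ ?_⟩
    rw [deletePair_of_ne (hne i hi).1 (hne i hi).2]
    exact h.mem i hi

lemma IsSelection.deletePair (h : IsSelection A c S e a) (hu : u ∈ S) (hv : v ∈ S.erase u) :
    IsSelection (deletePair (e u) (e v) A) c ((S.erase u).erase v) e a := by
  refine isSelection_deletePair_iff.2
    ⟨h.mono ((erase_subset _ _).trans (erase_subset _ _)), fun i hi ↦ ⟨fun heq ↦ ?_, fun heq ↦ ?_⟩⟩
  · exact ne_of_mem_erase (mem_of_mem_erase hi)
      (h.injOn (mem_of_mem_erase (mem_of_mem_erase hi)) hu heq)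
  · exact ne_of_mem_erase hi
      (h.injOn (mem_of_mem_erase (mem_of_mem_erase hi)) (mem_of_mem_erase hv) heq)

variable [AddCommGroup G] [Fintype G]

lemma coloredSums_deletePair_add_subset (hpq : p ≠ q) (hu : u ∈ S) (hv : v ∈ S.erase u) :
    coloredSums (deletePair p q A) c ((S.erase u).erase v) + (A (c u) p + A (c v) q) ⊆
      coloredSums A c S := by
  intro x hx
  obtain ⟨y, hy, z, hz, rfl⟩ := mem_add.1 hx
  obtain ⟨b, hb, b', hb', rfl⟩ := mem_add.1 hz
  obtain ⟨e, a, h, rfl⟩ := mem_coloredSums.1 hy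
  obtain ⟨h, hne⟩ := isSelection_deletePair_iff.1 h
  have h' := h.update (fun i hi ↦ (hne i hi).2) hb'
  convert h'.add_sum_mem_coloredSums (k := p) hu (fun i hi ↦ ?_) hb using 1
  · rw [sum_update_of_mem hv, sdiff_singleton_eq_erase]
    abel
  · by_cases hiv : i = v
    · rw [hiv, Function.update_self]
      exact hpq.symm
    · rw [Function.update_of_ne hiv]
      exact (hne i (mem_erase.2 ⟨hiv, hi⟩)).1

end DeletePair

section CrossSums

variable {G J ι : Type*} [AddCommGroup G] [Fintype G] {p q : ι} {A : J → ι → Finset G}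
  {K : AddSubgroup G} {i j : J} {a b : G}

/-- The sums near `a + b` of an element of colour `i` and an element of colour `j`, one from each of
the members `p` and `q`. -/
noncomputable def crossSums (K : AddSubgroup G) (p q : ι) (A : J → ι → Finset G) (i j : J)
    (a b : G) : Finset G :=
  (A i p ∩ hull K {a} + A j q ∩ hull K {b}) ∪ (A i q ∩ hull K {a} + A j p ∩ hull K {b})

lemma add_mem_crossSums (ha : a ∈ A i p) (hb : b ∈ A j q) : a + b ∈ crossSums K p q A i j a b :=
  mem_union_left _ <| add_mem_add (mem_inter.2 ⟨ha, subset_hull (mem_singleton_self a)⟩)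
    (mem_inter.2 ⟨hb, subset_hull (mem_singleton_self b)⟩)

lemma crossSums_subset_hull_singleton : crossSums K p q A i j a b ⊆ hull K {a + b} := by
  rw [← singleton_add_singleton, ← hull_add_hull]
  exact union_subset (add_subset_add inter_subset_right inter_subset_right)
    (add_subset_add inter_subset_right inter_subset_right)

lemma coloredSums_deletePair_add_crossSums_subset {N : Type*} {c : N → J} {S : Finset N} {u v : N}
    (hpq : p ≠ q) (hu : u ∈ S) (hv : v ∈ S.erase u) :
    coloredSums (deletePair p q A) c ((S.erase u).erase v) + crossSums K p q A (c u) (c v) a b ⊆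
      coloredSums A c S := by
  rw [crossSums, add_union]
  refine union_subset ?_ ?_
  · exact (add_subset_add_left (add_subset_add inter_subset_left inter_subset_left)).trans
      (coloredSums_deletePair_add_subset hpq hu hv)
  · rw [deletePair_comm]
    exact (add_subset_add_left (add_subset_add inter_subset_left inter_subset_left)).trans
      (coloredSums_deletePair_add_subset hpq.symm hu hv)

end CrossSums

section Deficit

variable {G J ι : Type*} [AddCommGroup G] [Fintype G] [Fintype ι] [Fintype J] {L : ℕ} {p q : ι}
  {A : J → ι → Finset G} {D K : AddSubgroup G} {i j : J} {g h : G}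

/-- The pairs `(j, g)` at which the union of the members `p` and `q` fails to meet `g + D` although
it meets `g + K`, which at most `L` members meet. -/
noncomputable def deficit (L : ℕ) (p q : ι) (A : J → ι → Finset G) (D K : AddSubgroup G) :
    Finset (J × G) :=
  {x | x.2 ∈ hull K (A x.1 p ∪ A x.1 q) ∧ x.2 ∉ hull D (A x.1 p ∪ A x.1 q) ∧
    deg K (A x.1) x.2 ≤ L}

lemma min_deg_uncross_add_le (hpq : p ≠ q) (hDK : D ≤ K) :
    min (L + 2) (deg D (uncross p q A j) g) + min L (deg K (deletePair p q A j) g) +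
        (if (j, g) ∈ deficit (L + 2) p q A D K then 1 else 0) ≤
      min (L + 2) (deg K (uncross p q A j) g) + min L (deg D (deletePair p q A j) g) := by
  have hrest : deg D (deletePair p q A j) g ≤ deg K (deletePair p q A j) g :=
    deg_mono hDK (fun _ ↦ subset_rfl) g
  have hunion : g ∈ hull D (A j p ∪ A j q) → g ∈ hull K (A j p ∪ A j q) :=
    fun hg ↦ hull_mono hDK subset_rfl hg
  have hinter : g ∈ hull D (A j p ∩ A j q) → g ∈ hull K (A j p ∩ A j q) :=
    fun hg ↦ hull_mono hDK subset_rfl hg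
  have hsub : g ∈ hull D (A j p ∩ A j q) → g ∈ hull D (A j p ∪ A j q) :=
    fun hg ↦ hull_mono le_rfl (inter_subset_left.trans subset_union_left) hg
  have hsub' : g ∈ hull K (A j p ∩ A j q) → g ∈ hull K (A j p ∪ A j q) :=
    fun hg ↦ hull_mono le_rfl (inter_subset_left.trans subset_union_left) hg
  simp only [deficit, mem_filter_univ, deg_uncross hpq,
    deg_eq_add_deg_deletePair (A := A) (K := K) hpq, hull_union, mem_union] at *
  split_ifs <;> grind

lemma wt_uncross_add_card_deficit_le (hpq : p ≠ q) (hDK : D ≤ K) :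
    wt (L + 2) D (uncross p q A) + wt L K (deletePair p q A) + #(deficit (L + 2) p q A D K) ≤
      wt (L + 2) K (uncross p q A) + wt L D (deletePair p q A) := by
  have hcard : #(deficit (L + 2) p q A D K) =
      ∑ j, ∑ g, if (j, g) ∈ deficit (L + 2) p q A D K then 1 else 0 := by
    rw [← Fintype.sum_prod_type', sum_boole, filter_univ_mem, Nat.cast_id]
  rw [hcard]
  simp only [wt, ← sum_add_distrib]
  exact sum_le_sum fun j _ ↦ sum_le_sum fun g _ ↦ min_deg_uncross_add_le hpq hDK

lemma singleton_product_subset_deficit (hDK : D ≤ K) (hg : g ∈ A j p ∪ A j q)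
    (hdeg : deg K (A j) g ≤ L) :
    {j} ×ˢ (hull K {g} \ hull D ((A j p ∪ A j q) ∩ hull K {g})) ⊆ deficit L p q A D K := by
  rintro ⟨i, y⟩ hy
  rw [mem_product, mem_singleton, mem_sdiff] at hy
  obtain ⟨rfl, hyg, hyD⟩ := hy
  refine (mem_filter_univ _).2 ⟨?_, fun hy ↦ hyD ?_, ?_⟩
  · exact hull_mono le_rfl (singleton_subset_iff.2 hg) hyg
  · obtain ⟨b, hb, hyb⟩ := mem_hull.1 hy
    exact mem_hull.2 ⟨b, mem_inter.2 ⟨hb, (mem_hull_congr (hDK hyb)).1 hyg⟩, hyb⟩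
  · rwa [deg_congr (mem_hull_singleton.1 hyg)]

lemma card_le_card_deficit_add {a b : G} (hDK : D ≤ K) (ha : a ∈ A i p) (hb : b ∈ A j q)
    (hdega : deg K (A i) a ≤ L) (hdegb : deg K (A j) b ≤ L)
    (hD : stabilizer G (hull D (crossSums K p q A i j a b)) ≤ D)
    (hK : ¬ hull K {a + b} ⊆ hull D (crossSums K p q A i j a b)) :
    Nat.card K ≤
      #(deficit L p q A D K) + #(hull D (crossSums K p q A i j a b)) + Nat.card D := by
  unfold crossSums at *
  have hP : (A i p ∩ hull K {a}).Nonempty := ⟨a, mem_inter.2 ⟨ha, subset_hull (by simp)⟩⟩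
  have hP' : (A j q ∩ hull K {b}).Nonempty := ⟨b, mem_inter.2 ⟨hb, subset_hull (by simp)⟩⟩
  have hslicea := singleton_product_subset_deficit hDK (mem_union_left (A i q) ha) hdega
  have hsliceb := singleton_product_subset_deficit hDK (mem_union_right (A j p) hb) hdegb
  have hcarda := card_le_card_sdiff_add_card (s := hull K {a})
    (t := hull D ((A i p ∪ A i q) ∩ hull K {a}))
  have hcardb := card_le_card_sdiff_add_card (s := hull K {b})
    (t := hull D ((A j p ∪ A j q) ∩ hull K {b}))
  rw [card_hull_singleton] at hcarda hcardb
  by_cases hsame : i = j ∧ a - b ∈ K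
  · obtain ⟨rfl, hab⟩ := hsame
    rw [← hull_singleton_congr hab] at hP' hD ⊢
    rw [add_comm (A i q ∩ _), union_idempotent] at hD ⊢
    have hkneser := card_hull_add_card_hull_le hP hP' hD
    have hunion := card_union_le (hull D (A i p ∩ hull K {a})) (hull D (A i q ∩ hull K {a}))
    rw [← hull_union, ← union_inter_distrib_right] at hunion
    have := card_le_card hslicea
    rw [card_product, card_singleton, one_mul] at this
    omega
  · have hcount := card_hull_union_add_card_hull_union_le hDK inter_subset_right
      inter_subset_right inter_subset_right inter_subset_right hP hP' hD hK
    rw [← union_inter_distrib_right, ← union_inter_distrib_right, union_comm (A j q)] at hcount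
    have hdisj : Disjoint (({i} : Finset J) ×ˢ (hull K {a} \ hull D ((A i p ∪ A i q) ∩ hull K {a})))
        ({j} ×ˢ (hull K {b} \ hull D ((A j p ∪ A j q) ∩ hull K {b}))) := by
      rw [disjoint_product, disjoint_singleton]
      refine (not_and_or.1 hsame).imp_right fun hab ↦ ?_
      exact (disjoint_hull_singleton hab).mono sdiff_subset sdiff_subset
    have := card_le_card (union_subset hslicea hsliceb)
    rw [card_union_of_disjoint hdisj, card_product, card_product, card_singleton, card_singleton,
      one_mul, one_mul] at this
    omega

end Deficit

section Main

variable {G J N ι : Type*} [AddCommGroup G] [Fintype G]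
  {A : J → ι → Finset G} {c : N → J} {S : Finset N} {e : N → ι} {a : N → G} {p q : ι} {u v : N}
  {K M : AddSubgroup G}

lemma coloredSums_split_add_crossSums_subset_hull_singleton (hu : u ∈ S) (hv : v ∈ S.erase u) :
    coloredSums (split K (deletePair p q A)) (fun i ↦ (c i, (a i : G ⧸ K))) ((S.erase u).erase v) +
        crossSums K p q A (c u) (c v) (a u) (a v) ⊆ hull K {∑ i ∈ S, a i} := by
  rw [sum_eq_sum_erase_erase_add hu hv, ← singleton_add_singleton, ← hull_add_hull]
  refine add_subset_add ?_ crossSums_subset_hull_singleton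
  simpa only [hull_bot] using coloredSums_split_subset_hull_singleton bot_le

variable [Fintype ι] [Fintype J]

lemma wt_uncross_add_mul_card_le {L : ℕ} {D : AddSubgroup G} {Y Z : Finset G} (hpq : p ≠ q)
    (hDK : D ≤ K) (hD : stabilizer G (Y + Z) = D) (hY : Y.Nonempty) (hZ : Z.Nonempty)
    (hdeficit : Nat.card K ≤ #(deficit (L + 2) p q A D K) + #(hull D Z) + Nat.card D)
    (hrest : wt L D (deletePair p q A) + L * Nat.card K + Nat.card D ≤
      #(hull D Y) + L * Nat.card D + wt L K (deletePair p q A)) :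
    wt (L + 2) D (uncross p q A) + (L + 1) * Nat.card K ≤
      wt (L + 2) K (uncross p q A) + #(Y + Z) + (L + 1) * Nat.card D := by
  have hhull : hull D (Y + Z) = Y + Z := hull_eq_self hD.ge
  have hkneser := card_hull_add_card_hull_le hY hZ (hhull.symm ▸ hD.le)
  have hwt := wt_uncross_add_card_deficit_le (L := L) (A := A) hpq hDK
  rw [hhull] at hkneser
  rw [add_one_mul, add_one_mul]
  omega

/- The sums near `∑ a` are produced by exchanging the members used by `u` and `v`, which costs at
most the deficit, while the other slots are covered by induction after passing to cosets of `K`. -/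
lemma exists_subset_coloredSums_of_exchange (h : IsSelection A c S e a) (hu : u ∈ S)
    (hv : v ∈ S.erase u) (hdegu : deg K (A (c u)) (a u) ≤ #S) (hdegv : deg K (A (c v)) (a v) ≤ #S)
    (hx : ¬ hull K {∑ i ∈ S, a i} ⊆ coloredSums A c S)
    (ih : ∀ (B : J × (G ⧸ K) → ι → Finset G) (c' : N → J × (G ⧸ K)),
      ∀ x ∈ coloredSums B c' ((S.erase u).erase v),
        coloredSums B c' ((S.erase u).erase v) ⊆ hull K {x} →
          SumsBound K B c' ((S.erase u).erase v)) :
    ∃ X ⊆ coloredSums A c S, ∑ i ∈ S, a i ∈ X ∧ X ⊆ hull K {∑ i ∈ S, a i} ∧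
      wt #S (stabilizer G X) (uncross (e u) (e v) A) + (#S - 1) * Nat.card K ≤
        wt #S K (uncross (e u) (e v) A) + #X + (#S - 1) * Nat.card (stabilizer G X) := by
  have huv : u ≠ v := (ne_of_mem_erase hv).symm
  have hne : e u ≠ e v := fun heq ↦ huv (h.injOn hu (mem_of_mem_erase hv) heq)
  have hS : #S = #((S.erase u).erase v) + 2 := by
    rw [← card_erase_add_one hu, ← card_erase_add_one hv]
  have hsum := sum_eq_sum_erase_erase_add (a := a) hu hv
  have hsel := (h.deletePair hu hv).split (K := K)
  have hmem := hsel.sum_mem_coloredSums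
  set S' := (S.erase u).erase v
  set c' : N → J × (G ⧸ K) := fun i ↦ (c i, a i)
  set B := split K (deletePair (e u) (e v) A)
  set Y := coloredSums B c' S'
  set Z := crossSums K (e u) (e v) A (c u) (c v) (a u) (a v)
  have hZmem : a u + a v ∈ Z := add_mem_crossSums (h.mem u hu) (h.mem v (mem_of_mem_erase hv))
  have hYZ : Y + Z ⊆ coloredSums A c S := (add_subset_add_right coloredSums_split_subset).trans
    (coloredSums_deletePair_add_crossSums_subset hne hu hv)
  have hxX : ∑ i ∈ S, a i ∈ Y + Z := hsum ▸ add_mem_add hmem hZmem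
  have hXK : Y + Z ⊆ hull K {∑ i ∈ S, a i} :=
    coloredSums_split_add_crossSums_subset_hull_singleton hu hv
  refine ⟨Y + Z, hYZ, hxX, hXK, ?_⟩
  generalize hD : stabilizer G (Y + Z) = D
  have hDK : D ≤ K := hD ▸ stabilizer_le_of_subset ⟨_, hxX⟩ hXK
  have hDY : stabilizer G (hull D Y) = D := stabilizer_hull_eq hD
  have hDZ : stabilizer G (hull D Z) = D := stabilizer_hull_eq (add_comm Z Y ▸ hD)
  have hdeficit : Nat.card K ≤
      #(deficit (#S' + 2) (e u) (e v) A D K) + #(hull D Z) + Nat.card D := by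
    refine card_le_card_deficit_add hDK (h.mem u hu) (h.mem v (mem_of_mem_erase hv))
      (hS ▸ hdegu) (hS ▸ hdegv) hDZ.le fun hK ↦ hx ?_
    rw [hsum, ← singleton_add_singleton, ← add_hull]
    refine (add_subset_add (singleton_subset_iff.2 hmem) hK).trans ?_
    rwa [add_hull, hull_eq_self hD.ge]
  have hrest := (ih (fun j k ↦ hull D (B j k)) c' _ (IsSelection.sum_mem_coloredSums
    ⟨hsel.injOn, fun i hi ↦ subset_hull (hsel.mem i hi)⟩)
      (coloredSums_split_subset_hull_singleton hDK)).hull_le hDK ⟨_, hmem⟩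
  rw [wt_split hDK, wt_split le_rfl, hDY] at hrest
  rw [hS]
  exact wt_uncross_add_mul_card_le hne hDK hD ⟨_, hmem⟩ ⟨_, hZmem⟩ hdeficit hrest

end Main

lemma sum_card_compl_uncross_lt {G J ι : Type*} [Fintype J] [Fintype ι] {A : J → ι → Finset G}
    {p q : ι} {I : Finset ι} (hp : p ∈ I) (hq : q ∉ I) {j : J}
    (hj : ¬ A j q ⊆ A j p) :
    ∑ k ∈ Iᶜ, ∑ j, #(uncross p q A j k) < ∑ k ∈ Iᶜ, ∑ j, #(A j k) := by
  have hle (i : J) {k : ι} (hk : k ∈ Iᶜ) : #(uncross p q A i k) ≤ #(A i k) := by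
    refine card_le_card ?_
    by_cases hkq : k = q
    · rw [hkq, uncross_right]
      exact inter_subset_right
    · have hkp : k ≠ p := fun heq ↦ mem_compl.1 hk (heq ▸ hp)
      rw [uncross_of_ne hkp hkq]
  refine sum_lt_sum (fun k hk ↦ sum_le_sum fun i _ ↦ hle i hk) ⟨q, mem_compl.2 hq, ?_⟩
  refine sum_lt_sum (fun i _ ↦ hle i (mem_compl.2 hq)) ⟨j, mem_univ j, ?_⟩
  rw [uncross_right]
  exact card_lt_card ⟨inter_subset_right, fun h ↦ hj (h.trans inter_subset_left)⟩

section SumsBound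

variable {G J N ι : Type*} [AddCommGroup G] [Fintype G] [Fintype ι] [Fintype J]
  {A B : J → ι → Finset G} {c : N → J} {S : Finset N} {M : AddSubgroup G} {x : G} {p q : ι}

lemma sumsBound_of_step {C₀ : Finset G} {K₀ : AddSubgroup G} (hS : S.Nonempty)
    (hbot : wt #S ⊥ A ≤ wt #S ⊥ B) (hM : wt #S M B ≤ wt #S M A) (hC₀ : C₀ ⊆ coloredSums A c S)
    (hK₀ : K₀ ≤ stabilizer G C₀)
    (base : wt #S K₀ B + #S * Nat.card M + Nat.card K₀ ≤
      #C₀ + #S * Nat.card K₀ + wt #S M B)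
    (step : ∀ K ≤ K₀, ∀ x ∈ coloredSums A c S, ¬ hull K {x} ⊆ coloredSums A c S →
      Disjoint (hull K {x}) C₀ → ∃ X ⊆ coloredSums A c S, x ∈ X ∧ X ⊆ hull K {x} ∧
        wt #S (stabilizer G X) B + (#S - 1) * Nat.card K ≤
          wt #S K B + #X + (#S - 1) * Nat.card (stabilizer G X)) :
    SumsBound M A c S := by
  have := add_card_add_mul_card_le_of_step (wt_mono #S B) (#S - 1) hC₀ hK₀ step
  obtain ⟨L, hL⟩ := Nat.exists_eq_add_one.2 hS.card_pos
  simp only [SumsBound, hL, add_tsub_cancel_right, add_one_mul] at *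
  omega

lemma sumsBound_of_dominates {I : Finset ι} (hI : Dominates I A) (hIS : #I = #S)
    (hS : S.Nonempty) (hx : x ∈ coloredSums A c S) : SumsBound M A c S := by
  obtain ⟨C₀, hC₀, -, -, base⟩ := hI.exists_subset_coloredSums (K := M) hIS hx
  refine sumsBound_of_step hS le_rfl le_rfl hC₀ le_rfl base fun K _ y hy _ _ ↦ ?_
  obtain ⟨X, hX, hyX, hXK, hcard⟩ := hI.exists_subset_coloredSums (K := K) hIS hy
  refine ⟨X, hX, hyX, hXK, ?_⟩
  have hDK := AddSubgroup.card_le_of_le (stabilizer_le_of_subset ⟨y, hyX⟩ hXK)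
  obtain ⟨L, hL⟩ := Nat.exists_eq_add_one.2 hS.card_pos
  simp only [hL, add_tsub_cancel_right, add_one_mul] at *
  omega

lemma sumsBound_of_uncross (hpq : p ≠ q) (hS : S.Nonempty)
    (hx : x ∈ coloredSums (uncross p q A) c S) (hM : coloredSums A c S ⊆ hull M {x})
    (ih_hull : SumsBound M (fun j k ↦
      hull (stabilizer G (coloredSums (uncross p q A) c S)) (uncross p q A j k)) c S)
    (ih_slots : ∀ (K : AddSubgroup G) (B : J × (G ⧸ K) → ι → Finset G) (c' : N → J × (G ⧸ K))
      (S' : Finset N), #S' < #S → ∀ y ∈ coloredSums B c' S',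
        coloredSums B c' S' ⊆ hull K {y} → SumsBound K B c' S') :
    SumsBound M A c S := by
  have hsub : coloredSums (uncross p q A) c S ⊆ coloredSums A c S := coloredSums_uncross_subset hpq
  have base := ih_hull.hull_le (stabilizer_le_of_subset ⟨x, hx⟩ (hsub.trans hM)) ⟨x, hx⟩
  rw [hull_eq_self le_rfl] at base
  refine sumsBound_of_step hS (wt_bot_uncross hpq _).ge (wt_uncross_le hpq _) hsub le_rfl base
    fun K _ y hy hyK hdisj ↦ ?_
  obtain ⟨e, a, h, rfl⟩ := mem_coloredSums.1 hy
  obtain ⟨u, hu, v, hv, rfl, rfl, hdegu, hdegv⟩ := exists_slots_of_disjoint_uncross hpq h hdisj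
  have hvu : v ∈ S.erase u := mem_erase.2 ⟨fun huv ↦ hpq (congrArg e huv).symm, hv⟩
  exact exists_subset_coloredSums_of_exchange h hu hvu hdegu hdegv hyK fun B c' ↦
    ih_slots K B c' _ ((card_le_card (erase_subset _ _)).trans_lt (card_erase_lt_of_mem hu))

end SumsBound

theorem IsSelection.sumsBound {G J : Type u} {N ι : Type*} [AddCommGroup G] [Fintype G] [Fintype J]
    [Fintype ι] {A : J → ι → Finset G} {c : N → J} {S : Finset N} {e : N → ι} {a : N → G}
    {M : AddSubgroup G} (h : IsSelection A c S e a)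
    (hM : coloredSums A c S ⊆ hull M {∑ i ∈ S, a i}) : SumsBound M A c S := by
  obtain rfl | hS := S.eq_empty_or_nonempty
  · exact sumsBound_of_card_eq_zero card_empty ⟨_, h.sum_mem_coloredSums⟩
  by_cases hI : Dominates (S.image e) A
  · exact sumsBound_of_dominates hI (card_image_of_injOn h.injOn) hS h.sum_mem_coloredSums
  simp only [Dominates, not_forall] at hI
  obtain ⟨p, hp, q, hq, j, hj⟩ := hI
  have hpq : p ≠ q := fun heq ↦ hq (heq ▸ hp)
  have hB : IsSelection (uncross p q A) c S e a :=
    isSelection_uncross_of_ne_right hpq h fun i hi heq ↦ hq (heq ▸ mem_image_of_mem e hi)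
  have hsub : coloredSums (uncross p q A) c S ⊆ coloredSums A c S := coloredSums_uncross_subset hpq
  by_cases hsums : coloredSums (uncross p q A) c S = coloredSums A c S
  · have hpotential := sum_card_compl_uncross_lt hp hq hj
    have ih := hB.sumsBound (hsums ▸ hM)
    have := wt_uncross_le (A := A) (K := M) hpq #S
    rw [SumsBound, hsums, wt_bot_uncross hpq] at ih
    exact ih.trans (Nat.add_le_add_left this _)
  · have hcard := card_lt_card (hsub.ssubset_of_ne hsums)
    have hhull : coloredSums (fun j k ↦
        hull (stabilizer G (coloredSums (uncross p q A) c S)) (uncross p q A j k)) c S =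
          coloredSums (uncross p q A) c S := by
      rw [← hull_coloredSums hS, hull_eq_self le_rfl]
    refine sumsBound_of_uncross hpq hS hB.sum_mem_coloredSums hM ?_ fun K B c' S' hS' y hy hyK ↦ ?_
    · refine IsSelection.sumsBound (e := e) (a := a)
        ⟨hB.injOn, fun i hi ↦ subset_hull (hB.mem i hi)⟩ ?_
      rw [hhull]
      exact hsub.trans hM
    · obtain ⟨e', a', h', rfl⟩ := mem_coloredSums.1 hy
      exact h'.sumsBound hyK
termination_by (#S, #(coloredSums A c S), ∑ k ∈ (S.image e)ᶜ, ∑ j, #(A j k))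
decreasing_by
  · exact Prod.lex_def.2 <| .inr ⟨rfl, Prod.lex_def.2 <| .inr ⟨congrArg card hsums, hpotential⟩⟩
  · exact Prod.lex_def.2 <| .inr
      ⟨rfl, Prod.lex_def.2 <| .inl <| (congrArg card hhull).trans_lt hcard⟩
  · exact Prod.lex_def.2 <| .inl hS'

section Conclusion

lemma mem_coloredSums_univ_fin {G J ι : Type*} [AddCommGroup G] [Fintype G] {A : ι → Finset G}
    {l : ℕ} {c : Fin l → J} {x : G} :
    x ∈ coloredSums (fun _ ↦ A) c univ ↔
      ∃ (s : Finset ι) (f : ι → G), #s = l ∧ (∀ i ∈ s, f i ∈ A i) ∧ ∑ i ∈ s, f i = x := by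
  rw [mem_coloredSums]
  constructor
  · rintro ⟨e, a, h, rfl⟩
    have he : Function.Injective e := Set.injOn_univ.1 (by simpa using h.injOn)
    refine ⟨univ.image e, Function.extend e a 0, ?_, ?_, ?_⟩
    · rw [card_image_of_injective _ he, card_fin]
    · simpa only [forall_mem_image, he.extend_apply] using h.mem
    · simp only [sum_image he.injOn, he.extend_apply]
  · rintro ⟨s, f, hs, hf, rfl⟩
    refine ⟨fun i ↦ (s.equivFinOfCardEq hs).symm i, fun i ↦ f ((s.equivFinOfCardEq hs).symm i),
      ⟨?_, fun i _ ↦ hf _ (Subtype.prop _)⟩, ?_⟩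
    · exact (Subtype.val_injective.comp (Equiv.injective _)).injOn
    · rw [Equiv.sum_comp _ fun i : s ↦ f i, sum_coe_sort]

variable {G J : Type u} {ι : Type*} [AddCommGroup G] [Fintype G] [Fintype ι] [Unique J]

lemma wt_eq_card_mul_sum (L : ℕ) (K : AddSubgroup G) [Fintype (G ⧸ K)] (A : J → ι → Finset G) :
    wt L K A = Nat.card K *
      ∑ Q : G ⧸ K, min L (Nat.card {i // ∃ a ∈ A default i, (a : G ⧸ K) = Q}) := by
  have hmem {i : ι} {g : G} : g ∈ hull K (A default i) ↔ ∃ a ∈ A default i, (a : G ⧸ K) = g := by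
    simp only [mem_hull, QuotientAddGroup.eq, neg_add_eq_sub]
  have hdeg (g : G) :
      deg K (A default) g = Nat.card {i // ∃ a ∈ A default i, (a : G ⧸ K) = (g : G ⧸ K)} := by
    simp only [deg, hmem, Nat.card_eq_fintype_card, Fintype.card_subtype]
  have hfiber (Q : G ⧸ K) : #{g : G | (g : G ⧸ K) = Q} = Nat.card K := by
    obtain ⟨x, rfl⟩ := QuotientAddGroup.mk_surjective Q
    rw [← card_hull_singleton (x := x)]
    congr 1
    ext g
    rw [mem_filter_univ, mem_hull_singleton, eq_comm, QuotientAddGroup.eq, neg_add_eq_sub]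
  rw [wt, Fintype.sum_unique, mul_sum, ← sum_fiberwise _ fun g : G ↦ (g : G ⧸ K)]
  refine sum_congr rfl fun Q _ ↦ ?_
  rw [← hfiber Q, ← smul_eq_mul]
  refine sum_eq_card_nsmul fun g hg ↦ ?_
  rw [hdeg, (mem_filter_univ _).1 hg]

lemma wt_le_mul_card (L : ℕ) (K : AddSubgroup G) (A : J → ι → Finset G) :
    wt L K A ≤ L * Nat.card G := by
  rw [wt, Fintype.sum_unique, mul_comm, Nat.card_eq_fintype_card]
  exact sum_le_card_nsmul _ _ _ fun _ _ ↦ min_le_left _ _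

lemma wt_stabilizer_add_card_le {N : Type*} {A : J → ι → Finset G} {c : N → J} {S : Finset N}
    (hne : (coloredSums A c S).Nonempty) :
    wt #S (stabilizer G (coloredSums A c S : Set G)) A +
        Nat.card (stabilizer G (coloredSums A c S : Set G)) ≤
      #(coloredSums A c S) + #S * Nat.card (stabilizer G (coloredSums A c S : Set G)) := by
  rw [stabilizer_coe_finset]
  obtain ⟨x, hx⟩ := hne
  obtain ⟨e, a, h, -⟩ := mem_coloredSums.1 hx
  have hhull : IsSelection (fun j k ↦ hull (stabilizer G (coloredSums A c S)) (A j k)) c S e a :=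
    ⟨h.injOn, fun i hi ↦ subset_hull (h.mem i hi)⟩
  have hbound := (hhull.sumsBound (M := ⊤) fun y _ ↦ mem_hull_singleton.2 trivial).hull_le le_top
    ⟨x, hx⟩
  have hle := wt_le_mul_card #S ⊤ A
  rw [hull_eq_self le_rfl, AddSubgroup.card_top] at hbound
  omega

end Conclusion

end DeVosGoddynMohar

open DeVosGoddynMohar
open scoped Pointwise

/-- Devos–Goddyn–Mohar theorem. -/
theorem devos_goddyn_mohar {G : Type*} [AddCommGroup G] [Fintype G] [DecidableEq G]
    (m l : ℕ) (hlm : l ≤ m) (A : Fin m → Finset G) (hA : ∀ i, (A i).Nonempty)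
    (T : Set G)
    (hT : T = {g | ∃ (s : Finset (Fin m)) (f : Fin m → G),
      s.card = l ∧ (∀ i ∈ s, f i ∈ A i) ∧ ∑ i ∈ s, f i = g})
    (H : AddSubgroup G) [DecidablePred (· ∈ H)]
    (hH : ∀ h : G, h ∈ H ↔ (h + ·) '' T = T)
    (hne : T.Nonempty) :
    (Nat.card T : ℤ) ≥ (Nat.card H : ℤ) *
      (1 - l + ∑ Q : G ⧸ H, min (l : ℤ)
        (Nat.card {i : Fin m // ∃ a ∈ A i, (QuotientAddGroup.mk a : G ⧸ H) = Q})) := by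
  have hsums : (coloredSums (fun _ ↦ A) (fun _ : Fin l ↦ PUnit.unit) Finset.univ : Set G) = T := by
    ext x
    rw [hT, Finset.mem_coe, mem_coloredSums_univ_fin, Set.mem_ofPred_eq]
  have hstab : AddAction.stabilizer G T = H := AddSubgroup.ext fun h ↦ (hH h).symm
  have hbound := wt_stabilizer_add_card_le (Finset.coe_nonempty.1 (hsums.symm ▸ hne))
  rw [hsums, hstab, wt_eq_card_mul_sum, Finset.card_fin] at hbound
  rw [← hsums, Nat.card_coe_set_eq, Set.ncard_coe_finset]
  zify at hbound
  linarith
end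

section
/- Let G be a finite abelian group of order n with Davenport constant D(G). Let S be a sequence in G of length t ≥ n + D(G) − 1 such that the element 0 attains the maximal multiplicity of S. Then there exists a subsequence S_1 of S with |S_1| ≥ t + 1 − D(G) such that 0 ∈ Σ_k(S_1) for every 1 ≤ k ≤ |S_1|, where Σ_k(S_1) denotes the set of sums of k-term subsequences of S_1. -/
/-!
Let `A` be a maximal set of indices containing all zeros of `S` such that every length up to `|A|`
is the length of a zero-sum subsequence of `S|_A`. A zero-sum block disjoint from `A` and no longer
than `A` could be adjoined to `A`, so by maximality there is none. The rest of `S` therefore has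
fewer than `n` terms, because `n` terms of multiplicity at most `h` contain a zero-sum subsequence
of length at most `h`, and `A` contains as many zeros as the maximal multiplicity of `S`. Hence
`|A| ≥ D(G)`. As `D(G)` terms contain a zero-sum block, which is then no longer than `A`, the rest
of `S` has fewer than `D(G)` terms.

The bound on short zero-sum subsequences comes from Scherk's theorem: colour the `n` terms with `h`
colours so that equal terms get different colours, and add up the sets `{0} ∪ {terms of colour j}`.
If `0` had no nontrivial representation in this sumset, it would have at least `n + 1` elements.
-/

open Finset
open scoped Pointwise

section Scherk

variable {G : Type*} [AddCommGroup G]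

theorem exists_add_notMem_of_neg_notMem {A : Finset G} {b : G} (h0 : 0 ∈ A) (hb : -b ∉ A) :
    ∃ e ∈ A, e + b ∉ A := by
  classical
  by_contra! h
  have hsub : b +ᵥ A ⊆ A := by
    simpa [Finset.subset_iff, mem_vadd_finset, add_comm] using h
  have heq : b +ᵥ A = A := eq_of_subset_of_card_le hsub (card_vadd_finset b A).ge
  rw [← heq, mem_vadd_finset] at h0
  obtain ⟨a, ha, hab⟩ := h0
  exact hb (neg_eq_of_add_eq_zero_right hab ▸ ha)

/-- **Scherk's theorem**. -/
theorem card_add_card_le_card_add_add_one [DecidableEq G] {A B : Finset G} (hA : 0 ∈ A) (hB : 0 ∈ B)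
    (h : ∀ a ∈ A, ∀ b ∈ B, a + b = 0 → b = 0) : #A + #B ≤ #(A + B) + 1 := by
  induction B using Finset.strongInduction generalizing A with
  | H B ih =>
  by_cases hB0 : ∃ b ∈ B, b ≠ 0
  · obtain ⟨b, hb, hb0⟩ := hB0
    obtain ⟨e, he, heb⟩ : ∃ e ∈ A, e + b ∉ A :=
      exists_add_notMem_of_neg_notMem hA fun hneg ↦ hb0 (h _ hneg b hb (neg_add_cancel b))
    have hmem_neg {c : G} : c ∈ -e +ᵥ A ↔ e + c ∈ A := by
      rw [mem_neg_vadd_finset_iff, vadd_eq_add]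
    set A' := A ∪ (e +ᵥ B)
    set B' := B ∩ (-e +ᵥ A)
    have hcard : #A' + #B' = #A + #B := addDysonETransform.card e (A, B)
    have hadd : A' + B' ⊆ A + B := addDysonETransform.subset e (A, B)
    have hB' : B' ⊂ B :=
      (ssubset_iff_of_subset inter_subset_left).2
        ⟨b, hb, fun hb' ↦ heb (hmem_neg.1 (mem_inter.1 hb').2)⟩
    have hrep : ∀ a ∈ A', ∀ c ∈ B', a + c = 0 → c = 0 := by
      intro a ha c hc hac
      obtain ⟨hcB, hcA⟩ := mem_inter.1 hc
      rcases mem_union.1 ha with ha | ha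
      · exact h a ha c hcB hac
      · obtain ⟨d, hd, rfl⟩ := mem_vadd_finset.1 ha
        have hd0 : d = 0 :=
          h _ (hmem_neg.1 hcA) d hd (by rw [← hac, vadd_eq_add, add_right_comm])
        exact h e he c hcB (by simpa [hd0] using hac)
    calc
      #A + #B = #A' + #B' := hcard.symm
      _ ≤ #(A' + B') + 1 :=
        ih B' hB' (mem_union_left _ hA) (mem_inter.2 ⟨hB, hmem_neg.2 (by simpa using he)⟩) hrep
      _ ≤ #(A + B) + 1 := by gcongr
  · have : B = {0} := eq_singleton_iff_unique_mem.2 ⟨hB, by simpa using hB0⟩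
    simp [this]

theorem sum_card_add_one_le_card_sum_add_card [DecidableEq G] {κ : Type*} {s : Finset κ}
    {A : κ → Finset G}
    (hA : ∀ j ∈ s, 0 ∈ A j)
    (h : ∀ f : κ → G, (∀ j ∈ s, f j ∈ A j) → ∑ j ∈ s, f j = 0 → ∀ j ∈ s, f j = 0) :
    ∑ j ∈ s, #(A j) + 1 ≤ #(∑ j ∈ s, A j) + #s := by
  classical
  induction s using Finset.induction_on with
  | empty => simp
  | insert i s hi ih =>
    rw [forall_mem_insert] at hA
    have hextend : ∀ b ∈ A i, ∀ f : κ → G, (∀ j ∈ s, f j ∈ A j) → ∑ j ∈ s, f j + b = 0 →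
        b = 0 ∧ ∀ j ∈ s, f j = 0 := by
      intro b hb f hf hsum
      have hupdate : ∀ j ∈ s, Function.update f i b j = f j := fun j hj ↦
        Function.update_of_ne (ne_of_mem_of_not_mem hj hi) b f
      have hzero := h (Function.update f i b)
        (by simpa +contextual [hb, hupdate] using hf)
        (by rw [sum_insert hi, sum_congr rfl hupdate, Function.update_self, add_comm, hsum])
      simpa +contextual [hupdate] using hzero
    have hs := ih hA.2 fun f hf hsum ↦ (hextend 0 hA.1 f hf (by rw [hsum, add_zero])).2
    have hzero : 0 ∈ ∑ j ∈ s, A j := by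
      rw [← mem_coe, coe_sum, Set.mem_finsetSum]
      exact ⟨0, fun hj ↦ hA.2 _ hj, by simp⟩
    have hscherk : #(∑ j ∈ s, A j) + #(A i) ≤ #(∑ j ∈ s, A j + A i) + 1 := by
      refine card_add_card_le_card_add_add_one hzero hA.1 fun a ha b hb hab ↦ ?_
      rw [← mem_coe, coe_sum, Set.mem_finsetSum] at ha
      obtain ⟨f, hf, rfl⟩ := ha
      exact (hextend b hb f (fun _ hj ↦ hf hj) hab).1
    rw [sum_insert hi, sum_insert hi, card_insert_of_notMem hi, add_comm (A i)]
    lia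

end Scherk

section ShortZeroSum

variable {G ι : Type*}

theorem exists_subset_injOn_image_eq_sum_eq {κ M : Type*} [DecidableEq κ] [AddCommMonoid M]
    {x : ι → M} {r : ι → κ} {W : Finset ι} {s : Finset κ} {f : κ → M}
    (hf : ∀ j ∈ s, ∃ i ∈ W, r i = j ∧ x i = f j) :
    ∃ u ⊆ W, Set.InjOn r u ∧ u.image r = s ∧ ∑ i ∈ u, x i = ∑ j ∈ s, f j := by
  have hsurj : Set.SurjOn r {i | i ∈ W ∧ x i = f (r i)} s := by
    intro j hj
    obtain ⟨i, hi, rfl, hxi⟩ := hf j hj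
    exact ⟨i, ⟨hi, hxi⟩, rfl⟩
  obtain ⟨u, hu, hinj, rfl⟩ := exists_subset_injOn_image_eq_of_surjOn _ s hsurj
  refine ⟨u, fun i hi ↦ (hu hi).1, hinj, rfl, ?_⟩
  rw [sum_image hinj]
  exact sum_congr rfl fun i hi ↦ (hu hi).2

theorem exists_nonempty_subset_sum_eq_zero_of_injOn [AddCommGroup G] [Fintype G] {κ : Type*}
    {x : ι → G} {r : ι → κ} {W : Finset ι} (hinj : Set.InjOn (fun i ↦ (x i, r i)) W)
    (hW : Fintype.card G ≤ #W) :
    ∃ u ⊆ W, u.Nonempty ∧ Set.InjOn r u ∧ ∑ i ∈ u, x i = 0 := by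
  classical
  by_contra! hfree
  have hx0 : ∀ i ∈ W, x i ≠ 0 := fun i hi ↦ by
    simpa using hfree {i} (by simpa using hi) (by simp) (by simp)
  let A (j : κ) : Finset G := insert 0 ({i ∈ W | r i = j}.image x)
  have hA (j : κ) : #(A j) = #{i ∈ W | r i = j} + 1 := by
    rw [card_insert_of_notMem (by simpa using fun i hi _ ↦ hx0 i hi), card_image_of_injOn]
    intro i hi k hk hik
    obtain ⟨hiW, rfl⟩ := mem_filter.1 hi
    obtain ⟨hkW, hki⟩ := mem_filter.1 hk
    exact hinj hiW hkW (Prod.ext hik hki.symm)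
  have htrivial : ∀ f : κ → G, (∀ j ∈ W.image r, f j ∈ A j) → ∑ j ∈ W.image r, f j = 0 →
      ∀ j ∈ W.image r, f j = 0 := by
    intro f hf hsum j hj
    by_contra hfj
    have hterm : ∀ k ∈ {k ∈ W.image r | f k ≠ 0}, ∃ i ∈ W, r i = k ∧ x i = f k := by
      intro k hk
      obtain ⟨hkW, hfk⟩ := mem_filter.1 hk
      simpa [A, hfk, and_assoc] using hf k hkW
    obtain ⟨u, hu, hru, himage, hsum_u⟩ := exists_subset_injOn_image_eq_sum_eq hterm
    have hne : u.Nonempty := by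
      rw [← image_nonempty (f := r), himage]
      exact ⟨j, mem_filter.2 ⟨hj, hfj⟩⟩
    exact hfree u hu hne hru (by rw [hsum_u, sum_filter_ne_zero, hsum])
  have hsum_card : ∑ j ∈ W.image r, #(A j) = #W + #(W.image r) := by
    simp only [hA, sum_add_distrib, sum_const, smul_eq_mul, mul_one, ← card_eq_sum_card_image]
  have := sum_card_add_one_le_card_sum_add_card (fun _ _ ↦ mem_insert_self _ _) htrivial
  have := card_le_univ (∑ j ∈ W.image r, A j)
  lia

theorem exists_mapsTo_range_injOn_prodMk [DecidableEq G] {x : ι → G} {W : Finset ι} {h : ℕ}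
    (hh : ∀ g, #{i ∈ W | x i = g} ≤ h) :
    ∃ r : ι → ℕ, Set.MapsTo r W (range h) ∧ Set.InjOn (fun i ↦ (x i, r i)) W := by
  have hfiber (g : G) : ∃ r : ι → ℕ, Set.MapsTo r {i ∈ W | x i = g} (range h) ∧
      Set.InjOn r ({i ∈ W | x i = g} : Finset ι) := by
    have hle : (({i ∈ W | x i = g} : Finset ι) : Set ι).encard ≤ (range h : Set ℕ).encard := by
      simpa only [Set.encard_coe_eq_coe_finsetCard, card_range, Nat.cast_le] using hh g
    obtain ⟨r, hr, hinj⟩ := (finite_toSet _).exists_injOn_of_encard_le hle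
    exact ⟨r, fun i hi ↦ hr (by simpa using hi), hinj⟩
  choose r hr hinj using hfiber
  refine ⟨fun i ↦ r (x i) i, fun i hi ↦ hr (x i) ⟨hi, rfl⟩, fun i hi j hj hij ↦ ?_⟩
  obtain ⟨hx, hrij⟩ : x i = x j ∧ r (x i) i = r (x j) j := Prod.ext_iff.1 hij
  rw [← hx] at hrij
  exact hinj (x i) (by simpa using hi) (by simpa using ⟨hj, hx.symm⟩) hrij

theorem exists_nonempty_subset_card_le_sum_eq_zero [AddCommGroup G] [Fintype G] [DecidableEq G]
    {x : ι → G} {W : Finset ι} {h : ℕ} (hW : Fintype.card G ≤ #W)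
    (hh : ∀ g, #{i ∈ W | x i = g} ≤ h) :
    ∃ u ⊆ W, u.Nonempty ∧ #u ≤ h ∧ ∑ i ∈ u, x i = 0 := by
  obtain ⟨r, hr, hinj⟩ := exists_mapsTo_range_injOn_prodMk hh
  obtain ⟨u, hu, hne, hru, hsum⟩ := exists_nonempty_subset_sum_eq_zero_of_injOn hinj hW
  refine ⟨u, hu, hne, ?_, hsum⟩
  simpa using card_le_card_of_injOn r (fun i hi ↦ hr (hu hi)) hru

end ShortZeroSum

section AddCommMonoid

variable {M ι : Type*} [AddCommMonoid M] {x : ι → M}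

theorem exists_nonempty_subset_card_le_sum_eq_zero_of_forall_fin {d : ℕ}
    (hd : ∀ y : Fin d → M, ∃ s : Finset (Fin d), s.Nonempty ∧ ∑ i ∈ s, y i = 0)
    {W : Finset ι} (hW : d ≤ #W) :
    ∃ u ⊆ W, u.Nonempty ∧ #u ≤ d ∧ ∑ i ∈ u, x i = 0 := by
  obtain ⟨V, hVW, hV⟩ := exists_subset_card_eq hW
  let e : Fin d ↪ ι := (V.equivFinOfCardEq hV).symm.toEmbedding.trans (.subtype _)
  obtain ⟨s, hs, hsum⟩ := hd (x ∘ e)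
  refine ⟨s.map e, fun i hi ↦ ?_, by simpa using hs, by simpa using card_le_univ s,
    by simpa using hsum⟩
  obtain ⟨j, -, rfl⟩ := mem_map.1 hi
  exact hVW (Subtype.prop _)

/-- The terms of the sequence `x` with index in `A` contain a zero-sum subsequence of every length
up to `#A`. Sequences are indexed families and subsequences are finsets of indices, so repeated
terms count with multiplicity; length `0`, allowed here, is always attained by `∅`. -/
def HasZeroSumOfEveryLength (x : ι → M) (A : Finset ι) : Prop :=
  ∀ k ≤ #A, ∃ u ⊆ A, #u = k ∧ ∑ i ∈ u, x i = 0

namespace HasZeroSumOfEveryLength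

theorem of_forall_eq_zero {A : Finset ι} (hA : ∀ i ∈ A, x i = 0) :
    HasZeroSumOfEveryLength x A := by
  intro k hk
  obtain ⟨u, hu, rfl⟩ := exists_subset_card_eq hk
  exact ⟨u, hu, rfl, sum_eq_zero fun i hi ↦ hA i (hu hi)⟩

theorem union [DecidableEq ι] {A u : Finset ι} (hA : HasZeroSumOfEveryLength x A)
    (hd : Disjoint A u) (hcard : #u ≤ #A) (hu : ∑ i ∈ u, x i = 0) :
    HasZeroSumOfEveryLength x (A ∪ u) := by
  intro k hk
  rw [card_union_of_disjoint hd] at hk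
  obtain hkA | hkA := le_total k #A
  · obtain ⟨v, hv, hvk, hvsum⟩ := hA k hkA
    exact ⟨v, hv.trans subset_union_left, hvk, hvsum⟩
  · obtain ⟨v, hv, hvk, hvsum⟩ := hA (k - #u) (by lia)
    refine ⟨v ∪ u, union_subset_union_left hv, ?_, ?_⟩
    · rw [card_union_of_disjoint (hd.mono_left hv)]
      lia
    · rw [sum_union (hd.mono_left hv), hvsum, hu, add_zero]

theorem card_lt_card_of_maximal {A u : Finset ι} (hA : Maximal (HasZeroSumOfEveryLength x) A)
    (hd : Disjoint A u) (hne : u.Nonempty) (hu : ∑ i ∈ u, x i = 0) : #A < #u := by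
  classical
  by_contra! hcard
  have hle : A ∪ u ≤ A := hA.le_of_ge (hA.prop.union hd hcard hu) subset_union_left
  exact hne.ne_empty (hd.symm.eq_bot_of_le (subset_union_right.trans hle))

end HasZeroSumOfEveryLength

end AddCommMonoid

/-- Theorem YZ, first part: if `0` attains the maximal multiplicity of a sequence
`S` of length `t ≥ n + D(G) - 1`, then there is a subsequence `S₁` of length at
least `t + 1 - D(G)` with `0 ∈ Σ_k(S₁)` for all `1 ≤ k ≤ |S₁|`. -/
theorem yz_subsequence {G : Type*} [AddCommGroup G] [Fintype G] [DecidableEq G]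
    (n : ℕ) (hn : n = Fintype.card G)
    (D : ℕ)
    (hD : IsLeast {k : ℕ | ∀ y : Fin k → G, ∃ s : Finset (Fin k),
      s.Nonempty ∧ ∑ i ∈ s, y i = 0} D)
    (t : ℕ) (x : Fin t → G) (ht : n + D - 1 ≤ t)
    (h0 : ∀ g : G, (Finset.univ.filter (fun i => x i = g)).card ≤
      (Finset.univ.filter (fun i => x i = 0)).card) :
    ∃ s₁ : Finset (Fin t), s₁.card + D ≥ t + 1 ∧
      ∀ k : ℕ, 1 ≤ k → k ≤ s₁.card →
        ∃ u ⊆ s₁, u.card = k ∧ ∑ i ∈ u, x i = 0 := by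
  obtain ⟨A, hZA, hA⟩ := Finite.exists_le_maximal
    (HasZeroSumOfEveryLength.of_forall_eq_zero (x := x) (A := {i | x i = 0}) (by simp))
  have hblock : ∀ u ⊆ Aᶜ, u.Nonempty → ∑ i ∈ u, x i = 0 → #A < #u := fun u hu ↦
    HasZeroSumOfEveryLength.card_lt_card_of_maximal hA (disjoint_compl_right.mono_right hu)
  have hcompl : #A + #Aᶜ = t := by simp
  have hlt_n : #Aᶜ < n := by
    by_contra! hn_le
    have hmult (g : G) : #{i ∈ Aᶜ | x i = g} ≤ #A :=
      calc
        _ ≤ #{i | x i = g} := card_le_card (filter_subset_filter _ (subset_univ _))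
        _ ≤ #{i | x i = 0} := h0 g
        _ ≤ #A := card_le_card hZA
    obtain ⟨u, hu, hne, hcard, hsum⟩ :=
      exists_nonempty_subset_card_le_sum_eq_zero (hn ▸ hn_le) hmult
    exact (hblock u hu hne hsum).not_ge hcard
  have hlt_D : #Aᶜ < D := by
    by_contra! hD_le
    obtain ⟨u, hu, hne, hcard, hsum⟩ :=
      exists_nonempty_subset_card_le_sum_eq_zero_of_forall_fin (x := x) hD.1 hD_le
    exact (hblock u hu hne hsum).not_ge (by lia)
  exact ⟨A, by lia, fun k _ hk ↦ hA.prop k hk⟩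
end
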